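/- Let a ≥ 0 and let (q,r) be an a-admissible pair, with conjugate exponents q', r'. There exists a constant C(a,r) > 0 such that for every φ ∈ 𝒮⁺ and F ∈ 𝕊⁺, the function u(x,t) = ∫₀^∞ S_a(x,y,t) φ(y) y^a dy + ∫₀^t ∫₀^∞ S_a(x,y,t−s) F(y,s) y^a dy ds satisfies the Strichartz estimate ‖u‖_{L^q_t L^r_a} ≤ C(a,r) (‖φ‖_{L²_a} + ‖F‖_{L^{q'}_t L^{r'}_a}). -/

import Mathlib

open MeasureTheory Filter Set

noncomputable def besselJ (ν : ℂ) (z : ℝ) : ℂ :=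
  ∑' k : ℕ, ((-1 : ℂ) ^ k / (Complex.Gamma (k + 1) * Complex.Gamma (ν + k + 1))) *
    ((z : ℂ) / 2) ^ (2 * (k : ℂ) + ν)

noncomputable def DIter : ℕ → (ℝ → ℂ) → (ℝ → ℂ)
  | 0, φ => φ
  | k + 1, φ => fun x => (1 / (x : ℂ)) * deriv (DIter k φ) x

def SPlus (φ : ℝ → ℂ) : Prop :=
  ContDiffOn ℝ (⊤ : ℕ∞) φ (Ioi 0) ∧
  ∀ m k : ℕ, ∃ C : ℝ, ∀ x > (0:ℝ), ‖(x : ℂ) ^ m * DIter k φ x‖ ≤ C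

noncomputable def Skernel (a x y t : ℝ) : ℂ :=
  if 0 < t then
    Complex.exp (-(Complex.I) * (((a + 1) * Real.pi / 4 : ℝ) : ℂ)) *
      (((2 * |t|) ^ (-(a + 1) / 2) : ℝ) : ℂ) *
      (((x * y / (2 * |t|)) ^ ((1 - a) / 2) : ℝ) : ℂ) *
      besselJ (((a - 1) / 2 : ℝ) : ℂ) (x * y / (2 * |t|)) *
      Complex.exp (Complex.I * ((((x ^ 2 + y ^ 2) / (4 * |t|)) : ℝ) : ℂ))
  else
    Complex.exp ((Complex.I) * (((a + 1) * Real.pi / 4 : ℝ) : ℂ)) *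
      (((2 * |t|) ^ (-(a + 1) / 2) : ℝ) : ℂ) *
      (((x * y / (2 * |t|)) ^ ((1 - a) / 2) : ℝ) : ℂ) *
      besselJ (((a - 1) / 2 : ℝ) : ℂ) (x * y / (2 * |t|)) *
      Complex.exp (-(Complex.I) * ((((x ^ 2 + y ^ 2) / (4 * |t|)) : ℝ) : ℂ))

noncomputable def Sop (a t : ℝ) (φ : ℝ → ℂ) (x : ℝ) : ℂ :=
  ∫ y in Ioi (0:ℝ), Skernel a x y t * φ y * ((y ^ a : ℝ) : ℂ)

noncomputable def LrA (a r : ℝ) (f : ℝ → ℂ) : ℝ :=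
  (∫ x in Ioi (0:ℝ), ‖f x‖ ^ r * x ^ a) ^ (1 / r)

noncomputable def mixedNorm (a q r : ℝ) (u : ℝ → ℝ → ℂ) : ℝ :=
  (∫ t : ℝ, LrA a r (fun x => u x t) ^ q) ^ (1 / q)

def Admissible (a q r : ℝ) : Prop :=
  2 < r ∧ (1 < a → r < 2 * (a + 1) / (a - 1)) ∧ 2 / q = (a + 1) * (1 / 2 - 1 / r)

noncomputable def DxIter : ℕ → (ℝ → ℝ → ℂ) → (ℝ → ℝ → ℂ)
  | 0, F => F
  | k + 1, F => fun x t => (1 / (x : ℂ)) * deriv (fun x' => DxIter k F x' t) x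

noncomputable def DtIter (l : ℕ) (F : ℝ → ℝ → ℂ) : ℝ → ℝ → ℂ :=
  fun x t => iteratedDeriv l (fun t' => F x t') t

def SPlusT (F : ℝ → ℝ → ℂ) : Prop :=
  ContDiffOn ℝ (⊤ : ℕ∞) (fun p : ℝ × ℝ => F p.1 p.2) (Ioi 0 ×ˢ univ) ∧
  ∀ p : ℕ, ∃ C : ℝ, ∀ k l : ℕ, k + l ≤ p → ∀ x > (0:ℝ), ∀ t : ℝ,
    (1 + x ^ 2 + t ^ 2) ^ ((p : ℝ) / 2) * ‖DxIter k (DtIter l F) x t‖ ≤ C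

/-- The entire function `u ↦ ∑ uᵏ / (k! Γ(ν+k+1))`, so that `J_ν(z) = (z/2)^ν * besselE ν (-(z/2)²)`. -/
noncomputable def besselE (ν : ℝ) (u : ℂ) : ℂ :=
  ∑' k : ℕ, u ^ k / ((k.factorial : ℂ) * (Real.Gamma (ν + k + 1) : ℂ))

theorem gamma_shift_pos {ν : ℝ} (hν : -1 / 2 ≤ ν) (k : ℕ) : 0 < Real.Gamma (ν + k + 1) :=
  Real.Gamma_pos_of_pos (by have : (0 : ℝ) ≤ k := k.cast_nonneg; linarith)

theorem gamma_shift_succ {ν : ℝ} (hν : -1 / 2 ≤ ν) (k : ℕ) :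
    Real.Gamma (ν + (k + 1 : ℕ) + 1) = (ν + k + 1) * Real.Gamma (ν + k + 1) := by
  have : (0 : ℝ) ≤ k := k.cast_nonneg
  rw [← Real.Gamma_add_one (by linarith : ν + k + 1 ≠ 0)]
  push_cast; ring_nf

theorem factorial_half_gamma (k : ℕ) :
    (4 : ℝ) ^ k * k.factorial * Real.Gamma (k + 1 / 2) = (2 * k).factorial * √Real.pi := by
  induction k with
  | zero => simp [← Real.Gamma_one_half_eq]
  | succ k ih =>
    have h : Real.Gamma ((k + 1 : ℕ) + 1 / 2) = (k + 1 / 2) * Real.Gamma (k + 1 / 2) := by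
      rw [← Real.Gamma_add_one (by positivity)]; push_cast; ring_nf
    rw [h, Nat.factorial_succ, show 2 * (k + 1) = 2 * k + 1 + 1 by ring, Nat.factorial_succ,
      Nat.factorial_succ]
    push_cast
    linear_combination (2 * k + 1) * (2 * (k : ℝ) + 2) * ih

/-- Comparison of the coefficients of `besselE` with those of the exponential. -/
theorem inv_gamma_shift_le {ν : ℝ} (hν : -1 / 2 ≤ ν) (k : ℕ) :
    1 / Real.Gamma (ν + k + 1) ≤ 2 ^ k / Real.Gamma (ν + 1) := by
  induction k with
  | zero => simp
  | succ k ih =>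
    have hk : (0 : ℝ) ≤ k := k.cast_nonneg
    rw [gamma_shift_succ hν, one_div, mul_inv, pow_succ]
    have h1 : (ν + k + 1)⁻¹ ≤ 2 := inv_le_of_inv_le₀ (by norm_num) (by linarith)
    have h0 : 0 ≤ 1 / Real.Gamma (ν + k + 1) := by have := gamma_shift_pos hν k; positivity
    calc (ν + k + 1)⁻¹ * (Real.Gamma (ν + k + 1))⁻¹ ≤ 2 * (2 ^ k / Real.Gamma (ν + 1)) := by
          rw [one_div] at ih h0
          gcongr
      _ = _ := by ring

theorem besselE_summable_norm {ν : ℝ} (hν : -1 / 2 ≤ ν) (u : ℂ) :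
    Summable fun k : ℕ => ‖u ^ k / ((k.factorial : ℂ) * (Real.Gamma (ν + k + 1) : ℂ))‖ := by
  have hs : Summable fun k : ℕ => ((‖u‖ * 2) ^ k / k.factorial) * (1 / Real.Gamma (ν + 1)) :=
    (Real.summable_pow_div_factorial _).mul_right _
  refine Summable.of_nonneg_of_le (fun k => norm_nonneg _) (fun k => ?_) hs
  have h0 := gamma_shift_pos hν k
  rw [norm_div, norm_mul, norm_pow, Complex.norm_natCast, Complex.norm_real, Real.norm_eq_abs,
    abs_of_pos h0]
  have := inv_gamma_shift_le hν k
  calc ‖u‖ ^ k / (k.factorial * Real.Gamma (ν + k + 1))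
      = ‖u‖ ^ k / k.factorial * (1 / Real.Gamma (ν + k + 1)) := by field_simp
    _ ≤ ‖u‖ ^ k / k.factorial * (2 ^ k / Real.Gamma (ν + 1)) := by gcongr
    _ = _ := by rw [mul_pow]; ring

theorem besselE_hasSum {ν : ℝ} (hν : -1 / 2 ≤ ν) (u : ℂ) :
    HasSum (fun k : ℕ => u ^ k / ((k.factorial : ℂ) * (Real.Gamma (ν + k + 1) : ℂ)))
      (besselE ν u) :=
  (besselE_summable_norm hν u).of_norm.hasSum

theorem besselE_measurable {ν : ℝ} (hν : -1 / 2 ≤ ν) : Measurable (besselE ν) := by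
  refine measurable_of_tendsto_metrizable
    (f := fun (n : ℕ) (u : ℂ) => ∑ k ∈ Finset.range n,
      u ^ k / ((k.factorial : ℂ) * (Real.Gamma (ν + k + 1) : ℂ))) (fun n => by fun_prop) ?_
  exact tendsto_pi_nhds.2 fun u => (besselE_hasSum hν u).tendsto_sum_nat

theorem besselE_zero (ν : ℝ) : besselE ν 0 = (1 / Real.Gamma (ν + 1) : ℝ) := by
  rw [besselE, tsum_eq_single 0 (fun k hk => by simp [hk])]
  simp

theorem besselE_zero_ne {ν : ℝ} (hν : -1 / 2 ≤ ν) : besselE ν 0 ≠ 0 := by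
  rw [besselE_zero]
  have := gamma_shift_pos hν 0
  simp only [Nat.cast_zero, add_zero] at this
  exact_mod_cast (by positivity : (1 / Real.Gamma (ν + 1) : ℝ) ≠ 0)

theorem besselE_conj (ν : ℝ) (u : ℂ) :
    (starRingEnd ℂ) (besselE ν u) = besselE ν ((starRingEnd ℂ) u) := by
  rw [besselE, besselE, Complex.conj_tsum]
  simp

/-- On the nonnegative reals `besselE` is a nonnegative real number. -/
theorem besselE_ofReal {ν : ℝ} (hν : -1 / 2 ≤ ν) {x : ℝ} (hx : 0 ≤ x) :
    besselE ν x = (‖besselE ν x‖ : ℝ) := by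
  have h : besselE ν x =
      ((∑' k : ℕ, x ^ k / ((k.factorial : ℝ) * Real.Gamma (ν + k + 1)) : ℝ) : ℂ) := by
    rw [besselE, Complex.ofReal_tsum]; push_cast; rfl
  have h0 : 0 ≤ ∑' k : ℕ, x ^ k / ((k.factorial : ℝ) * Real.Gamma (ν + k + 1)) :=
    tsum_nonneg fun k => by have := gamma_shift_pos hν k; positivity
  rw [h, Complex.norm_real, Real.norm_eq_abs, abs_of_nonneg h0]

/-- The double factorial-type sum of Chu and Vandermonde. -/
theorem chu_vandermonde (m : ℕ) : ∀ (n : ℕ) {ν : ℝ}, -1 / 2 ≤ ν →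
    ∑ k ∈ Finset.range (n + 1), (m.choose k : ℝ) /
        ((n - k).factorial * Real.Gamma (ν + k + 1)) =
      Real.Gamma (ν + (m + n : ℕ) + 1) /
        (n.factorial * Real.Gamma (ν + m + 1) * Real.Gamma (ν + n + 1)) := by
  induction m with
  | zero =>
    intro n ν hν
    rw [Finset.sum_eq_single 0 (fun k _ hk => by
      obtain ⟨j, rfl⟩ := Nat.exists_eq_succ_of_ne_zero hk; simp) (by simp)]
    have h0 := gamma_shift_pos hν n
    have h1 := gamma_shift_pos hν 0
    simp only [Nat.cast_zero, add_zero] at h1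
    simp
    field_simp
  | succ m ih =>
    intro n ν hν
    have hm := gamma_shift_pos hν m
    cases n with
    | zero =>
      have h1 := gamma_shift_pos hν (m + 1)
      have h2 := gamma_shift_pos hν 0
      simp only [Nat.cast_zero, add_zero] at h2
      push_cast at h1
      simp
      field_simp
    | succ n =>
      rw [Finset.sum_range_succ']
      have e : ∀ k ∈ Finset.range (n + 1), ((m + 1).choose (k + 1) : ℝ) /
          ((n + 1 - (k + 1)).factorial * Real.Gamma (ν + (k + 1 : ℕ) + 1)) =
          (m.choose (k + 1) : ℝ) /
          ((n + 1 - (k + 1)).factorial * Real.Gamma (ν + (k + 1 : ℕ) + 1)) +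
          (m.choose k : ℝ) / ((n - k).factorial * Real.Gamma ((ν + 1) + k + 1)) := by
        intro k _
        rw [Nat.choose_succ_succ, Nat.add_sub_add_right]
        push_cast
        rw [show ν + ((k : ℝ) + 1) + 1 = ν + 1 + k + 1 by ring]
        ring
      rw [Finset.sum_congr rfl e, Finset.sum_add_distrib, ih n (by linarith : -1 / 2 ≤ ν + 1)]
      have i2 := ih (n + 1) hν
      rw [Finset.sum_range_succ'] at i2
      simp only [Nat.choose_zero_right] at i2 ⊢
      rw [add_right_comm, i2]
      have hn := gamma_shift_pos hν (n + 1)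
      have hmn := gamma_shift_pos hν (m + (n + 1))
      have g1 := gamma_shift_succ hν m
      have g2 := gamma_shift_succ hν (m + (n + 1))
      have a1 : ν + 1 + (m + n : ℕ) + 1 = ν + (m + (n + 1) : ℕ) + 1 := by push_cast; ring
      have a2 : ν + 1 + (m : ℝ) + 1 = ν + (m + 1 : ℕ) + 1 := by push_cast; ring
      have a3 : ν + 1 + (n : ℝ) + 1 = ν + (n + 1 : ℕ) + 1 := by push_cast; ring
      have a4 : m + 1 + (n + 1) = m + (n + 1) + 1 := by ring
      rw [a1, a2, a3, a4, g1, g2, Nat.factorial_succ]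
      have hm' : (0 : ℝ) ≤ m := m.cast_nonneg
      have : ν + m + 1 ≠ 0 := by linarith
      have hm0 := hm.ne'
      have hn0 := hn.ne'
      have : ((n + 1 : ℕ) : ℝ) ≠ 0 := by positivity
      have : (n.factorial : ℝ) ≠ 0 := by positivity
      push_cast at *
      field_simp
      ring

/-- Chu–Vandermonde, written as the coefficient extraction in a triple product series. -/
theorem chu_vandermonde_triple {ν : ℝ} (hν : -1 / 2 ≤ ν) (x y : ℂ) (m n : ℕ) :
    x ^ m * y ^ n * ((Real.Gamma (ν + (m + n : ℕ) + 1) /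
        (m.factorial * Real.Gamma (ν + m + 1) *
          (n.factorial * Real.Gamma (ν + n + 1))) : ℝ) : ℂ) =
    ∑ k ∈ Finset.range (n + 1), if k ≤ m ∧ k ≤ n then
      x ^ (m - k) / ((m - k).factorial : ℂ) * (y ^ (n - k) / ((n - k).factorial : ℂ)) *
      ((x * y) ^ k / ((k.factorial : ℂ) * (Real.Gamma (ν + k + 1) : ℂ))) else 0 := by
  have cv := chu_vandermonde m n hν
  have hm := gamma_shift_pos hν m
  have hn := gamma_shift_pos hν n
  have e : Real.Gamma (ν + (m + n : ℕ) + 1) /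
        (m.factorial * Real.Gamma (ν + m + 1) * (n.factorial * Real.Gamma (ν + n + 1))) =
      (1 / m.factorial) * ∑ k ∈ Finset.range (n + 1), (m.choose k : ℝ) /
        ((n - k).factorial * Real.Gamma (ν + k + 1)) := by
    rw [cv]; field_simp
  rw [e, Finset.mul_sum, Complex.ofReal_sum, Finset.mul_sum]
  refine Finset.sum_congr rfl fun k hk => ?_
  simp only [Finset.mem_range] at hk
  by_cases hkm : k ≤ m
  · have hkn : k ≤ n := by omega
    simp only [hkm, hkn, and_self, if_true]
    obtain ⟨i, rfl⟩ := Nat.exists_eq_add_of_le hkm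
    obtain ⟨j, rfl⟩ := Nat.exists_eq_add_of_le hkn
    have hc : ((k + i).choose k : ℝ) = (k + i).factorial / (k.factorial * i.factorial) := by
      rw [Nat.cast_add_choose]
    rw [hc]
    simp only [Nat.add_sub_cancel_left]
    have hk := gamma_shift_pos hν k
    have hk0 : (Real.Gamma (ν + k + 1) : ℂ) ≠ 0 := by exact_mod_cast hk.ne'
    have f1 : ((k + i).factorial : ℂ) ≠ 0 := by exact_mod_cast (k + i).factorial_ne_zero
    have f2 : (k.factorial : ℂ) ≠ 0 := by exact_mod_cast k.factorial_ne_zero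
    have f3 : (i.factorial : ℂ) ≠ 0 := by exact_mod_cast i.factorial_ne_zero
    have f4 : (j.factorial : ℂ) ≠ 0 := by exact_mod_cast j.factorial_ne_zero
    push_cast
    field_simp
    ring
  · simp [hkm, Nat.choose_eq_zero_of_lt (not_le.1 hkm)]

theorem hasSum_mul_of_summable_norm {ι κ : Type*} (f : ι → ℂ) (g : κ → ℂ) {a b : ℂ}
    (hf : HasSum f a) (hg : HasSum g b) (hfn : Summable fun i => ‖f i‖)
    (hgn : Summable fun i => ‖g i‖) : HasSum (fun p : ι × κ => f p.1 * g p.2) (a * b) :=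
  hf.mul hg (hfn.mul_norm hgn).of_norm

/-- The generating function of the Chu–Vandermonde numbers. -/
theorem besselE_mul_exp_hasSum {ν : ℝ} (hν : -1 / 2 ≤ ν) (x y : ℂ) :
    HasSum (fun mn : ℕ × ℕ => x ^ mn.1 * y ^ mn.2 * ((Real.Gamma (ν + (mn.1 + mn.2 : ℕ) + 1) /
        (mn.1.factorial * Real.Gamma (ν + mn.1 + 1) *
          (mn.2.factorial * Real.Gamma (ν + mn.2 + 1))) : ℝ) : ℂ))
      (Complex.exp (x + y) * besselE ν (x * y)) := by
  have hx : HasSum (fun i : ℕ => x ^ i / (i.factorial : ℂ)) (Complex.exp x) := by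
    rw [Complex.exp_eq_exp_ℂ]; exact NormedSpace.expSeries_div_hasSum_exp x
  have hy : HasSum (fun i : ℕ => y ^ i / (i.factorial : ℂ)) (Complex.exp y) := by
    rw [Complex.exp_eq_exp_ℂ]; exact NormedSpace.expSeries_div_hasSum_exp y
  have hxn : Summable fun i : ℕ => ‖x ^ i / (i.factorial : ℂ)‖ :=
    NormedSpace.norm_expSeries_div_summable x
  have hyn : Summable fun i : ℕ => ‖y ^ i / (i.factorial : ℂ)‖ :=
    NormedSpace.norm_expSeries_div_summable y
  have hen := besselE_summable_norm hν (x * y)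
  have hxyn : Summable fun p : ℕ × ℕ =>
      ‖x ^ p.1 / (p.1.factorial : ℂ) * (y ^ p.2 / (p.2.factorial : ℂ))‖ :=
    Summable.mul_norm (f := fun i : ℕ => x ^ i / (i.factorial : ℂ))
      (g := fun i : ℕ => y ^ i / (i.factorial : ℂ)) hxn hyn
  have hxy : HasSum (fun p : ℕ × ℕ =>
      x ^ p.1 / (p.1.factorial : ℂ) * (y ^ p.2 / (p.2.factorial : ℂ)))
      (Complex.exp x * Complex.exp y) :=
    hasSum_mul_of_summable_norm (fun i : ℕ => x ^ i / (i.factorial : ℂ))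
      (fun i : ℕ => y ^ i / (i.factorial : ℂ)) hx hy hxn hyn
  have h3 : HasSum (fun t : (ℕ × ℕ) × ℕ =>
      x ^ t.1.1 / (t.1.1.factorial : ℂ) * (y ^ t.1.2 / (t.1.2.factorial : ℂ)) *
      ((x * y) ^ t.2 / ((t.2.factorial : ℂ) * (Real.Gamma (ν + t.2 + 1) : ℂ))))
      (Complex.exp x * Complex.exp y * besselE ν (x * y)) :=
    hasSum_mul_of_summable_norm
      (fun p : ℕ × ℕ => x ^ p.1 / (p.1.factorial : ℂ) * (y ^ p.2 / (p.2.factorial : ℂ)))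
      (fun k : ℕ => (x * y) ^ k / ((k.factorial : ℂ) * (Real.Gamma (ν + k + 1) : ℂ)))
      hxy (besselE_hasSum hν (x * y)) hxyn hen
  rw [← Complex.exp_add] at h3
  let ι : (ℕ × ℕ) × ℕ → (ℕ × ℕ) × ℕ := fun t => ((t.1.1 + t.2, t.1.2 + t.2), t.2)
  have hι : Function.Injective ι := by
    rintro ⟨⟨i, j⟩, k⟩ ⟨⟨i', j'⟩, k'⟩ h
    simp only [ι, Prod.mk.injEq] at h ⊢
    omega
  let h : (ℕ × ℕ) × ℕ → ℂ := fun t => if t.2 ≤ t.1.1 ∧ t.2 ≤ t.1.2 then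
    x ^ (t.1.1 - t.2) / ((t.1.1 - t.2).factorial : ℂ) *
      (y ^ (t.1.2 - t.2) / ((t.1.2 - t.2).factorial : ℂ)) *
      ((x * y) ^ t.2 / ((t.2.factorial : ℂ) * (Real.Gamma (ν + t.2 + 1) : ℂ))) else 0
  have h4 : HasSum h (Complex.exp (x + y) * besselE ν (x * y)) := by
    rw [← hι.hasSum_iff]
    · refine h3.congr_fun ?_
      rintro ⟨⟨i, j⟩, k⟩
      simp [h, ι]
    · rintro ⟨⟨m, n⟩, k⟩ hk
      simp only [h, ite_eq_right_iff]
      rintro ⟨h1, h2⟩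
      refine absurd ⟨((m - k, n - k), k), ?_⟩ hk
      simp only [ι, Prod.mk.injEq, and_true]
      omega
  refine h4.prod_fiberwise fun ⟨m, n⟩ => ?_
  change HasSum (fun k => h ((m, n), k)) (x ^ m * y ^ n * ((Real.Gamma (ν + (m + n : ℕ) + 1) /
        (m.factorial * Real.Gamma (ν + m + 1) *
          (n.factorial * Real.Gamma (ν + n + 1))) : ℝ) : ℂ))
  rw [chu_vandermonde_triple hν x y m n]
  exact hasSum_sum_of_ne_finset_zero (f := fun k => h ((m, n), k)) (s := Finset.range (n + 1))
    (fun k hk => by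
      simp only [Finset.mem_range, not_lt] at hk
      simp only [h, ite_eq_right_iff]
      rintro ⟨_, h2⟩
      omega)

theorem norm_cosh_le (z : ℂ) : ‖Complex.cosh z‖ ≤ Real.exp |z.re| := by
  rw [Complex.cosh, norm_div, Complex.norm_ofNat, div_le_iff₀ (by norm_num)]
  refine (norm_add_le _ _).trans ?_
  rw [Complex.norm_exp, Complex.norm_exp, Complex.neg_re]
  have h1 := Real.exp_le_exp.2 (le_abs_self z.re)
  have h2 := Real.exp_le_exp.2 (neg_le_abs z.re)
  linarith

theorem four_pow_mul_factorial_gamma_half (k : ℕ) :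
    (1 : ℂ) / ((k.factorial : ℂ) * (Real.Gamma (k + 1 / 2) : ℂ)) =
      4 ^ k / (((2 * k).factorial : ℂ) * (√Real.pi : ℂ)) := by
  have h := factorial_half_gamma k
  have hg : (0 : ℝ) < Real.Gamma (k + 1 / 2) := Real.Gamma_pos_of_pos (by positivity)
  have hp : 0 < √Real.pi := Real.sqrt_pos.2 Real.pi_pos
  rw [div_eq_div_iff]
  · have h' := congrArg (fun x : ℝ => (x : ℂ)) h
    push_cast at h'
    linear_combination -h'
  · exact_mod_cast (by positivity : (k.factorial : ℝ) * Real.Gamma (k + 1 / 2) ≠ 0)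
  · exact_mod_cast (by positivity : ((2 * k).factorial : ℝ) * √Real.pi ≠ 0)

theorem betaReal_integral {α β : ℝ} (hα : 0 < α) (hβ : 0 < β) :
    IntegrableOn (fun v : ℝ => v ^ (α - 1) * (1 - v) ^ (β - 1)) (Ioc 0 1) ∧
    ∫ v in Ioc (0 : ℝ) 1, v ^ (α - 1) * (1 - v) ^ (β - 1) =
      Real.Gamma α * Real.Gamma β / Real.Gamma (α + β) := by
  have hc := Complex.betaIntegral_convergent (u := α) (v := β) (by simpa) (by simpa)
  rw [intervalIntegrable_iff_integrableOn_Ioc_of_le zero_le_one] at hc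
  have e : ∀ v ∈ Ioc (0 : ℝ) 1, (v : ℂ) ^ ((α : ℂ) - 1) * (1 - (v : ℂ)) ^ ((β : ℂ) - 1) =
      ((v ^ (α - 1) * (1 - v) ^ (β - 1) : ℝ) : ℂ) := by
    intro v hv
    rw [Complex.ofReal_mul, Complex.ofReal_cpow hv.1.le, Complex.ofReal_cpow (by linarith [hv.2])]
    push_cast; rfl
  have hi : IntegrableOn (fun v : ℝ => ((v ^ (α - 1) * (1 - v) ^ (β - 1) : ℝ) : ℂ)) (Ioc 0 1) :=
    hc.congr_fun e measurableSet_Ioc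
  refine ⟨?_, ?_⟩
  · have := hi.re
    simpa only [RCLike.re_to_complex, Complex.ofReal_re] using! this
  · have h := Complex.betaIntegral_eq_Gamma_mul_div α β (by simpa) (by simpa)
    rw [Complex.betaIntegral, intervalIntegral.integral_of_le zero_le_one,
      setIntegral_congr_fun measurableSet_Ioc e, integral_complex_ofReal, ← Complex.ofReal_add,
      Complex.Gamma_ofReal, Complex.Gamma_ofReal, Complex.Gamma_ofReal] at h
    exact_mod_cast h

/-- Poisson's integral representation. -/
theorem besselE_poisson {ν : ℝ} (hν : -1 / 2 < ν) (w : ℂ) :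
    ∫ v in Ioc (0 : ℝ) 1, Complex.cosh (2 * w * (√v : ℝ)) *
        ((v ^ ((1 : ℝ) / 2 - 1) * (1 - v) ^ (ν + 1 / 2 - 1) : ℝ) : ℂ) =
      (√Real.pi * Real.Gamma (ν + 1 / 2) : ℝ) * besselE ν (w ^ 2) := by
  set ω : ℝ → ℝ := fun v => v ^ ((1 : ℝ) / 2 - 1) * (1 - v) ^ (ν + 1 / 2 - 1) with hω
  have hβ : 0 < ν + 1 / 2 := by linarith
  have hmom : ∀ k : ℕ, IntegrableOn (fun v : ℝ => v ^ k * ω v) (Ioc 0 1) ∧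
      ∫ v in Ioc (0 : ℝ) 1, v ^ k * ω v =
        Real.Gamma (k + 1 / 2) * Real.Gamma (ν + 1 / 2) / Real.Gamma (ν + k + 1) := by
    intro k
    have := betaReal_integral (α := k + 1 / 2) (by positivity) hβ
    have e : ∀ v ∈ Ioc (0 : ℝ) 1, v ^ ((k : ℝ) + 1 / 2 - 1) * (1 - v) ^ (ν + 1 / 2 - 1) =
        v ^ k * ω v := by
      intro v hv
      rw [hω]
      simp only
      rw [← mul_assoc, ← Real.rpow_natCast, ← Real.rpow_add hv.1]
      ring_nf
    rw [setIntegral_congr_fun measurableSet_Ioc e] at this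
    refine ⟨this.1.congr_fun e measurableSet_Ioc, this.2.trans ?_⟩
    ring_nf
  let F : ℕ → ℝ → ℂ := fun k v =>
    ((2 * w) ^ (2 * k) / ((2 * k).factorial : ℂ)) * ((v ^ k * ω v : ℝ) : ℂ)
  have hFi : ∀ k, Integrable (F k) (volume.restrict (Ioc 0 1)) := fun k =>
    ((hmom k).1.ofReal (𝕜 := ℂ)).const_mul _
  have hω0 : ∀ v ∈ Ioc (0 : ℝ) 1, 0 ≤ ω v := fun v hv =>
    mul_nonneg (Real.rpow_nonneg hv.1.le _) (Real.rpow_nonneg (by linarith [hv.2]) _)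
  have hcs : ∀ z : ℂ, Summable fun k : ℕ => ‖z ^ (2 * k) / ((2 * k).factorial : ℂ)‖ := by
    intro z
    have := (Real.hasSum_cosh ‖z‖).summable
    simpa using this
  have hsum : Summable fun k => ∫ v in Ioc (0 : ℝ) 1, ‖F k v‖ := by
    refine Summable.of_nonneg_of_le (fun k => integral_nonneg fun v => norm_nonneg _) (fun k => ?_)
      ((hcs (2 * w)).mul_right (∫ v in Ioc (0 : ℝ) 1, v ^ 0 * ω v))
    rw [← integral_const_mul]
    refine setIntegral_mono_on (hFi k).norm ((hmom 0).1.const_mul _) measurableSet_Ioc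
      fun v hv => ?_
    simp only [F]
    rw [norm_mul, Complex.norm_real, Real.norm_eq_abs, abs_of_nonneg
      (mul_nonneg (pow_nonneg hv.1.le _) (hω0 v hv))]
    refine mul_le_mul_of_nonneg_left (mul_le_mul_of_nonneg_right ?_ (hω0 v hv)) (norm_nonneg _)
    simpa only [pow_zero] using pow_le_one₀ hv.1.le hv.2
  have key := hasSum_integral_of_summable_integral_norm hFi hsum
  have e1 : ∀ v ∈ Ioc (0 : ℝ) 1, ∑' k, F k v = Complex.cosh (2 * w * (√v : ℝ)) * (ω v : ℂ) := by
    intro v hv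
    have h := (Complex.hasSum_cosh (2 * w * (√v : ℝ))).mul_right (ω v : ℂ)
    rw [← h.tsum_eq]
    refine tsum_congr fun k => ?_
    simp only [F]
    have : ((√v : ℝ) : ℂ) ^ (2 * k) = (v : ℂ) ^ k := by
      rw [pow_mul, ← Complex.ofReal_pow, Real.sq_sqrt hv.1.le]
    rw [mul_pow _ ((√v : ℝ) : ℂ), this]
    push_cast
    ring
  rw [setIntegral_congr_fun measurableSet_Ioc e1] at key
  refine key.unique ?_
  have h := (besselE_hasSum hν.le (w ^ 2)).mul_left
    ((√Real.pi * Real.Gamma (ν + 1 / 2) : ℝ) : ℂ)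
  refine h.congr_fun fun k => ?_
  simp only [F]
  rw [integral_const_mul, integral_complex_ofReal, (hmom k).2]
  have h4 := four_pow_mul_factorial_gamma_half k
  have hg : ((Real.Gamma (k + 1 / 2) : ℝ) : ℂ) ≠ 0 := by
    exact_mod_cast (Real.Gamma_pos_of_pos (by positivity : (0 : ℝ) < k + 1 / 2)).ne'
  have hg2 : ((Real.Gamma (ν + k + 1) : ℝ) : ℂ) ≠ 0 := by
    exact_mod_cast (gamma_shift_pos hν.le k).ne'
  have hp : ((√Real.pi : ℝ) : ℂ) ≠ 0 := by exact_mod_cast (Real.sqrt_pos.2 Real.pi_pos).ne'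
  have f1 : (k.factorial : ℂ) ≠ 0 := by exact_mod_cast k.factorial_ne_zero
  have f2 : ((2 * k).factorial : ℂ) ≠ 0 := by exact_mod_cast (2 * k).factorial_ne_zero
  rw [div_eq_div_iff (mul_ne_zero f1 hg) (mul_ne_zero f2 hp)] at h4
  rw [mul_pow, pow_mul (2 : ℂ), pow_mul w]
  simp only [Complex.ofReal_mul, Complex.ofReal_div]
  generalize Real.Gamma (k + 1 / 2) = G at *
  generalize Real.Gamma (ν + 1 / 2) = H at *
  norm_num
  field_simp
  linear_combination (-(w ^ 2) ^ k * (H : ℂ)) * h4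

theorem besselE_norm_le {ν : ℝ} (hν : -1 / 2 ≤ ν) (w : ℂ) :
    ‖besselE ν (w ^ 2)‖ ≤ 1 / Real.Gamma (ν + 1) * Real.exp (2 * |w.re|) := by
  have hp : 0 < √Real.pi := Real.sqrt_pos.2 Real.pi_pos
  rcases hν.eq_or_lt with rfl | hν
  · have h : besselE (-1 / 2) (w ^ 2) = Complex.cosh (2 * w) / (√Real.pi : ℝ) := by
      refine (besselE_hasSum hν (w ^ 2)).unique ?_
      refine ((Complex.hasSum_cosh (2 * w)).div_const ((√Real.pi : ℝ) : ℂ)).congr_fun fun k => ?_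
      have h4 := four_pow_mul_factorial_gamma_half k
      rw [show (-1 / 2 + k + 1 : ℝ) = k + 1 / 2 by ring, div_eq_mul_one_div, h4, mul_pow,
        pow_mul (2 : ℂ), pow_mul w]
      norm_num
      ring
    rw [h, norm_div, Complex.norm_real, Real.norm_eq_abs, abs_of_pos hp,
      show (-1 / 2 + 1 : ℝ) = 1 / 2 by norm_num, Real.Gamma_one_half_eq, div_eq_mul_one_div,
      mul_comm]
    gcongr
    refine (norm_cosh_le _).trans (le_of_eq ?_)
    simp [abs_mul]
  · have hg : 0 < Real.Gamma (ν + 1 / 2) := Real.Gamma_pos_of_pos (by linarith)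
    have hg1 : 0 < Real.Gamma (ν + 1) := Real.Gamma_pos_of_pos (by linarith)
    have h := besselE_poisson hν w
    obtain ⟨hi, h_beta⟩ := betaReal_integral (α := 1 / 2) (β := ν + 1 / 2) (by norm_num)
      (by linarith)
    have hn := norm_integral_le_of_norm_le (μ := volume.restrict (Ioc (0 : ℝ) 1))
      (f := fun v : ℝ => Complex.cosh (2 * w * (√v : ℝ)) *
        ((v ^ ((1 : ℝ) / 2 - 1) * (1 - v) ^ (ν + 1 / 2 - 1) : ℝ) : ℂ))
      (hi.const_mul (Real.exp (2 * |w.re|))) (by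
        refine (ae_restrict_iff' measurableSet_Ioc).2 (ae_of_all _ fun v hv => ?_)
        rw [norm_mul, Complex.norm_real, Real.norm_eq_abs, abs_of_nonneg (mul_nonneg
          (Real.rpow_nonneg hv.1.le _) (Real.rpow_nonneg (by linarith [hv.2]) _))]
        refine mul_le_mul_of_nonneg_right ((norm_cosh_le _).trans (Real.exp_le_exp.2 ?_))
          (mul_nonneg (Real.rpow_nonneg hv.1.le _) (Real.rpow_nonneg (by linarith [hv.2]) _))
        rw [Complex.re_mul_ofReal, abs_mul, abs_of_nonneg (Real.sqrt_nonneg v)]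
        have : √v ≤ 1 := Real.sqrt_le_one.2 hv.2
        have h2 : |(2 * w).re| = 2 * |w.re| := by simp [abs_mul]
        rw [h2]
        exact mul_le_of_le_one_right (by positivity) this)
    rw [h, integral_const_mul, h_beta, norm_mul, Complex.norm_real, Real.norm_eq_abs,
      abs_of_pos (by positivity), Real.Gamma_one_half_eq] at hn
    rw [show (1 / 2 + (ν + 1 / 2) : ℝ) = ν + 1 by ring] at hn
    have hpos : 0 < √Real.pi * Real.Gamma (ν + 1 / 2) := by positivity
    refine le_of_mul_le_mul_left (hn.trans (le_of_eq ?_)) hpos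
    field_simp

/-- The measure `x ^ a dx` on the half-line. -/
noncomputable def powMeasure (a : ℝ) : Measure ℝ :=
  (volume.restrict (Ioi (0 : ℝ))).withDensity fun x => ENNReal.ofReal (x ^ a)

theorem powMeasure_density_measurable (a : ℝ) :
    Measurable fun x : ℝ => ENNReal.ofReal (x ^ a) := by fun_prop

instance (a : ℝ) : SFinite (powMeasure a) := by unfold powMeasure; infer_instance

theorem integral_powMeasure {E : Type*} [NormedAddCommGroup E] [NormedSpace ℝ E]
    (a : ℝ) (f : ℝ → E) :
    ∫ x, f x ∂powMeasure a = ∫ x in Ioi (0 : ℝ), x ^ a • f x := by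
  rw [powMeasure, integral_withDensity_eq_integral_toReal_smul (powMeasure_density_measurable a)
    (ae_of_all _ fun _ => ENNReal.ofReal_lt_top)]
  refine setIntegral_congr_fun measurableSet_Ioi fun x hx => ?_
  rw [ENNReal.toReal_ofReal (Real.rpow_nonneg (le_of_lt hx) _)]

theorem integrable_powMeasure_iff {E : Type*} [NormedAddCommGroup E] [NormedSpace ℝ E]
    (a : ℝ) (f : ℝ → E) :
    Integrable f (powMeasure a) ↔ IntegrableOn (fun x => x ^ a • f x) (Ioi (0 : ℝ)) := by
  rw [powMeasure, integrable_withDensity_iff_integrable_smul' (powMeasure_density_measurable a)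
    (ae_of_all _ fun _ => ENNReal.ofReal_lt_top)]
  refine integrableOn_congr_fun (fun x hx => ?_) measurableSet_Ioi
  rw [ENNReal.toReal_ofReal (Real.rpow_nonneg (le_of_lt hx) _)]

theorem ae_powMeasure_pos (a : ℝ) : ∀ᵐ x ∂powMeasure a, 0 < x :=
  (withDensity_absolutelyContinuous _ _) (ae_restrict_mem measurableSet_Ioi)

theorem integrable_exp_neg_sq_powMeasure {a : ℝ} (ha : -1 < a) {b : ℝ} (hb : 0 < b) :
    Integrable (fun x : ℝ => Real.exp (-b * x ^ 2)) (powMeasure a) := by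
  rw [integrable_powMeasure_iff]
  simpa only [smul_eq_mul] using integrableOn_rpow_mul_exp_neg_mul_sq hb ha

theorem integral_exp_neg_sq_powMeasure {a : ℝ} (ha : -1 < a) {b : ℝ} (hb : 0 < b) :
    ∫ x, Real.exp (-b * x ^ 2) ∂powMeasure a =
      1 / 2 * Real.Gamma ((a + 1) / 2) * b ^ (-((a + 1) / 2)) := by
  rw [integral_powMeasure]
  have := integral_rpow_mul_exp_neg_mul_rpow (p := 2) (q := a) (by norm_num) ha hb
  simp only [smul_eq_mul]
  simp only [Real.rpow_two] at this
  rw [this, neg_div]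
  ring

/-- Complex Gaussian moments, by analytic continuation from the real axis. -/
theorem integral_cexp_neg_sq_powMeasure {a : ℝ} (ha : -1 < a) {p : ℂ} (hp : 0 < p.re) :
    ∫ x : ℝ, Complex.exp (-p * (x : ℂ) ^ 2) ∂powMeasure a =
      1 / 2 * (Real.Gamma ((a + 1) / 2) : ℂ) * p ^ (-((a + 1) / 2 : ℝ) : ℂ) := by
  let X : ℝ → ℝ := fun x => x ^ 2
  have hsub : {z : ℂ | z.re < 0} ⊆
      {z | z.re ∈ interior (ProbabilityTheory.integrableExpSet X (powMeasure a))} := by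
    intro z hz
    refine mem_interior.2 ⟨Iio 0, fun t ht => ?_, isOpen_Iio, hz⟩
    have := integrable_exp_neg_sq_powMeasure ha (b := -t) (by simpa using ht)
    simpa [ProbabilityTheory.integrableExpSet, X] using this
  have h1 : AnalyticOnNhd ℂ (ProbabilityTheory.complexMGF X (powMeasure a)) {z : ℂ | z.re < 0} :=
    fun z hz => ProbabilityTheory.analyticOnNhd_complexMGF z (hsub hz)
  have hopen : IsOpen {z : ℂ | z.re < 0} := isOpen_Iio.preimage Complex.continuous_re
  let g : ℂ → ℂ := fun z =>
    1 / 2 * (Real.Gamma ((a + 1) / 2) : ℂ) * (-z) ^ (-((a + 1) / 2 : ℝ) : ℂ)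
  have h2 : AnalyticOnNhd ℂ g {z : ℂ | z.re < 0} := by
    refine DifferentiableOn.analyticOnNhd (fun z hz => ?_) hopen
    refine DifferentiableAt.differentiableWithinAt ?_
    refine DifferentiableAt.const_mul ?_ _
    exact (differentiableAt_id.neg).cpow_const (Or.inl (by simpa using hz))
  have hpre : IsPreconnected {z : ℂ | z.re < 0} :=
    (convex_halfSpace_re_lt 0).isPreconnected
  have hreal : ∀ b : ℝ, 0 < b →
      ProbabilityTheory.complexMGF X (powMeasure a) (-b : ℂ) = g (-b : ℂ) := by
    intro b hb
    have h := integral_exp_neg_sq_powMeasure ha hb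
    have e : ∀ x : ℝ, Complex.exp (-(b : ℂ) * ((X x : ℝ) : ℂ)) =
        ((Real.exp (-b * x ^ 2) : ℝ) : ℂ) := by
      intro x; push_cast; simp [X]
    rw [ProbabilityTheory.complexMGF]
    simp only [e]
    rw [integral_complex_ofReal, h]
    simp only [g, neg_neg]
    push_cast
    rw [Complex.ofReal_cpow hb.le]
    push_cast
    ring
  have hz0 : (-1 : ℂ) ∈ {z : ℂ | z.re < 0} := by simp
  have hfreq : ∃ᶠ z in nhdsWithin (-1 : ℂ) {(-1 : ℂ)}ᶜ,
      ProbabilityTheory.complexMGF X (powMeasure a) z = g z := by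
    have ht : Tendsto (fun n : ℕ => (-(1 + 1 / ((n : ℝ) + 1) : ℝ) : ℂ)) atTop
        (nhdsWithin (-1 : ℂ) {(-1 : ℂ)}ᶜ) := by
      refine tendsto_nhdsWithin_iff.2 ⟨?_, Eventually.of_forall fun n => ?_⟩
      · have h0 : Tendsto (fun n : ℕ => 1 + 1 / ((n : ℝ) + 1)) atTop (nhds (1 + 0)) :=
          tendsto_const_nhds.add tendsto_one_div_add_atTop_nhds_zero_nat
        have := ((Complex.continuous_ofReal.tendsto _).comp h0).neg
        simpa using! this
      · have hn : (1 : ℝ) + 1 / ((n : ℝ) + 1) ≠ 1 := by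
          have : (0 : ℝ) < 1 / ((n : ℝ) + 1) := by positivity
          linarith
        simp only [mem_compl_iff, mem_singleton_iff, neg_inj]
        exact_mod_cast hn
    exact ht.frequently (Frequently.of_forall fun n => hreal _ (by positivity))
  have := h1.eqOn_of_preconnected_of_frequently_eq h2 hpre hz0 hfreq
    (show -p ∈ {z : ℂ | z.re < 0} by simpa using hp)
  simpa [ProbabilityTheory.complexMGF, X, g] using this

theorem integrable_cexp_neg_sq_powMeasure {a : ℝ} (ha : -1 < a) {p : ℂ} (hp : 0 < p.re) :
    Integrable (fun x : ℝ => Complex.exp (-p * (x : ℂ) ^ 2)) (powMeasure a) := by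
  refine (integrable_exp_neg_sq_powMeasure ha hp).mono' (by fun_prop) (ae_of_all _ fun x => ?_)
  rw [Complex.norm_exp, ← Complex.ofReal_pow, Complex.re_mul_ofReal]
  simp

theorem powMeasure_mul_pow {E : Type*} [NormedAddCommGroup E] [NormedSpace ℝ E]
    (a : ℝ) (n : ℕ) (f : ℝ → E) :
    (Integrable (fun x => (x ^ 2) ^ n • f x) (powMeasure a) ↔
      Integrable f (powMeasure (a + 2 * n))) ∧
    ∫ x, (x ^ 2) ^ n • f x ∂powMeasure a = ∫ x, f x ∂powMeasure (a + 2 * n) := by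
  have e : EqOn (fun x : ℝ => x ^ a • (x ^ 2) ^ n • f x) (fun x => x ^ (a + 2 * n) • f x)
      (Ioi 0) := by
    intro x hx
    simp only
    rw [smul_smul, ← pow_mul, Real.rpow_add hx, ← Real.rpow_natCast x (2 * n)]
    push_cast; rfl
  rw [integrable_powMeasure_iff, integrable_powMeasure_iff, integral_powMeasure,
    integral_powMeasure]
  exact ⟨integrableOn_congr_fun e measurableSet_Ioi, setIntegral_congr_fun measurableSet_Ioi e⟩

theorem integral_pow_cexp_powMeasure {ν : ℝ} (hν : -1 / 2 ≤ ν) {p : ℂ} (hp : 0 < p.re) (n : ℕ) :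
    Integrable (fun z : ℝ => (z ^ 2) ^ n • Complex.exp (-p * (z : ℂ) ^ 2))
      (powMeasure (2 * ν + 1)) ∧
    ∫ z : ℝ, (z ^ 2) ^ n • Complex.exp (-p * (z : ℂ) ^ 2) ∂powMeasure (2 * ν + 1) =
      1 / 2 * (Real.Gamma (ν + n + 1) : ℂ) * (p ^ (-(ν + 1 : ℝ) : ℂ) / p ^ n) := by
  have hn : (0 : ℝ) ≤ n := n.cast_nonneg
  obtain ⟨h1, h2⟩ := powMeasure_mul_pow (2 * ν + 1) n fun z : ℝ => Complex.exp (-p * (z : ℂ) ^ 2)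
  have ha : -1 < 2 * ν + 1 + 2 * n := by linarith
  have hp0 : p ≠ 0 := by rintro rfl; simp at hp
  refine ⟨h1.2 (integrable_cexp_neg_sq_powMeasure ha hp), ?_⟩
  rw [h2, integral_cexp_neg_sq_powMeasure ha hp]
  have e1 : (2 * ν + 1 + 2 * n + 1) / 2 = ν + n + 1 := by ring
  have e2 : (-(ν + n + 1 : ℝ) : ℂ) = (-(ν + 1 : ℝ) : ℂ) - n := by push_cast; ring
  rw [e1, e2, Complex.cpow_sub _ _ hp0, Complex.cpow_natCast]

theorem integral_pow_exp_powMeasure {ν : ℝ} (hν : -1 / 2 ≤ ν) {p : ℝ} (hp : 0 < p) (n : ℕ) :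
    ∫ z : ℝ, (z ^ 2) ^ n * Real.exp (-p * z ^ 2) ∂powMeasure (2 * ν + 1) =
      1 / 2 * Real.Gamma (ν + n + 1) * (p ^ (-(ν + 1)) / p ^ n) := by
  have hn : (0 : ℝ) ≤ n := n.cast_nonneg
  obtain ⟨-, h2⟩ := powMeasure_mul_pow (2 * ν + 1) n fun z : ℝ => Real.exp (-p * z ^ 2)
  simp only [smul_eq_mul] at h2
  have ha : -1 < 2 * ν + 1 + 2 * n := by linarith
  rw [h2, integral_exp_neg_sq_powMeasure ha hp]
  have e1 : (2 * ν + 1 + 2 * n + 1) / 2 = ν + n + 1 := by ring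
  have e2 : -(ν + n + 1) = -(ν + 1) - n := by ring
  rw [e1, e2, Real.rpow_sub hp, Real.rpow_natCast]

/-- Weber's second exponential integral. -/
theorem weber_integral {ν : ℝ} (hν : -1 / 2 ≤ ν) (A B : ℂ) {p : ℂ} (hp : 0 < p.re) :
    ∫ z : ℝ, besselE ν (A * (z : ℂ) ^ 2) * besselE ν (B * (z : ℂ) ^ 2) *
      Complex.exp (-p * (z : ℂ) ^ 2) ∂powMeasure (2 * ν + 1) =
    1 / 2 * p ^ (-(ν + 1 : ℝ) : ℂ) * (Complex.exp (A / p + B / p) *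
      besselE ν (A / p * (B / p))) := by
  have hp0 : p ≠ 0 := by rintro rfl; simp at hp
  let c : ℕ × ℕ → ℂ := fun mn => A ^ mn.1 / ((mn.1.factorial : ℂ) * (Real.Gamma (ν + mn.1 + 1) : ℂ))
    * (B ^ mn.2 / ((mn.2.factorial : ℂ) * (Real.Gamma (ν + mn.2 + 1) : ℂ)))
  let F : ℕ × ℕ → ℝ → ℂ := fun mn z =>
    c mn * ((z ^ 2) ^ (mn.1 + mn.2) • Complex.exp (-p * (z : ℂ) ^ 2))
  have hpt : ∀ z : ℝ, HasSum (fun mn => F mn z) (besselE ν (A * (z : ℂ) ^ 2) *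
      besselE ν (B * (z : ℂ) ^ 2) * Complex.exp (-p * (z : ℂ) ^ 2)) := by
    intro z
    have := (hasSum_mul_of_summable_norm
      (fun k : ℕ => (A * (z : ℂ) ^ 2) ^ k / ((k.factorial : ℂ) * (Real.Gamma (ν + k + 1) : ℂ)))
      (fun k : ℕ => (B * (z : ℂ) ^ 2) ^ k / ((k.factorial : ℂ) * (Real.Gamma (ν + k + 1) : ℂ)))
      (besselE_hasSum hν _) (besselE_hasSum hν _) (besselE_summable_norm hν _)
      (besselE_summable_norm hν _)).mul_right (Complex.exp (-p * (z : ℂ) ^ 2))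
    refine (congrArg (fun f => HasSum f _) (funext fun mn => ?_)).mpr this
    simp only [F, c, Complex.real_smul]
    push_cast
    rw [mul_pow, mul_pow, pow_add]
    ring
  have hF : ∀ mn, Integrable (F mn) (powMeasure (2 * ν + 1)) := fun mn =>
    (integral_pow_cexp_powMeasure hν hp _).1.const_mul _
  have hnorm : ∀ mn, ∫ z, ‖F mn z‖ ∂powMeasure (2 * ν + 1) =
      1 / 2 * p.re ^ (-(ν + 1)) * ‖((‖A‖ / p.re : ℝ) : ℂ) ^ mn.1 * ((‖B‖ / p.re : ℝ) : ℂ) ^ mn.2 *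
      ((Real.Gamma (ν + (mn.1 + mn.2 : ℕ) + 1) /
        (mn.1.factorial * Real.Gamma (ν + mn.1 + 1) *
          (mn.2.factorial * Real.Gamma (ν + mn.2 + 1))) : ℝ) : ℂ)‖ := by
    intro mn
    have e : ∀ z, ‖F mn z‖ = ‖c mn‖ * ((z ^ 2) ^ (mn.1 + mn.2) * Real.exp (-p.re * z ^ 2)) := by
      intro z
      simp only [F]
      rw [norm_mul, norm_smul, Complex.norm_exp, ← Complex.ofReal_pow, Complex.re_mul_ofReal]
      simp
    simp only [e]
    rw [integral_const_mul, integral_pow_exp_powMeasure hν hp]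
    have g1 := gamma_shift_pos hν mn.1
    have g2 := gamma_shift_pos hν mn.2
    have g3 := gamma_shift_pos hν (mn.1 + mn.2)
    simp only [c, norm_mul, norm_div, norm_pow, Complex.norm_real, Real.norm_eq_abs,
      abs_of_pos g1, abs_of_pos g2, abs_of_pos g3, Nat.abs_cast, abs_norm,
      abs_of_pos hp, Complex.norm_natCast]
    rw [pow_add, div_pow, div_pow]
    field_simp
  have hsum : Summable fun mn => ∫ z, ‖F mn z‖ ∂powMeasure (2 * ν + 1) := by
    simp only [hnorm]
    exact ((besselE_mul_exp_hasSum hν _ _).summable.norm).mul_left _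
  have hmain := hasSum_integral_of_summable_integral_norm hF hsum
  have hval : ∀ mn, ∫ z, F mn z ∂powMeasure (2 * ν + 1) =
      1 / 2 * p ^ (-(ν + 1 : ℝ) : ℂ) * ((A / p) ^ mn.1 * (B / p) ^ mn.2 *
      ((Real.Gamma (ν + (mn.1 + mn.2 : ℕ) + 1) /
        (mn.1.factorial * Real.Gamma (ν + mn.1 + 1) *
          (mn.2.factorial * Real.Gamma (ν + mn.2 + 1))) : ℝ) : ℂ)) := by
    intro mn
    simp only [F]
    rw [integral_const_mul, (integral_pow_cexp_powMeasure hν hp _).2]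
    simp only [c]
    rw [pow_add, div_pow, div_pow]
    push_cast
    field_simp
  have h := ((besselE_mul_exp_hasSum hν (A / p) (B / p)).mul_left
    (1 / 2 * p ^ (-(ν + 1 : ℝ) : ℂ)))
  simp only [hval] at hmain
  rw [h.unique hmain]
  exact integral_congr_ae (ae_of_all _ fun z => (hpt z).tsum_eq.symm)

theorem Integrable.bdd_mul_kernel {X Y : Type*} [MeasurableSpace X] [MeasurableSpace Y]
    {ρ : Measure Y} {h : X → Y → ℂ} (hm : Measurable fun z : X × Y => h z.1 z.2) {M : ℝ}
    (hb : ∀ x y, ‖h x y‖ ≤ M) {f : Y → ℂ} (hf : Integrable f ρ) (x : X) :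
    Integrable (fun y => h x y * f y) ρ :=
  hf.bdd_mul (hm.comp measurable_prodMk_left).aestronglyMeasurable (ae_of_all _ (hb x))

theorem norm_integral_kernel_le {X Y : Type*} [MeasurableSpace Y]
    {ρ : Measure Y} {h : X → Y → ℂ} {M : ℝ} (hb : ∀ x y, ‖h x y‖ ≤ M) {f : Y → ℂ}
    (hf : Integrable f ρ) (x : X) : ‖∫ y, h x y * f y ∂ρ‖ ≤ M * ∫ y, ‖f y‖ ∂ρ := by
  rw [← integral_const_mul]
  refine norm_integral_le_of_norm_le (hf.norm.const_mul M) (ae_of_all _ fun y => ?_)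
  rw [norm_mul]
  exact mul_le_mul_of_nonneg_right (hb x y) (norm_nonneg _)

theorem integral_weight_mul_mul {X Y Z : Type*} [MeasurableSpace X] [MeasurableSpace Y]
    [MeasurableSpace Z] {μ : Measure X} {ρ : Measure Y} {σ : Measure Z} [SFinite μ] [SFinite ρ]
    [SFinite σ] {w : X → ℂ} (hw : Integrable w μ)
    {h₁ : X → Y → ℂ} (hm₁ : Measurable fun z : X × Y => h₁ z.1 z.2) {M₁ : ℝ}
    (hb₁ : ∀ x y, ‖h₁ x y‖ ≤ M₁)
    {h₂ : X → Z → ℂ} (hm₂ : Measurable fun z : X × Z => h₂ z.1 z.2) {M₂ : ℝ}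
    (hb₂ : ∀ x z, ‖h₂ x z‖ ≤ M₂)
    {f : Y → ℂ} (hf : Integrable f ρ) {g : Z → ℂ} (hg : Integrable g σ) :
    ∫ x, w x * ((∫ y, h₁ x y * f y ∂ρ) * ∫ z, h₂ x z * g z ∂σ) ∂μ =
      ∫ yz : Y × Z, f yz.1 * g yz.2 * ∫ x, w x * (h₁ x yz.1 * h₂ x yz.2) ∂μ ∂(ρ.prod σ) := by
  have h1 : ∀ x, w x * ((∫ y, h₁ x y * f y ∂ρ) * ∫ z, h₂ x z * g z ∂σ) =
      ∫ yz : Y × Z, w x * ((h₁ x yz.1 * f yz.1) * (h₂ x yz.2 * g yz.2)) ∂(ρ.prod σ) := by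
    intro x
    rw [integral_const_mul, integral_prod_mul (fun y => h₁ x y * f y) (fun z => h₂ x z * g z)]
  simp only [h1]
  rw [integral_integral_swap]
  · refine integral_congr_ae (ae_of_all _ fun yz => ?_)
    simp only
    rw [← integral_const_mul]
    refine integral_congr_ae (ae_of_all _ fun x => ?_)
    simp only
    ring
  · have hfg : Integrable (fun yz : Y × Z => f yz.1 * g yz.2) (ρ.prod σ) := hf.mul_prod hg
    have hall := hw.mul_prod hfg
    have hk : Measurable fun z : X × (Y × Z) => h₁ z.1 z.2.1 * h₂ z.1 z.2.2 :=
      (hm₁.comp (measurable_fst.prodMk measurable_snd.fst)).mul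
        (hm₂.comp (measurable_fst.prodMk measurable_snd.snd))
    have := hall.bdd_mul (c := M₁ * M₂) hk.aestronglyMeasurable (ae_of_all _ fun z => by
      rw [norm_mul]
      exact mul_le_mul (hb₁ _ _) (hb₂ _ _) (norm_nonneg _) ((norm_nonneg _).trans (hb₁ z.1 z.2.1)))
    refine this.congr (ae_of_all _ fun z => ?_)
    simp only [Function.uncurry]
    ring

theorem lintegral_mul_mul_kernel_le {Y : Type*} [MeasurableSpace Y] {ρ : Measure Y} [SFinite ρ]
    {k : Y → Y → ENNReal} (hk : Measurable fun z : Y × Y => k z.1 z.2)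
    (hsymm : ∀ y z, k y z = k z y) {C : ENNReal} (hC : ∀ y, ∫⁻ z, k y z ∂ρ ≤ C)
    {f : Y → ENNReal} (hf : AEMeasurable f ρ) :
    ∫⁻ yz : Y × Y, f yz.1 * f yz.2 * k yz.1 yz.2 ∂(ρ.prod ρ) ≤ C * ∫⁻ y, f y ^ (2 : ℝ) ∂ρ := by
  have hF : AEMeasurable (fun yz : Y × Y => f yz.1 ^ (2 : ℝ) * k yz.1 yz.2) (ρ.prod ρ) :=
    (hf.comp_fst.pow_const _).mul hk.aemeasurable
  have hI : ∫⁻ yz : Y × Y, f yz.1 ^ (2 : ℝ) * k yz.1 yz.2 ∂(ρ.prod ρ) ≤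
      C * ∫⁻ y, f y ^ (2 : ℝ) ∂ρ := by
    rw [lintegral_prod _ hF, ← lintegral_const_mul'' _ (hf.pow_const _)]
    refine lintegral_mono fun y => ?_
    simp only
    have hky : Measurable fun z => k y z := hk.comp measurable_prodMk_left
    rw [lintegral_const_mul _ hky, mul_comm]
    exact mul_le_mul_left (hC y) _
  have hJ : ∫⁻ yz : Y × Y, f yz.2 ^ (2 : ℝ) * k yz.1 yz.2 ∂(ρ.prod ρ) =
      ∫⁻ yz : Y × Y, f yz.1 ^ (2 : ℝ) * k yz.1 yz.2 ∂(ρ.prod ρ) := by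
    rw [← lintegral_prod_swap]
    simp only [Prod.fst_swap, Prod.snd_swap]
    exact lintegral_congr fun z => by rw [hsymm]
  have hpt : ∀ yz : Y × Y, f yz.1 * f yz.2 * k yz.1 yz.2 ≤
      2⁻¹ * (f yz.1 ^ (2 : ℝ) * k yz.1 yz.2 + f yz.2 ^ (2 : ℝ) * k yz.1 yz.2) := by
    intro yz
    have := ENNReal.young_inequality (f yz.1) (f yz.2) Real.HolderConjugate.two_two
    rw [← add_mul, ← mul_assoc]
    refine mul_le_mul_left (this.trans (le_of_eq ?_)) _
    rw [ENNReal.ofReal_ofNat, ENNReal.div_eq_inv_mul, ENNReal.div_eq_inv_mul, mul_add]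
  calc _ ≤ _ := lintegral_mono hpt
    _ = 2⁻¹ * (2 * ∫⁻ yz : Y × Y, f yz.1 ^ (2 : ℝ) * k yz.1 yz.2 ∂(ρ.prod ρ)) := by
      rw [lintegral_const_mul' _ _ (by simp), lintegral_add_left' hF, hJ, two_mul]
    _ = ∫⁻ yz : Y × Y, f yz.1 ^ (2 : ℝ) * k yz.1 yz.2 ∂(ρ.prod ρ) := by
      rw [← mul_assoc, ENNReal.inv_mul_cancel (by simp) (by simp), one_mul]
    _ ≤ _ := hI

/-- The (unnormalised) Hankel kernel. -/
noncomputable def hankelKernel (ν l x y : ℝ) : ℂ := besselE ν ((-(l * x * y) ^ 2 : ℝ) : ℂ)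

theorem hankelKernel_norm_le {ν : ℝ} (hν : -1 / 2 ≤ ν) (l x y : ℝ) :
    ‖hankelKernel ν l x y‖ ≤ 1 / Real.Gamma (ν + 1) := by
  have := besselE_norm_le hν (Complex.I * ((l * x * y : ℝ) : ℂ))
  have e : (Complex.I * ((l * x * y : ℝ) : ℂ)) ^ 2 = ((-(l * x * y) ^ 2 : ℝ) : ℂ) := by
    rw [mul_pow, Complex.I_sq]; push_cast; ring
  rw [e] at this
  simpa [hankelKernel] using! this

theorem hankelKernel_measurable {ν : ℝ} (hν : -1 / 2 ≤ ν) {X : Type*} [MeasurableSpace X]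
    {l x y : X → ℝ} (hl : Measurable l) (hx : Measurable x) (hy : Measurable y) :
    Measurable fun z => hankelKernel ν (l z) (x z) (y z) :=
  (besselE_measurable hν).comp (Complex.measurable_ofReal.comp (((hl.mul hx).mul hy).pow_const 2).neg)

theorem hankelKernel_conj (ν l x y : ℝ) :
    (starRingEnd ℂ) (hankelKernel ν l x y) = hankelKernel ν l x y := by
  rw [hankelKernel, besselE_conj, Complex.conj_ofReal]

theorem integrable_gaussian_powMeasure {ν : ℝ} (hν : -1 / 2 ≤ ν) {ε : ℝ} (hε : 0 < ε) :
    Integrable (fun x : ℝ => Complex.exp (-(ε : ℂ) * (x : ℂ) ^ 2)) (powMeasure (2 * ν + 1)) :=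
  integrable_cexp_neg_sq_powMeasure (by linarith) (by simpa using hε)

theorem integral_hankelKernel_mul {ν : ℝ} (hν : -1 / 2 ≤ ν) {ε : ℝ} (hε : 0 < ε) (l y z : ℝ) :
    ∫ x : ℝ, Complex.exp (-(ε : ℂ) * (x : ℂ) ^ 2) * (hankelKernel ν l x y * hankelKernel ν l x z)
      ∂powMeasure (2 * ν + 1) =
    ((1 / 2 * ε ^ (-(ν + 1)) * (Real.exp (-(l * y) ^ 2 / ε - (l * z) ^ 2 / ε) *
      ‖besselE ν (((l * y) ^ 2 / ε * ((l * z) ^ 2 / ε) : ℝ) : ℂ)‖) : ℝ) : ℂ) := by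
  have := weber_integral hν (-((l * y : ℝ) : ℂ) ^ 2) (-((l * z : ℝ) : ℂ) ^ 2) (p := (ε : ℂ))
    (by simpa using hε)
  convert this using 1
  · refine integral_congr_ae (ae_of_all _ fun x => ?_)
    simp only [hankelKernel]
    rw [mul_comm (Complex.exp _)]
    congr 3 <;> · push_cast; ring
  · have hE := besselE_ofReal hν (x := (l * y) ^ 2 / ε * ((l * z) ^ 2 / ε)) (by positivity)
    rw [Complex.ofReal_mul, Complex.ofReal_mul, Complex.ofReal_mul (Real.exp _), ← hE,
      Complex.ofReal_cpow hε.le]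
    push_cast
    rw [sub_eq_add_neg, ← neg_div]
    congr 3
    ring

theorem lintegral_hankel_schur {ν : ℝ} (hν : -1 / 2 ≤ ν) {ε l : ℝ} (hε : 0 < ε) (hl : 0 < l)
    (y : ℝ) :
    ∫⁻ z, ‖∫ x : ℝ, Complex.exp (-(ε : ℂ) * (x : ℂ) ^ 2) *
      (hankelKernel ν l x y * hankelKernel ν l x z) ∂powMeasure (2 * ν + 1)‖ₑ
      ∂powMeasure (2 * ν + 1) = ENNReal.ofReal (1 / 4 * (l ^ 2) ^ (-(ν + 1))) := by
  have hl2 : 0 < l ^ 2 := by positivity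
  have hpow := Real.rpow_pos_of_pos hε (-(ν + 1))
  have hpow' := Real.rpow_pos_of_pos hl2 (-(ν + 1))
  have hbase : ∫ z : ℝ, (‖besselE ν ((((l * y) ^ 2 / ε * (l ^ 2 / ε) : ℝ) : ℂ) * (z : ℂ) ^ 2)‖ *
      Real.exp (-(l ^ 2 / ε) * z ^ 2)) ∂powMeasure (2 * ν + 1) =
      1 / 2 * (l ^ 2 / ε) ^ (-(ν + 1)) * Real.exp ((l * y) ^ 2 / ε) := by
    have hw := weber_integral hν (((l * y) ^ 2 / ε * (l ^ 2 / ε) : ℝ) : ℂ) 0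
      (p := ((l ^ 2 / ε : ℝ) : ℂ)) (by rw [Complex.ofReal_re]; positivity)
    have e0 := besselE_zero_ne hν
    simp only [zero_mul, zero_div, mul_zero, add_zero] at hw
    have e1 : ∀ z : ℝ, besselE ν ((((l * y) ^ 2 / ε * (l ^ 2 / ε) : ℝ) : ℂ) * (z : ℂ) ^ 2) *
        besselE ν 0 * Complex.exp (-((l ^ 2 / ε : ℝ) : ℂ) * (z : ℂ) ^ 2) =
        ((‖besselE ν ((((l * y) ^ 2 / ε * (l ^ 2 / ε) : ℝ) : ℂ) * (z : ℂ) ^ 2)‖ *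
      Real.exp (-(l ^ 2 / ε) * z ^ 2) : ℝ) : ℂ) * besselE ν 0 := by
      intro z
      have : (((l * y) ^ 2 / ε * (l ^ 2 / ε) : ℝ) : ℂ) * (z : ℂ) ^ 2 =
        (((l * y) ^ 2 / ε * (l ^ 2 / ε) * z ^ 2 : ℝ) : ℂ) := by push_cast; ring
      have hE := besselE_ofReal hν (x := (l * y) ^ 2 / ε * (l ^ 2 / ε) * z ^ 2) (by positivity)
      rw [this, Complex.ofReal_mul ‖_‖, ← hE]
      push_cast
      ring
    simp only [e1] at hw
    rw [integral_mul_const, integral_complex_ofReal, ← mul_assoc] at hw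
    have hw := mul_right_cancel₀ e0 hw
    rw [← Complex.ofReal_inj, hw]
    push_cast
    rw [Complex.ofReal_cpow (by positivity)]
    push_cast
    congr 2
    field_simp
  have h_integrable : Integrable (fun z : ℝ =>
      (‖besselE ν ((((l * y) ^ 2 / ε * (l ^ 2 / ε) : ℝ) : ℂ) * (z : ℂ) ^ 2)‖ *
      Real.exp (-(l ^ 2 / ε) * z ^ 2))) (powMeasure (2 * ν + 1)) := by
    refine Integrable.of_integral_ne_zero ?_
    rw [hbase]
    positivity
  have hpt : ∀ z : ℝ, ‖∫ x : ℝ, Complex.exp (-(ε : ℂ) * (x : ℂ) ^ 2) *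
      (hankelKernel ν l x y * hankelKernel ν l x z) ∂powMeasure (2 * ν + 1)‖ₑ =
      ENNReal.ofReal (1 / 2 * ε ^ (-(ν + 1)) * Real.exp (-(l * y) ^ 2 / ε) *
      (‖besselE ν ((((l * y) ^ 2 / ε * (l ^ 2 / ε) : ℝ) : ℂ) * (z : ℂ) ^ 2)‖ *
      Real.exp (-(l ^ 2 / ε) * z ^ 2))) := by
    intro z
    rw [integral_hankelKernel_mul hν hε, ← ofReal_norm, Complex.norm_real, Real.norm_of_nonneg
      (by positivity), sub_eq_add_neg, Real.exp_add]
    have e1 : (((l * y) ^ 2 / ε * ((l * z) ^ 2 / ε) : ℝ) : ℂ) =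
      (((l * y) ^ 2 / ε * (l ^ 2 / ε) : ℝ) : ℂ) * (z : ℂ) ^ 2 := by push_cast; ring
    have e2 : -((l * z) ^ 2 / ε) = -(l ^ 2 / ε) * z ^ 2 := by ring
    rw [e1, e2]
    congr 1
    ring
  simp only [hpt]
  rw [← ofReal_integral_eq_lintegral_ofReal (h_integrable.const_mul _) (ae_of_all _ fun z => by
    simp only [Pi.zero_apply]; positivity), integral_const_mul, hbase]
  congr 1
  rw [Real.div_rpow hl2.le hε.le, neg_div, Real.exp_neg]
  field_simp
  norm_num

theorem lintegral_le_of_forall_gaussian {μ : Measure ℝ} {g : ℝ → ENNReal} (hg : AEMeasurable g μ)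
    {C : ENNReal}
    (h : ∀ ε : ℝ, 0 < ε → ∫⁻ x, ENNReal.ofReal (Real.exp (-ε * x ^ 2)) * g x ∂μ ≤ C) :
    ∫⁻ x, g x ∂μ ≤ C := by
  have ht0 : Tendsto (fun n : ℕ => 1 / ((n : ℝ) + 1)) atTop (nhds 0) :=
    tendsto_one_div_add_atTop_nhds_zero_nat
  have := lintegral_tendsto_of_tendsto_of_monotone (μ := μ) (F := g)
    (f := fun (n : ℕ) x => ENNReal.ofReal (Real.exp (-(1 / ((n : ℝ) + 1)) * x ^ 2)) * g x)
    (fun n => AEMeasurable.mul (by fun_prop) hg) (ae_of_all _ fun x => ?_)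
    (ae_of_all _ fun x => ?_)
  · exact le_of_tendsto this (Eventually.of_forall fun n => h _ (by positivity))
  · intro m n hmn
    refine mul_le_mul_left (ENNReal.ofReal_le_ofReal (Real.exp_le_exp.2 ?_)) _
    have : 1 / ((n : ℝ) + 1) ≤ 1 / ((m : ℝ) + 1) := by gcongr
    nlinarith [sq_nonneg x]
  · have h1 : Tendsto (fun n : ℕ => Real.exp (-(1 / ((n : ℝ) + 1)) * x ^ 2)) atTop (nhds 1) := by
      have := (Real.continuous_exp.tendsto _).comp ((ht0.neg).mul_const (x ^ 2))
      simpa using! this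
    have h2 := ENNReal.Tendsto.mul_const (ENNReal.tendsto_ofReal h1) (b := g x) (Or.inl (by simp))
    simpa using! h2

theorem lintegral_gaussian_mul_sq_le {Y : Type*} [MeasurableSpace Y] {ρ : Measure Y}
    [SFinite ρ] {ν : ℝ} (hν : -1 / 2 ≤ ν) {ε : ℝ} (hε : 0 < ε)
    {h : ℝ → Y → ℂ} (hm : Measurable fun z : ℝ × Y => h z.1 z.2) {M : ℝ}
    (hb : ∀ x y, ‖h x y‖ ≤ M) {f : Y → ℂ} (hf : Integrable f ρ) :
    ∫⁻ x, ENNReal.ofReal (Real.exp (-ε * x ^ 2)) * ‖∫ y, h x y * f y ∂ρ‖ₑ ^ (2 : ℝ)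
      ∂powMeasure (2 * ν + 1) ≤
    ∫⁻ yz : Y × Y, ‖f yz.1‖ₑ * ‖f yz.2‖ₑ * ‖∫ x : ℝ, Complex.exp (-(ε : ℂ) * (x : ℂ) ^ 2) *
      (h x yz.1 * (starRingEnd ℂ) (h x yz.2)) ∂powMeasure (2 * ν + 1)‖ₑ ∂(ρ.prod ρ) := by
  have hw := integrable_gaussian_powMeasure hν hε
  have hm' : Measurable fun z : ℝ × Y => (starRingEnd ℂ) (h z.1 z.2) :=
    Complex.continuous_conj.measurable.comp hm
  have hf' : Integrable (fun y => (starRingEnd ℂ) (f y)) ρ :=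
    Complex.conjCLE.toContinuousLinearMap.integrable_comp hf
  have key := integral_weight_mul_mul (h₂ := fun x y => (starRingEnd ℂ) (h x y)) hw hm hb hm'
    (fun x y => by simpa using hb x y) hf hf'
  have e1 : ∀ x : ℝ, Complex.exp (-(ε : ℂ) * (x : ℂ) ^ 2) * ((∫ y, h x y * f y ∂ρ) *
      ∫ z, (starRingEnd ℂ) (h x z) * (starRingEnd ℂ) (f z) ∂ρ) =
      ((Real.exp (-ε * x ^ 2) * ‖∫ y, h x y * f y ∂ρ‖ ^ 2 : ℝ) : ℂ) := by
    intro x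
    have : ∫ z, (starRingEnd ℂ) (h x z) * (starRingEnd ℂ) (f z) ∂ρ =
        (starRingEnd ℂ) (∫ y, h x y * f y ∂ρ) := by
      rw [← integral_conj]
      exact integral_congr_ae (ae_of_all _ fun z => by simp)
    rw [this, Complex.mul_conj]
    push_cast [Complex.normSq_eq_norm_sq]
    rfl
  simp only [e1] at key
  rw [integral_complex_ofReal] at key
  have hsm : AEStronglyMeasurable (fun x => ∫ y, h x y * f y ∂ρ) (powMeasure (2 * ν + 1)) := by
    have : AEStronglyMeasurable (fun z : ℝ × Y => h z.1 z.2 * f z.2)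
      ((powMeasure (2 * ν + 1)).prod ρ) := hm.aestronglyMeasurable.mul hf.1.comp_snd
    exact this.integral_prod_right'
  have h_integrable : Integrable (fun x : ℝ => Real.exp (-ε * x ^ 2) * ‖∫ y, h x y * f y ∂ρ‖ ^ 2)
      (powMeasure (2 * ν + 1)) := by
    refine (integrable_exp_neg_sq_powMeasure (by linarith) hε).mul_bdd
      (c := (M * ∫ y, ‖f y‖ ∂ρ) ^ 2) (hsm.norm.pow 2) (ae_of_all _ fun x => ?_)
    simp only [Real.norm_eq_abs, abs_pow, abs_norm]
    exact pow_le_pow_left₀ (norm_nonneg _) (norm_integral_kernel_le hb hf x) 2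
  have e2 : ∫⁻ x, ENNReal.ofReal (Real.exp (-ε * x ^ 2)) * ‖∫ y, h x y * f y ∂ρ‖ₑ ^ (2 : ℝ)
      ∂powMeasure (2 * ν + 1) =
      ‖∫ x, Real.exp (-ε * x ^ 2) * ‖∫ y, h x y * f y ∂ρ‖ ^ 2 ∂powMeasure (2 * ν + 1)‖ₑ := by
    rw [← ofReal_norm, Real.norm_of_nonneg (integral_nonneg fun x => by positivity),
      ofReal_integral_eq_lintegral_ofReal h_integrable (ae_of_all _ fun x => by
        simp only [Pi.zero_apply]; positivity)]
    refine lintegral_congr fun x => ?_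
    rw [ENNReal.ofReal_mul (Real.exp_nonneg _), ENNReal.ofReal_pow (norm_nonneg _), ofReal_norm]
    norm_num
  have e3 : ‖∫ x, Real.exp (-ε * x ^ 2) * ‖∫ y, h x y * f y ∂ρ‖ ^ 2 ∂powMeasure (2 * ν + 1)‖ₑ =
      ‖((∫ x, Real.exp (-ε * x ^ 2) * ‖∫ y, h x y * f y ∂ρ‖ ^ 2 ∂powMeasure (2 * ν + 1) : ℝ) :
        ℂ)‖ₑ := by
    rw [← ofReal_norm, ← ofReal_norm, Complex.norm_real]
  rw [e2, e3, key]
  refine (enorm_integral_le_lintegral_enorm _).trans (le_of_eq (lintegral_congr fun yz => ?_))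
  rw [enorm_mul, enorm_mul, ← ofReal_norm ((starRingEnd ℂ) _), Complex.norm_conj, ofReal_norm]

/-- The `L²` bound for the Hankel transform. -/
theorem lintegral_hankel_sq_le {ν : ℝ} (hν : -1 / 2 ≤ ν) {l : ℝ} (hl : 0 < l) {f : ℝ → ℂ}
    (hf : Integrable f (powMeasure (2 * ν + 1))) :
    ∫⁻ x, ‖∫ y, hankelKernel ν l x y * f y ∂powMeasure (2 * ν + 1)‖ₑ ^ (2 : ℝ)
      ∂powMeasure (2 * ν + 1) ≤
    ENNReal.ofReal (1 / 4 * (l ^ 2) ^ (-(ν + 1))) *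
      ∫⁻ y, ‖f y‖ₑ ^ (2 : ℝ) ∂powMeasure (2 * ν + 1) := by
  have hm : Measurable fun z : ℝ × ℝ => hankelKernel ν l z.1 z.2 :=
    hankelKernel_measurable hν measurable_const measurable_fst measurable_snd
  have hsm : AEStronglyMeasurable (fun x => ∫ y, hankelKernel ν l x y * f y
      ∂powMeasure (2 * ν + 1)) (powMeasure (2 * ν + 1)) := by
    have : AEStronglyMeasurable (fun z : ℝ × ℝ => hankelKernel ν l z.1 z.2 * f z.2)
      ((powMeasure (2 * ν + 1)).prod (powMeasure (2 * ν + 1))) :=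
      hm.aestronglyMeasurable.mul hf.1.comp_snd
    exact this.integral_prod_right'
  refine lintegral_le_of_forall_gaussian (hsm.enorm.pow_const _) fun ε hε => ?_
  refine (lintegral_gaussian_mul_sq_le hν hε hm (hankelKernel_norm_le hν l) hf).trans ?_
  simp only [hankelKernel_conj]
  refine lintegral_mul_mul_kernel_le (k := fun y z => ‖∫ x : ℝ, Complex.exp (-(ε : ℂ) * (x : ℂ) ^ 2)
    * (hankelKernel ν l x y * hankelKernel ν l x z) ∂powMeasure (2 * ν + 1)‖ₑ) ?_
    (fun y z => by simp only [mul_comm (hankelKernel ν l _ y)])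
    (fun y => (lintegral_hankel_schur hν hε hl y).le) hf.1.enorm
  refine Measurable.enorm ?_
  have : StronglyMeasurable (fun z : (ℝ × ℝ) × ℝ => Complex.exp (-(ε : ℂ) * (z.2 : ℂ) ^ 2)
    * (hankelKernel ν l z.2 z.1.1 * hankelKernel ν l z.2 z.1.2)) := by
    refine Measurable.stronglyMeasurable (Measurable.mul (by fun_prop) (Measurable.mul ?_ ?_))
    · exact hankelKernel_measurable hν measurable_const measurable_snd measurable_fst.fst
    · exact hankelKernel_measurable hν measurable_const measurable_snd measurable_fst.snd
  exact this.integral_prod_right'.measurable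

theorem lintegral_Ioc_rpow {s : ℝ} (hs : -1 < s) {b : ℝ} (hb : 0 ≤ b) :
    ∫⁻ t in Ioc 0 b, ENNReal.ofReal (t ^ s) = ENNReal.ofReal (b ^ (s + 1) / (s + 1)) := by
  have hi := intervalIntegral.intervalIntegrable_rpow' (a := 0) (b := b) hs
  rw [← ofReal_integral_eq_lintegral_ofReal
    ((intervalIntegrable_iff_integrableOn_Ioc_of_le hb).1 hi)
    ((ae_restrict_mem measurableSet_Ioc).mono fun t ht => Real.rpow_nonneg ht.1.le _),
    ← intervalIntegral.integral_of_le hb, integral_rpow (Or.inl hs),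
    Real.zero_rpow (by linarith), sub_zero]

theorem measure_norm_lt_le {X : Type*} [MeasurableSpace X] {μ : Measure X} {g : X → ℂ}
    (hg : AEStronglyMeasurable g μ) {l : ℝ} (hl : 0 < l) :
    μ {x | l < ‖g x‖} ≤ ENNReal.ofReal (l ^ (-2 : ℝ)) * ∫⁻ x, ‖g x‖ₑ ^ (2 : ℝ) ∂μ := by
  have h1 := meas_ge_le_lintegral_div (hg.enorm.pow_const (2 : ℝ))
    (ε := ENNReal.ofReal (l ^ (2 : ℝ))) (by simpa using by positivity) (by simp)
  refine (measure_mono fun x (hx : l < ‖g x‖) => ?_).trans (h1.trans_eq ?_)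
  · change ENNReal.ofReal (l ^ (2 : ℝ)) ≤ ‖g x‖ₑ ^ (2 : ℝ)
    rw [← ofReal_norm, ENNReal.ofReal_rpow_of_nonneg (norm_nonneg _) (by norm_num)]
    exact ENNReal.ofReal_le_ofReal (Real.rpow_le_rpow hl.le hx.le (by norm_num))
  · rw [div_eq_mul_inv, mul_comm, ← ENNReal.ofReal_inv_of_pos (by positivity), Real.rpow_neg hl.le]

/-- Interpolation between `L¹ → L^∞` and `L² → L²` for integral operators. -/
theorem lintegral_rpow_kernel_le {X Y : Type*} [MeasurableSpace X] [MeasurableSpace Y]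
    {μ : Measure X} {ρ : Measure Y} [SFinite μ] [SFinite ρ] {k : X → Y → ℂ}
    (hk : Measurable fun z : X × Y => k z.1 z.2) {M : ℝ} (hM : 0 < M) (hb : ∀ x y, ‖k x y‖ ≤ M)
    (h2 : ∀ f : Y → ℂ, Integrable f ρ →
      ∫⁻ x, ‖∫ y, k x y * f y ∂ρ‖ₑ ^ (2 : ℝ) ∂μ ≤ ∫⁻ y, ‖f y‖ₑ ^ (2 : ℝ) ∂ρ)
    {r : ℝ} (hr : 2 < r) {f : Y → ℂ} (hfm : Measurable f) (hf : Integrable f ρ) :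
    ∫⁻ x, ‖∫ y, k x y * f y ∂ρ‖ₑ ^ r ∂μ ≤
      ENNReal.ofReal (4 * r * 2 ^ (r - 2) / (r - 2) * M ^ (r - 2)) *
        (∫⁻ y, ‖f y‖ₑ ^ (r / (r - 1)) ∂ρ) ^ (r - 1) := by
  have hr1 : 0 < r - 1 := by linarith
  have hr2 : 0 < r - 2 := by linarith
  set p := r / (r - 1) with hp
  have hp0 : 0 < p := by positivity
  have hp1 : p - 1 = 1 / (r - 1) := by rw [hp]; field_simp; ring
  have hCpos : 0 < 4 * r * 2 ^ (r - 2) / (r - 2) * M ^ (r - 2) := by positivity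
  by_cases hYtop : ∫⁻ y, ‖f y‖ₑ ^ p ∂ρ = ⊤
  · rw [hYtop, ENNReal.top_rpow_of_pos hr1, ENNReal.mul_top (by simpa using hCpos)]
    exact le_top
  by_cases hY0 : ∫⁻ y, ‖f y‖ₑ ^ p ∂ρ = 0
  · rw [lintegral_eq_zero_iff (by fun_prop)] at hY0
    have hf0 : f =ᵐ[ρ] 0 := hY0.mono fun y hy => by simpa [hp0, hp0.le, not_lt.2 hp0.le] using hy
    have : ∀ x, ∫ y, k x y * f y ∂ρ = 0 := fun x =>
      integral_eq_zero_of_ae (hf0.mono fun y hy => by simp [hy])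
    simp [this, ENNReal.zero_rpow_of_pos (by linarith : 0 < r)]
  set Y0 := (∫⁻ y, ‖f y‖ₑ ^ p ∂ρ).toReal with hY0def
  have hY0pos : 0 < Y0 := ENNReal.toReal_pos hY0 hYtop
  have hYeq : ∫⁻ y, ‖f y‖ₑ ^ p ∂ρ = ENNReal.ofReal Y0 := (ENNReal.ofReal_toReal hYtop).symm
  set c := 2 * M * Y0 with hc
  have hc0 : 0 < c := by positivity
  have hTm : ∀ g : Y → ℂ, Measurable g →
      StronglyMeasurable fun x => ∫ y, k x y * g y ∂ρ := fun g hg =>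
    StronglyMeasurable.integral_prod_right'
      (f := fun z : X × Y => k z.1 z.2 * g z.2) (hk.mul (hg.comp measurable_snd)).stronglyMeasurable
  have hnp : ∀ y, ENNReal.ofReal (‖f y‖ ^ p) = ‖f y‖ₑ ^ p := fun y => by
    rw [← ofReal_norm, ENNReal.ofReal_rpow_of_nonneg (norm_nonneg _) hp0.le]
  let A : ℝ → Set Y := fun l => {y | l * ‖f y‖ ^ (p - 1) ≤ c}
  have hA : ∀ l, MeasurableSet (A l) := fun l => measurableSet_le (by fun_prop) measurable_const
  -- the level sets are controlled by the part of `f` of moderate size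
  have hlevel : ∀ l > 0, μ {x | l < ‖∫ y, k x y * f y ∂ρ‖} ≤
      ENNReal.ofReal (4 * l ^ (-2 : ℝ)) * ∫⁻ y, (A l).indicator (fun y => ‖f y‖ₑ ^ (2 : ℝ)) y ∂ρ := by
    intro l hl
    have hs : Integrable ((A l).indicator f) ρ := hf.indicator (hA l)
    have hbig : Integrable ((A l)ᶜ.indicator f) ρ := hf.indicator (hA l).compl
    have hbig_le : ∀ x, ‖∫ y, k x y * (A l)ᶜ.indicator f y ∂ρ‖ ≤ l / 2 := by
      intro x
      refine (norm_integral_kernel_le hb hbig x).trans ?_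
      have hlt : ∫⁻ y, ‖(A l)ᶜ.indicator f y‖ₑ ∂ρ ≤ ENNReal.ofReal (l / c * Y0) := by
        rw [ENNReal.ofReal_mul (by positivity), ← hYeq, ← lintegral_const_mul _ (by fun_prop)]
        refine lintegral_mono fun y => ?_
        by_cases hy : y ∈ A l
        · simp [hy]
        · have hy' : c < l * ‖f y‖ ^ (p - 1) := not_le.1 hy
          rw [indicator_of_mem (by simpa using hy), ← hnp, ← ENNReal.ofReal_mul (by positivity),
            ← ofReal_norm]
          refine ENNReal.ofReal_le_ofReal ?_
          have hfy : 0 < ‖f y‖ := by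
            rcases (norm_nonneg (f y)).eq_or_lt with h | h
            · rw [← h, Real.zero_rpow (by rw [hp1]; positivity)] at hy'
              linarith
            · exact h
          have : ‖f y‖ ^ p = ‖f y‖ ^ (p - 1) * ‖f y‖ := by
            rw [← Real.rpow_add_one hfy.ne']; ring_nf
          rw [this, div_mul_eq_mul_div, le_div_iff₀ hc0]
          nlinarith [mul_le_mul_of_nonneg_right hy'.le hfy.le]
      rw [← ofReal_integral_norm_eq_lintegral_enorm hbig,
        ENNReal.ofReal_le_ofReal_iff (by positivity)] at hlt
      calc _ ≤ M * (l / c * Y0) := mul_le_mul_of_nonneg_left hlt hM.le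
        _ = l / 2 := by rw [hc]; field_simp
    have hsub : {x | l < ‖∫ y, k x y * f y ∂ρ‖} ⊆
        {x | l / 2 < ‖∫ y, k x y * (A l).indicator f y ∂ρ‖} := by
      intro x hx
      have e : ∫ y, k x y * f y ∂ρ = ∫ y, k x y * (A l).indicator f y ∂ρ +
          ∫ y, k x y * (A l)ᶜ.indicator f y ∂ρ := by
        rw [← integral_add (Integrable.bdd_mul_kernel hk hb hs x)
          (Integrable.bdd_mul_kernel hk hb hbig x)]
        refine integral_congr_ae (ae_of_all _ fun y => ?_)
        simp only
        rw [← mul_add, indicator_self_add_compl_apply]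
      simp only [mem_ofPred_eq] at hx ⊢
      rw [e] at hx
      have := norm_add_le (∫ y, k x y * (A l).indicator f y ∂ρ)
        (∫ y, k x y * (A l)ᶜ.indicator f y ∂ρ)
      linarith [hbig_le x]
    refine (measure_mono hsub).trans ((measure_norm_lt_le
      (hTm _ (hfm.indicator (hA l))).aestronglyMeasurable (half_pos hl)).trans ?_)
    have e4 : (l / 2) ^ (-2 : ℝ) = 4 * l ^ (-2 : ℝ) := by
      rw [Real.div_rpow hl.le (by norm_num), Real.rpow_neg (by norm_num : (0:ℝ) ≤ 2)]
      norm_num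
      ring
    rw [e4]
    refine mul_le_mul_right ((h2 _ hs).trans (lintegral_mono fun y => ?_)) _
    by_cases hy : y ∈ A l <;> simp [hy]
  have hlayer := lintegral_rpow_eq_lintegral_meas_lt_mul μ (p := r)
    (ae_of_all _ fun x => norm_nonneg (∫ y, k x y * f y ∂ρ))
    (hTm f hfm).norm.measurable.aemeasurable (by linarith)
  have e0 : ∫⁻ x, ‖∫ y, k x y * f y ∂ρ‖ₑ ^ r ∂μ =
      ∫⁻ x, ENNReal.ofReal (‖∫ y, k x y * f y ∂ρ‖ ^ r) ∂μ := lintegral_congr fun x => by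
    rw [← ofReal_norm, ENNReal.ofReal_rpow_of_nonneg (norm_nonneg _) (by linarith)]
  rw [e0, hlayer]
  have hinner : ∀ y, ∫⁻ l in Ioi (0 : ℝ), ENNReal.ofReal (4 * l ^ (r - 3)) *
      (A l).indicator (fun y => ‖f y‖ₑ ^ (2 : ℝ)) y ≤
      ENNReal.ofReal (4 * c ^ (r - 2) / (r - 2)) * ‖f y‖ₑ ^ p := by
    intro y
    rcases (norm_nonneg (f y)).eq_or_lt with h | h
    · have : f y = 0 := norm_eq_zero.1 h.symm
      have e : ∀ l, (A l).indicator (fun y => ‖f y‖ₑ ^ (2 : ℝ)) y = 0 := fun l => by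
        by_cases hy : y ∈ A l <;> simp [hy, this]
      simp only [e, mul_zero, lintegral_zero, zero_le]
    · set b := c / ‖f y‖ ^ (p - 1) with hbdef
      have hb0 : 0 ≤ b := by positivity
      have e : ∀ l ∈ Ioi (0 : ℝ), ENNReal.ofReal (4 * l ^ (r - 3)) *
          (A l).indicator (fun y => ‖f y‖ₑ ^ (2 : ℝ)) y =
          (Ioc 0 b).indicator (fun l => ENNReal.ofReal (4 * ‖f y‖ ^ 2) * ENNReal.ofReal (l ^ (r - 3))) l := by
        intro l hl
        have hiff : y ∈ A l ↔ l ∈ Ioc 0 b := by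
          simp only [A, mem_ofPred_eq, mem_Ioc, hbdef]
          rw [le_div_iff₀ (by positivity)]
          exact ⟨fun h => ⟨hl, h⟩, fun h => h.2⟩
        by_cases hy : y ∈ A l
        · rw [indicator_of_mem hy, indicator_of_mem (hiff.1 hy), ← ofReal_norm,
            ENNReal.ofReal_rpow_of_nonneg h.le (by norm_num), ← ENNReal.ofReal_mul
            (by have := Real.rpow_nonneg (le_of_lt hl) (r - 3); positivity),
            ← ENNReal.ofReal_mul (by positivity), Real.rpow_two]
          ring_nf
        · rw [indicator_of_notMem hy, indicator_of_notMem (fun h => hy (hiff.2 h)), mul_zero]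
      rw [setLIntegral_congr_fun measurableSet_Ioi e, setLIntegral_indicator measurableSet_Ioc,
        inter_eq_left.2 (fun l hl => hl.1), lintegral_const_mul' _ _ ENNReal.ofReal_ne_top,
        lintegral_Ioc_rpow (by linarith) hb0, ← hnp, ← ENNReal.ofReal_mul (by positivity),
        ← ENNReal.ofReal_mul (by positivity)]
      refine ENNReal.ofReal_le_ofReal (le_of_eq ?_)
      have e5 : r - 3 + 1 = r - 2 := by ring
      have e6 : ‖f y‖ ^ p = ‖f y‖ ^ 2 / (‖f y‖ ^ (p - 1)) ^ (r - 2) := by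
        rw [← Real.rpow_mul h.le, ← Real.rpow_two, ← Real.rpow_sub h]
        congr 1
        rw [hp1, hp]; field_simp; ring
      rw [e5, hbdef, Real.div_rpow hc0.le (by positivity), e6]
      field_simp
  have hjm : Measurable fun z : ℝ × Y => ENNReal.ofReal (4 * z.1 ^ (r - 3)) *
      (A z.1).indicator (fun y => ‖f y‖ₑ ^ (2 : ℝ)) z.2 := by
    refine Measurable.mul (by fun_prop) ?_
    have : (fun z : ℝ × Y => (A z.1).indicator (fun y => ‖f y‖ₑ ^ (2 : ℝ)) z.2) =
        {z : ℝ × Y | z.1 * ‖f z.2‖ ^ (p - 1) ≤ c}.indicator (fun z => ‖f z.2‖ₑ ^ (2 : ℝ)) := by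
      funext z
      by_cases hz : z.1 * ‖f z.2‖ ^ (p - 1) ≤ c <;> simp [A, indicator, hz]
    rw [this]
    exact Measurable.indicator (by fun_prop) (measurableSet_le (by fun_prop) measurable_const)
  have hbound : ∫⁻ l in Ioi (0 : ℝ), μ {x | l < ‖∫ y, k x y * f y ∂ρ‖} *
      ENNReal.ofReal (l ^ (r - 1)) ≤ ENNReal.ofReal (4 * c ^ (r - 2) / (r - 2)) *
        ENNReal.ofReal Y0 := by
    calc _ ≤ ∫⁻ l in Ioi (0 : ℝ), ∫⁻ y, ENNReal.ofReal (4 * l ^ (r - 3)) *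
          (A l).indicator (fun y => ‖f y‖ₑ ^ (2 : ℝ)) y ∂ρ := by
          refine setLIntegral_mono' measurableSet_Ioi fun l hl => ?_
          rw [lintegral_const_mul' _ _ ENNReal.ofReal_ne_top]
          refine (mul_le_mul_left (hlevel l hl) _).trans (le_of_eq ?_)
          rw [mul_right_comm, ← ENNReal.ofReal_mul
            (by have := Real.rpow_nonneg (le_of_lt hl) (-2); positivity), mul_assoc,
            ← Real.rpow_add hl]
          congr 3; ring_nf
      _ = ∫⁻ y, (∫⁻ l in Ioi (0 : ℝ), ENNReal.ofReal (4 * l ^ (r - 3)) *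
          (A l).indicator (fun y => ‖f y‖ₑ ^ (2 : ℝ)) y) ∂ρ :=
          lintegral_lintegral_swap hjm.aemeasurable
      _ ≤ ∫⁻ y, ENNReal.ofReal (4 * c ^ (r - 2) / (r - 2)) * ‖f y‖ₑ ^ p ∂ρ := lintegral_mono hinner
      _ = _ := by rw [lintegral_const_mul' _ _ ENNReal.ofReal_ne_top, hYeq]
  refine (mul_le_mul_right hbound _).trans (le_of_eq ?_)
  rw [hYeq, ENNReal.ofReal_rpow_of_pos hY0pos, ← ENNReal.ofReal_mul (by positivity),
    ← ENNReal.ofReal_mul (by positivity), ← ENNReal.ofReal_mul (by linarith)]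
  congr 1
  have : Y0 ^ (r - 1) = Y0 ^ (r - 2) * Y0 := by
    rw [← Real.rpow_add_one hY0pos.ne']; ring_nf
  rw [hc, Real.mul_rpow (by positivity) hY0pos.le, Real.mul_rpow (by norm_num) hM.le, this]
  ring

theorem lintegral_comp_abs_eq (f : ℝ → ENNReal) :
    ∫⁻ u : ℝ, f |u| = 2 * ∫⁻ u in Ioi (0 : ℝ), f u := by
  rw [← lintegral_add_compl _ (measurableSet_Ioi (a := (0 : ℝ))), compl_Ioi, two_mul,
    setLIntegral_congr_fun measurableSet_Ioi (fun u (hu : 0 < u) => by rw [abs_of_pos hu]),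
    setLIntegral_congr Iio_ae_eq_Iic.symm]
  congr 1
  have h := (Measure.measurePreserving_neg (volume : Measure ℝ)).setLIntegral_comp_preimage_emb
    (Homeomorph.neg ℝ).measurableEmbedding f (Ioi 0)
  rw [← h]
  have e : (Neg.neg ⁻¹' Ioi (0 : ℝ)) = Iio 0 := by ext; simp
  rw [e]
  exact setLIntegral_congr_fun measurableSet_Iio fun u (hu : u < 0) => by rw [abs_of_neg hu]

theorem lintegral_near {γ R : ℝ} (hγ : γ < 1) (hR : 0 < R) :
    ∫⁻ u : ℝ, (Iic R).indicator (fun v => ENNReal.ofReal (v ^ (-γ))) |u| =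
      ENNReal.ofReal (2 * (R ^ (1 - γ) / (1 - γ))) := by
  rw [lintegral_comp_abs_eq, setLIntegral_indicator measurableSet_Iic, inter_comm, Ioi_inter_Iic,
    lintegral_Ioc_rpow (by linarith) hR.le, ENNReal.ofReal_mul (by norm_num)]
  simp [neg_add_eq_sub]

theorem lintegral_far {R : ℝ} (hR : 0 < R) :
    ∫⁻ u : ℝ, (Ioi R).indicator (fun v => ENNReal.ofReal (v ^ (-2 : ℝ))) |u| =
      ENNReal.ofReal (2 / R) := by
  rw [lintegral_comp_abs_eq, setLIntegral_indicator measurableSet_Ioi, Ioi_inter_Ioi,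
    max_eq_left hR.le, ← ofReal_integral_eq_lintegral_ofReal
    (integrableOn_Ioi_rpow_of_lt (by norm_num) hR)
    ((ae_restrict_mem measurableSet_Ioi).mono fun t ht => Real.rpow_nonneg (hR.trans ht).le _),
    integral_Ioi_rpow_of_lt (by norm_num) hR, div_eq_mul_inv 2 R,
    ENNReal.ofReal_mul (by norm_num : (0 : ℝ) ≤ 2)]
  norm_num [Real.rpow_neg_one]

theorem lintegral_rpow_le_layercake {X : Type*} [MeasurableSpace X] {μ : Measure X} [SFinite μ]
    {F : X → ENNReal} (hF : Measurable F) {q : ℝ} (hq : 0 < q) :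
    ∫⁻ x, F x ^ q ∂μ ≤ ENNReal.ofReal q *
      ∫⁻ l in Ioi (0 : ℝ), ENNReal.ofReal (l ^ (q - 1)) * μ {x | ENNReal.ofReal l < F x} := by
  have hpt : ∀ x, F x ^ q ≤ ENNReal.ofReal q * ∫⁻ l in Ioi (0 : ℝ),
      {l | ENNReal.ofReal l < F x}.indicator (fun l => ENNReal.ofReal (l ^ (q - 1))) l := by
    intro x
    refine le_of_forall_lt_imp_le_of_dense fun c hc => ?_
    have hc' : c ≠ ⊤ := hc.ne_top
    set b := (c ^ (1 / q)).toReal with hb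
    have hbt : c ^ (1 / q) ≠ ⊤ := ENNReal.rpow_ne_top_of_nonneg (by positivity) hc'
    have hbc : ENNReal.ofReal b = c ^ (1 / q) := ENNReal.ofReal_toReal hbt
    have hbF : ENNReal.ofReal b < F x := by
      rw [hbc]
      have := ENNReal.rpow_lt_rpow hc (by positivity : 0 < 1 / q)
      rwa [← ENNReal.rpow_mul, mul_one_div_cancel hq.ne', ENNReal.rpow_one] at this
    have hcb : c = ENNReal.ofReal q * ENNReal.ofReal (b ^ (q - 1 + 1) / (q - 1 + 1)) := by
      rw [← ENNReal.ofReal_mul hq.le, sub_add_cancel, mul_div_cancel₀ _ hq.ne',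
        ← ENNReal.ofReal_rpow_of_nonneg ENNReal.toReal_nonneg hq.le, hbc, ← ENNReal.rpow_mul,
        one_div_mul_cancel hq.ne', ENNReal.rpow_one]
    rw [hcb, ← lintegral_Ioc_rpow (by linarith) ENNReal.toReal_nonneg]
    refine mul_le_mul_right ?_ _
    rw [← lintegral_indicator measurableSet_Ioc, ← lintegral_indicator measurableSet_Ioi]
    refine lintegral_mono fun l => ?_
    by_cases hl : l ∈ Ioc 0 b
    · rw [indicator_of_mem hl, indicator_of_mem (show l ∈ Ioi (0 : ℝ) from hl.1), indicator_of_mem]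
      exact (ENNReal.ofReal_le_ofReal hl.2).trans_lt hbF
    · rw [indicator_of_notMem hl]; exact zero_le
  have hjm : Measurable fun z : X × ℝ => {l | ENNReal.ofReal l < F z.1}.indicator
      (fun l => ENNReal.ofReal (l ^ (q - 1))) z.2 := by
    have : (fun z : X × ℝ => {l | ENNReal.ofReal l < F z.1}.indicator
      (fun l => ENNReal.ofReal (l ^ (q - 1))) z.2) = {z : X × ℝ | ENNReal.ofReal z.2 < F z.1}.indicator
        (fun z => ENNReal.ofReal (z.2 ^ (q - 1))) := rfl
    rw [this]
    exact Measurable.indicator (by fun_prop) (measurableSet_lt (by fun_prop) (by fun_prop))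
  refine (lintegral_mono hpt).trans ?_
  rw [lintegral_const_mul' _ _ ENNReal.ofReal_ne_top, lintegral_lintegral_swap hjm.aemeasurable]
  refine mul_le_mul_right (lintegral_mono fun l => ?_) _
  have : ∀ x, {l | ENNReal.ofReal l < F x}.indicator (fun l => ENNReal.ofReal (l ^ (q - 1))) l =
      {x | ENNReal.ofReal l < F x}.indicator (fun _ => ENNReal.ofReal (l ^ (q - 1))) x :=
    fun x => rfl
  simp only [this]
  rw [lintegral_indicator_const (measurableSet_lt (by fun_prop) (by fun_prop))]

/-- The one-dimensional Hardy–Littlewood–Sobolev inequality on the line of duality. -/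
theorem hardy_littlewood_sobolev {q : ℝ} (hq : 2 < q) :
    ∃ C : ℝ, 0 < C ∧ ∀ g : ℝ → ENNReal, Measurable g →
      ∫⁻ t : ℝ, (∫⁻ s : ℝ, ENNReal.ofReal (|t - s| ^ (-(2 / q))) * g s) ^ q ≤
        ENNReal.ofReal C * (∫⁻ s, g s ^ (q / (q - 1))) ^ (q - 1) := by
  have hq0 : 0 < q := by linarith
  have hq1 : 0 < q - 1 := by linarith
  set γ := 2 / q with hγ
  have hγ0 : 0 < γ := by positivity
  have hγ1 : γ < 1 := by rw [hγ, div_lt_one hq0]; exact hq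
  set p := q / (q - 1) with hp
  have hp0 : 0 < p := by positivity
  have hpp : 1 + 1 / (q - 1) = p := by rw [hp]; field_simp; ring
  set κ₀ := 2 / (1 - γ) * (2 ^ (q + 1)) ^ (1 - γ) with hκ₀
  have hγ1' : 0 < 1 - γ := by linarith
  have hκ₀pos : 0 < κ₀ := by positivity
  refine ⟨q * (4 * κ₀) ^ p, by positivity, fun g hg => ?_⟩
  have hCpos : 0 < q * (4 * κ₀) ^ p := by positivity
  by_cases hYtop : ∫⁻ s, g s ^ p = ⊤
  · rw [hYtop, ENNReal.top_rpow_of_pos hq1, ENNReal.mul_top (by simpa using hCpos)]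
    exact le_top
  by_cases hY0 : ∫⁻ s, g s ^ p = 0
  · rw [lintegral_eq_zero_iff (by fun_prop)] at hY0
    have hg0 : g =ᵐ[volume] 0 := hY0.mono fun y hy => by
      simpa [hp0, hp0.le, not_lt.2 hp0.le] using hy
    have : ∀ t : ℝ, ∫⁻ s : ℝ, ENNReal.ofReal (|t - s| ^ (-γ)) * g s = 0 := fun t => by
      rw [lintegral_eq_zero_iff (by fun_prop)]
      exact hg0.mono fun y hy => by simp [hy]
    simp [this, ENNReal.zero_rpow_of_pos hq0]
  set Y0 := (∫⁻ s, g s ^ p).toReal with hY0def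
  have hY0pos : 0 < Y0 := ENNReal.toReal_pos hY0 hYtop
  have hYeq : ∫⁻ s, g s ^ p = ENNReal.ofReal Y0 := (ENNReal.ofReal_toReal hYtop).symm
  set κ := κ₀ * Y0 ^ ((q - 1) * (1 - γ)) with hκ
  have hκpos : 0 < κ := by positivity
  let B : ℝ → Set ℝ := fun l => {s | ENNReal.ofReal (l ^ (q - 1)) < ENNReal.ofReal (4 * κ) * g s}
  have hB : ∀ l, MeasurableSet (B l) := fun l => measurableSet_lt measurable_const (by fun_prop)
  have hlevel : ∀ l > 0, volume {t : ℝ | ENNReal.ofReal l <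
      ∫⁻ s : ℝ, ENNReal.ofReal (|t - s| ^ (-γ)) * g s} ≤
      ENNReal.ofReal (4 * κ * l ^ (1 - q)) * ∫⁻ s, (B l).indicator g s := by
    intro l hl
    set R := 2 ^ (q + 1) * Y0 ^ (q - 1) * l ^ (-q) with hR
    have hR0 : 0 < R := by positivity
    let kn : ℝ → ENNReal := fun u => (Iic R).indicator (fun v => ENNReal.ofReal (v ^ (-γ))) |u|
    let kf : ℝ → ENNReal := fun u => (Ioi R).indicator (fun v => ENNReal.ofReal (v ^ (-γ))) |u|
    have hknm : Measurable kn :=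
      (Measurable.indicator (by fun_prop) measurableSet_Iic).comp measurable_abs
    have hkfm : Measurable kf :=
      (Measurable.indicator (by fun_prop) measurableSet_Ioi).comp measurable_abs
    have hN : ∫⁻ u, kn u = ENNReal.ofReal (κ * l ^ (2 - q)) := by
      rw [lintegral_near hγ1 hR0]
      congr 1
      rw [hR, Real.mul_rpow (by positivity) (by positivity), Real.mul_rpow (by positivity)
        (by positivity), ← Real.rpow_mul hY0pos.le, ← Real.rpow_mul hl.le, hκ, hκ₀]
      have : -q * (1 - γ) = 2 - q := by rw [hγ]; field_simp; ring
      rw [this]; ring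
    have hfar : ∀ t, ∫⁻ s, kf (t - s) * g s ≤ ENNReal.ofReal (l / 2) := by
      intro t
      have hpq : q.HolderConjugate p := by
        rw [Real.holderConjugate_iff]; refine ⟨by linarith, ?_⟩; rw [hp]; field_simp; ring
      refine (ENNReal.lintegral_mul_le_Lp_mul_Lq volume hpq
        (hkfm.comp (measurable_const.sub measurable_id)).aemeasurable hg.aemeasurable).trans ?_
      have e1 : ∀ u, kf u ^ q = (Ioi R).indicator (fun v => ENNReal.ofReal (v ^ (-2 : ℝ))) |u| := by
        intro u
        by_cases hu : |u| ∈ Ioi R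
        · simp only [kf]
          rw [indicator_of_mem hu, indicator_of_mem hu,
            ENNReal.ofReal_rpow_of_nonneg (by positivity) hq0.le, ← Real.rpow_mul (abs_nonneg u)]
          congr 2; rw [hγ]; field_simp
        · simp only [kf]
          rw [indicator_of_notMem hu, indicator_of_notMem hu, ENNReal.zero_rpow_of_pos hq0]
      have e2 : ∫⁻ s, kf (t - s) ^ q = ENNReal.ofReal (2 / R) := by
        rw [lintegral_sub_left_eq_self (fun u => kf u ^ q) t]
        simp only [e1]
        exact lintegral_far hR0
      simp only [Function.comp_def, Pi.sub_apply, id_eq]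
      rw [e2, hYeq, ENNReal.ofReal_rpow_of_pos (by positivity),
        ENNReal.ofReal_rpow_of_pos hY0pos, ← ENNReal.ofReal_mul (by positivity)]
      refine ENNReal.ofReal_le_ofReal (le_of_eq ?_)
      have e3 : 2 / R = (l / 2) ^ q * Y0 ^ (1 - q) := by
        rw [hR, Real.div_rpow hl.le (by norm_num), Real.rpow_neg hl.le,
          Real.rpow_add_one (by norm_num), show 1 - q = -(q - 1) by ring, Real.rpow_neg hY0pos.le]
        field_simp
      rw [e3, Real.mul_rpow (by positivity) (by positivity), ← Real.rpow_mul (by positivity),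
        ← Real.rpow_mul hY0pos.le, mul_assoc, ← Real.rpow_add hY0pos]
      have e4 : (1 - q) * (1 / q) + 1 / p = 0 := by rw [hp]; field_simp; ring
      rw [e4, mul_one_div_cancel hq0.ne', Real.rpow_zero, Real.rpow_one, mul_one]
    have hsmall : ∀ t, ∫⁻ s, kn (t - s) * (B l)ᶜ.indicator g s ≤ ENNReal.ofReal (l / 4) := by
      intro t
      have hle : ∀ s, (B l)ᶜ.indicator g s ≤ ENNReal.ofReal (l ^ (q - 1) / (4 * κ)) := by
        intro s
        by_cases hs : s ∈ B l
        · simp [hs]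
        · rw [indicator_of_mem (by simpa using hs)]
          have : ENNReal.ofReal (4 * κ) * g s ≤ ENNReal.ofReal (l ^ (q - 1)) := not_lt.1 hs
          rw [ENNReal.ofReal_div_of_pos (by positivity), ENNReal.le_div_iff_mul_le
            (Or.inl (by simpa using hκpos)) (Or.inl ENNReal.ofReal_ne_top), mul_comm]
          exact this
      calc _ ≤ ∫⁻ s, kn (t - s) * ENNReal.ofReal (l ^ (q - 1) / (4 * κ)) :=
            lintegral_mono fun s => mul_le_mul_right (hle s) _
        _ = ENNReal.ofReal (l / 4) := by
          rw [lintegral_mul_const' _ _ ENNReal.ofReal_ne_top, lintegral_sub_left_eq_self, hN,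
            ← ENNReal.ofReal_mul (by positivity)]
          congr 1
          have : l ^ (2 - q) * l ^ (q - 1) = l := by
            rw [← Real.rpow_add hl]; ring_nf; exact Real.rpow_one l
          calc _ = l ^ (2 - q) * l ^ (q - 1) / 4 := by field_simp
            _ = _ := by rw [this]
    have hsplit : ∀ t, ∫⁻ s : ℝ, ENNReal.ofReal (|t - s| ^ (-γ)) * g s =
        (∫⁻ s, kf (t - s) * g s) + (∫⁻ s, kn (t - s) * (B l)ᶜ.indicator g s) +
          ∫⁻ s, kn (t - s) * (B l).indicator g s := by
      intro t
      have m1 : Measurable fun s => kf (t - s) * g s := by fun_prop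
      have m2 : Measurable fun s => kn (t - s) * (B l)ᶜ.indicator g s :=
        (by fun_prop : Measurable fun s => kn (t - s)).mul (hg.indicator (hB l).compl)
      rw [← lintegral_add_left m1, ← lintegral_add_left
        (show Measurable fun s => kf (t - s) * g s + kn (t - s) * (B l)ᶜ.indicator g s from
          m1.add m2)]
      refine lintegral_congr fun s => ?_
      rw [add_assoc, ← mul_add, indicator_compl_add_self_apply, ← add_mul]
      congr 1
      by_cases hu : |t - s| ≤ R
      · simp [kf, kn, indicator, hu, not_lt.2 hu]
      · simp [kf, kn, indicator, hu, not_le.1 hu]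
    have hsub : {t : ℝ | ENNReal.ofReal l < ∫⁻ s : ℝ, ENNReal.ofReal (|t - s| ^ (-γ)) * g s} ⊆
        {t | ENNReal.ofReal (l / 4) ≤ ∫⁻ s, kn (t - s) * (B l).indicator g s} := by
      intro t ht
      have ht : ENNReal.ofReal l < ∫⁻ s : ℝ, ENNReal.ofReal (|t - s| ^ (-γ)) * g s := ht
      change ENNReal.ofReal (l / 4) ≤ ∫⁻ s, kn (t - s) * (B l).indicator g s
      rw [hsplit t] at ht
      by_contra hcon
      have h3 := (add_le_add (add_le_add (hfar t) (hsmall t)) (not_le.1 hcon).le)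
      rw [← ENNReal.ofReal_add (by positivity) (by positivity),
        ← ENNReal.ofReal_add (by positivity) (by positivity)] at h3
      refine absurd (ht.trans_le h3) (not_lt.2 (ENNReal.ofReal_le_ofReal ?_))
      linarith
    have hjm : Measurable fun z : ℝ × ℝ => kn (z.1 - z.2) * (B l).indicator g z.2 :=
      (hknm.comp (measurable_fst.sub measurable_snd)).mul
        ((hg.indicator (hB l)).comp measurable_snd)
    refine (measure_mono hsub).trans ((meas_ge_le_lintegral_div
      hjm.lintegral_prod_right'.aemeasurable (by simpa using hl) ENNReal.ofReal_ne_top).trans ?_)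
    rw [lintegral_lintegral_swap hjm.aemeasurable]
    have e5 : ∀ s, ∫⁻ t, kn (t - s) * (B l).indicator g s =
        ENNReal.ofReal (κ * l ^ (2 - q)) * (B l).indicator g s := by
      intro s
      rw [lintegral_mul_const _ (by fun_prop), lintegral_sub_right_eq_self, hN]
    simp only [e5]
    rw [lintegral_const_mul' _ _ ENNReal.ofReal_ne_top, div_eq_mul_inv, mul_right_comm,
      ← div_eq_mul_inv, ← ENNReal.ofReal_div_of_pos (by positivity)]
    refine mul_le_mul_left (ENNReal.ofReal_le_ofReal (le_of_eq ?_)) _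
    rw [show (2 - q) = 1 - q + 1 by ring, Real.rpow_add_one hl.ne']
    field_simp
  have hTm : Measurable fun t : ℝ => ∫⁻ s : ℝ, ENNReal.ofReal (|t - s| ^ (-γ)) * g s :=
    Measurable.lintegral_prod_right' (f := fun z : ℝ × ℝ =>
      ENNReal.ofReal (|z.1 - z.2| ^ (-γ)) * g z.2) (by fun_prop)
  refine (lintegral_rpow_le_layercake hTm hq0).trans ?_
  have hjm : Measurable fun z : ℝ × ℝ => (B z.1).indicator g z.2 := by
    have : (fun z : ℝ × ℝ => (B z.1).indicator g z.2) =
      {z : ℝ × ℝ | ENNReal.ofReal (z.1 ^ (q - 1)) < ENNReal.ofReal (4 * κ) * g z.2}.indicator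
        fun z => g z.2 := rfl
    rw [this]
    exact Measurable.indicator (by fun_prop) (measurableSet_lt (by fun_prop) (by fun_prop))
  have hinner : ∀ᵐ s : ℝ, ∫⁻ l in Ioi (0 : ℝ), (B l).indicator g s ≤
      ENNReal.ofReal ((4 * κ) ^ (1 / (q - 1))) * g s ^ p := by
    have hfin : ∀ᵐ s : ℝ, g s ^ p < ⊤ := ae_lt_top (by fun_prop) hYtop
    filter_upwards [hfin] with s hs
    have hgs : g s ≠ ⊤ := by
      intro h; rw [h, ENNReal.top_rpow_of_pos hp0] at hs; exact lt_irrefl _ hs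
    set b := (g s).toReal with hbdef
    have hb0 : 0 ≤ b := ENNReal.toReal_nonneg
    have hgb : g s = ENNReal.ofReal b := (ENNReal.ofReal_toReal hgs).symm
    calc _ ≤ ∫⁻ l in Ioc 0 ((4 * κ * b) ^ (1 / (q - 1))), g s := by
          rw [← lintegral_indicator measurableSet_Ioc, ← lintegral_indicator measurableSet_Ioi]
          refine lintegral_mono fun l => ?_
          by_cases hl : l ∈ Ioi (0 : ℝ)
          · by_cases hs' : s ∈ B l
            · have h1 : ENNReal.ofReal (l ^ (q - 1)) < ENNReal.ofReal (4 * κ) * g s := hs'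
              rw [hgb, ← ENNReal.ofReal_mul (by positivity)] at h1
              have h2 := (ENNReal.ofReal_lt_ofReal_iff_of_nonneg
                (Real.rpow_nonneg (le_of_lt hl) _)).1 h1
              have h3 : l ≤ (4 * κ * b) ^ (1 / (q - 1)) := by
                rw [one_div]
                exact (Real.le_rpow_inv_iff_of_pos (le_of_lt hl) (by positivity) hq1).2 h2.le
              rw [indicator_of_mem hl, indicator_of_mem hs', indicator_of_mem
                (show l ∈ Ioc 0 ((4 * κ * b) ^ (1 / (q - 1))) from ⟨hl, h3⟩)]
            · rw [indicator_of_mem hl, indicator_of_notMem hs']; exact zero_le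
          · rw [indicator_of_notMem hl]; exact zero_le
      _ = _ := by
          rw [setLIntegral_const, Real.volume_Ioc, sub_zero, hgb,
            ENNReal.ofReal_rpow_of_nonneg hb0 hp0.le, ← ENNReal.ofReal_mul hb0,
            ← ENNReal.ofReal_mul (by positivity), Real.mul_rpow (by positivity) hb0, ← hpp,
            Real.rpow_add_of_nonneg hb0 (by norm_num) (by positivity), Real.rpow_one]
          congr 1; ring
  have hfinal : ∫⁻ l in Ioi (0 : ℝ), ENNReal.ofReal (l ^ (q - 1)) *
      volume {t : ℝ | ENNReal.ofReal l < ∫⁻ s : ℝ, ENNReal.ofReal (|t - s| ^ (-γ)) * g s} ≤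
      ENNReal.ofReal (4 * κ) * (ENNReal.ofReal ((4 * κ) ^ (1 / (q - 1))) * ENNReal.ofReal Y0) := by
    calc _ ≤ ∫⁻ l in Ioi (0 : ℝ), ENNReal.ofReal (4 * κ) * ∫⁻ s, (B l).indicator g s := by
          refine setLIntegral_mono' measurableSet_Ioi fun l (hl : 0 < l) => ?_
          refine (mul_le_mul_right (hlevel l hl) _).trans (le_of_eq ?_)
          rw [← mul_assoc, ← ENNReal.ofReal_mul (by positivity)]
          congr 2
          rw [mul_left_comm, ← Real.rpow_add hl]
          simp
      _ = ENNReal.ofReal (4 * κ) * ∫⁻ s, ∫⁻ l in Ioi (0 : ℝ), (B l).indicator g s := by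
          rw [lintegral_const_mul' _ _ ENNReal.ofReal_ne_top,
            lintegral_lintegral_swap hjm.aemeasurable]
      _ ≤ _ := by
          refine mul_le_mul_right ((lintegral_mono_ae hinner).trans (le_of_eq ?_)) _
          rw [lintegral_const_mul' _ _ ENNReal.ofReal_ne_top, hYeq]
  refine (mul_le_mul_right hfinal _).trans (le_of_eq ?_)
  rw [hYeq, ENNReal.ofReal_rpow_of_pos hY0pos, ← ENNReal.ofReal_mul (by positivity),
    ← ENNReal.ofReal_mul (by positivity), ← ENNReal.ofReal_mul hq0.le,
    ← ENNReal.ofReal_mul hCpos.le]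
  congr 1
  have e6 : 4 * κ * (4 * κ) ^ (1 / (q - 1)) = (4 * κ) ^ p := by
    rw [← hpp, Real.rpow_add (by positivity), Real.rpow_one]
  have e7 : (4 * κ) ^ p = (4 * κ₀) ^ p * Y0 ^ (q - 2) := by
    rw [hκ, ← mul_assoc, Real.mul_rpow (by positivity) (by positivity), ← Real.rpow_mul hY0pos.le]
    congr 2
    rw [hp, hγ]; field_simp
  have e8 : Y0 ^ (q - 1) = Y0 ^ (q - 2) * Y0 := by
    rw [← Real.rpow_add_one hY0pos.ne']; ring_nf
  rw [← mul_assoc (4 * κ), e6, e7, e8]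
  ring

/-- The unimodular phase of the Schrödinger kernel. -/
noncomputable def schrodingerPhase (ν t : ℝ) : ℂ :=
  if 0 < t then Complex.exp (-Complex.I * (((ν + 1) * Real.pi / 2 : ℝ) : ℂ))
  else Complex.exp (Complex.I * (((ν + 1) * Real.pi / 2 : ℝ) : ℂ))

/-- The Schrödinger kernel in terms of the Hankel kernel. -/
noncomputable def schrodingerKernel (ν t x y : ℝ) : ℂ :=
  schrodingerPhase ν t * (((2 * |t|) ^ (-(ν + 1)) * 2 ^ (-ν) : ℝ) : ℂ) *
    Complex.exp (((x ^ 2 / (4 * t) : ℝ) : ℂ) * Complex.I) *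
    Complex.exp (((y ^ 2 / (4 * t) : ℝ) : ℂ) * Complex.I) *
    hankelKernel ν (1 / (4 * t)) x y

theorem schrodingerPhase_norm (ν t : ℝ) : ‖schrodingerPhase ν t‖ = 1 := by
  rw [schrodingerPhase]
  split_ifs
  · rw [neg_mul, ← mul_neg, ← Complex.ofReal_neg, Complex.norm_exp_I_mul_ofReal]
  · rw [Complex.norm_exp_I_mul_ofReal]

theorem schrodingerPhase_measurable (ν : ℝ) : Measurable (schrodingerPhase ν) :=
  Measurable.ite measurableSet_Ioi measurable_const measurable_const

theorem schrodingerKernel_measurable {ν : ℝ} (hν : -1 / 2 ≤ ν) {X : Type*} [MeasurableSpace X]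
    {t x y : X → ℝ} (ht : Measurable t) (hx : Measurable x) (hy : Measurable y) :
    Measurable fun z => schrodingerKernel ν (t z) (x z) (y z) := by
  have h1 := (schrodingerPhase_measurable ν).comp ht
  have h2 : Measurable fun z => 1 / (4 * t z) := by fun_prop
  have h3 := hankelKernel_measurable hν h2 hx hy
  have h4 : Measurable fun z => (((2 * |t z|) ^ (-(ν + 1)) * 2 ^ (-ν) : ℝ) : ℂ) := by fun_prop
  have h5 : Measurable fun z => Complex.exp (((x z ^ 2 / (4 * t z) : ℝ) : ℂ) * Complex.I) := by
    fun_prop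
  have h6 : Measurable fun z => Complex.exp (((y z ^ 2 / (4 * t z) : ℝ) : ℂ) * Complex.I) := by
    fun_prop
  exact (((h1.mul h4).mul h5).mul h6).mul h3

theorem schrodingerKernel_symm (ν t x y : ℝ) :
    schrodingerKernel ν t x y = schrodingerKernel ν t y x := by
  have : hankelKernel ν (1 / (4 * t)) x y = hankelKernel ν (1 / (4 * t)) y x := by
    rw [hankelKernel, hankelKernel, mul_right_comm]
  rw [schrodingerKernel, schrodingerKernel, this]
  ring

theorem schrodingerKernel_norm_le {ν : ℝ} (hν : -1 / 2 ≤ ν) (t x y : ℝ) :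
    ‖schrodingerKernel ν t x y‖ ≤ (2 * |t|) ^ (-(ν + 1)) * 2 ^ (-ν) / Real.Gamma (ν + 1) := by
  rw [schrodingerKernel, norm_mul, norm_mul, norm_mul, norm_mul, schrodingerPhase_norm,
    Complex.norm_exp_ofReal_mul_I, Complex.norm_exp_ofReal_mul_I, Complex.norm_real,
    Real.norm_of_nonneg (by positivity), one_mul, mul_one, mul_one, div_eq_mul_one_div (_ * _)]
  exact mul_le_mul_of_nonneg_left (hankelKernel_norm_le hν _ _ _) (by positivity)

theorem lintegral_schrodingerKernel_sq_le {ν : ℝ} (hν : -1 / 2 ≤ ν) (t : ℝ) {f : ℝ → ℂ}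
    (hf : Integrable f (powMeasure (2 * ν + 1))) :
    ∫⁻ x, ‖∫ y, schrodingerKernel ν t x y * f y ∂powMeasure (2 * ν + 1)‖ₑ ^ (2 : ℝ)
      ∂powMeasure (2 * ν + 1) ≤ ∫⁻ y, ‖f y‖ₑ ^ (2 : ℝ) ∂powMeasure (2 * ν + 1) := by
  rcases eq_or_ne t 0 with rfl | ht
  · have : (2 * |(0 : ℝ)|) ^ (-(ν + 1)) = 0 := by
      rw [abs_zero, mul_zero, Real.zero_rpow (by linarith)]
    have h0 : ∀ x y, schrodingerKernel ν 0 x y = 0 := fun x y => by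
      rw [schrodingerKernel, this]; simp
    simp [h0]
  have ht' : 0 < |t| := abs_pos.2 ht
  set g : ℝ → ℂ := fun y => Complex.exp (((y ^ 2 / (4 * t) : ℝ) : ℂ) * Complex.I) * f y with hg
  have hgn : ∀ y, ‖g y‖ₑ = ‖f y‖ₑ := fun y => by
    rw [hg, enorm_mul, ← ofReal_norm, Complex.norm_exp_ofReal_mul_I, ENNReal.ofReal_one, one_mul]
  have hgi : Integrable g (powMeasure (2 * ν + 1)) :=
    hf.bdd_mul (c := 1) (by fun_prop)
      (ae_of_all _ fun y => (Complex.norm_exp_ofReal_mul_I _).le)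
  have hsq : ∀ x y, hankelKernel ν (1 / (4 * t)) x y = hankelKernel ν (1 / (4 * |t|)) x y := by
    intro x y
    have : (1 / (4 * t) * x * y) ^ 2 = (1 / (4 * |t|) * x * y) ^ 2 := by
      simp only [mul_pow, div_pow, sq_abs]
    rw [hankelKernel, hankelKernel, this]
  have key := lintegral_hankel_sq_le hν (l := 1 / (4 * |t|)) (by positivity) hgi
  simp only [hgn] at key
  set c := (2 * |t|) ^ (-(ν + 1)) * 2 ^ (-ν) with hc
  have hc0 : 0 < c := by positivity
  have e1 : ∀ x, ‖∫ y, schrodingerKernel ν t x y * f y ∂powMeasure (2 * ν + 1)‖ₑ ^ (2 : ℝ) =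
      ENNReal.ofReal (c ^ 2) * ‖∫ y, hankelKernel ν (1 / (4 * |t|)) x y * g y
        ∂powMeasure (2 * ν + 1)‖ₑ ^ (2 : ℝ) := by
    intro x
    have : ∀ y, schrodingerKernel ν t x y * f y = (schrodingerPhase ν t * (c : ℂ) *
        Complex.exp (((x ^ 2 / (4 * t) : ℝ) : ℂ) * Complex.I)) *
        (hankelKernel ν (1 / (4 * |t|)) x y * g y) := by
      intro y
      rw [schrodingerKernel, hsq, hg]
      ring
    simp only [this]
    rw [integral_const_mul, enorm_mul, ENNReal.mul_rpow_of_nonneg _ _ (by norm_num)]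
    congr 1
    rw [← ofReal_norm, norm_mul, norm_mul, schrodingerPhase_norm, Complex.norm_exp_ofReal_mul_I,
      Complex.norm_real, Real.norm_of_nonneg hc0.le, one_mul, mul_one]
    norm_num [ENNReal.ofReal_pow hc0.le]
  simp only [e1]
  rw [lintegral_const_mul' _ _ ENNReal.ofReal_ne_top]
  refine (mul_le_mul_right key _).trans (le_of_eq ?_)
  rw [← mul_assoc, ← ENNReal.ofReal_mul (by positivity)]
  have : c ^ 2 * (1 / 4 * ((1 / (4 * |t|)) ^ 2) ^ (-(ν + 1))) = 1 := by
    have e2 : ((1 / (4 * |t|)) ^ 2) ^ (-(ν + 1)) = ((4 * |t|) ^ (ν + 1)) ^ 2 := by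
      rw [one_div, inv_pow, Real.inv_rpow (by positivity), Real.rpow_neg (by positivity), inv_inv,
        ← Real.rpow_natCast, ← Real.rpow_natCast, ← Real.rpow_mul (by positivity),
        ← Real.rpow_mul (by positivity), mul_comm (ν + 1)]
    have e3 : (4 * |t|) ^ (ν + 1) = 2 ^ (ν + 1) * (2 * |t|) ^ (ν + 1) := by
      rw [← Real.mul_rpow (by norm_num) (by positivity)]; ring_nf
    have e4 : (2 : ℝ) ^ (ν + 1) = 2 ^ ν * 2 := Real.rpow_add_one (by norm_num) _
    rw [e2, e3, hc, Real.rpow_neg (by positivity), Real.rpow_neg (by norm_num), e4]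
    have h5 : (2 * |t|) ^ (ν + 1) ≠ 0 := by positivity
    generalize (2 * |t|) ^ (ν + 1) = b at *
    field_simp
    norm_num
  rw [this, ENNReal.ofReal_one, one_mul]

theorem besselE_gaussian_norm_le {ν : ℝ} (hν : -1 / 2 ≤ ν) (α β : ℝ) {p : ℂ} (hp : 0 < p.re) :
    ‖Complex.exp (((-α ^ 2 : ℝ) : ℂ) / p + ((-β ^ 2 : ℝ) : ℂ) / p) *
      besselE ν (((-α ^ 2 : ℝ) : ℂ) / p * (((-β ^ 2 : ℝ) : ℂ) / p))‖ ≤ 1 / Real.Gamma (ν + 1) := by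
  have hG : 0 < Real.Gamma (ν + 1) := Real.Gamma_pos_of_pos (by linarith)
  have hq : 0 ≤ (1 / p).re := by
    rw [one_div, Complex.inv_re]; exact div_nonneg hp.le (Complex.normSq_nonneg _)
  have e1 : ((-α ^ 2 : ℝ) : ℂ) / p * (((-β ^ 2 : ℝ) : ℂ) / p) =
      (((α * β : ℝ) : ℂ) * (1 / p)) ^ 2 := by push_cast; ring
  have e2 : ((-α ^ 2 : ℝ) : ℂ) / p + ((-β ^ 2 : ℝ) : ℂ) / p =
      ((-(α ^ 2 + β ^ 2) : ℝ) : ℂ) * (1 / p) := by push_cast; ring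
  rw [norm_mul, e1, e2, Complex.norm_exp, Complex.re_ofReal_mul]
  have := besselE_norm_le hν (((α * β : ℝ) : ℂ) * (1 / p))
  rw [Complex.re_ofReal_mul, abs_mul, abs_of_nonneg hq] at this
  calc _ ≤ Real.exp (-(α ^ 2 + β ^ 2) * (1 / p).re) *
        (1 / Real.Gamma (ν + 1) * Real.exp (2 * (|α * β| * (1 / p).re))) := by gcongr
    _ = 1 / Real.Gamma (ν + 1) * Real.exp (-((α ^ 2 + β ^ 2) - 2 * |α * β|) * (1 / p).re) := by
        rw [mul_left_comm, ← Real.exp_add]; congr 2; ring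
    _ ≤ 1 / Real.Gamma (ν + 1) * 1 := by
        gcongr
        rw [Real.exp_le_one_iff]
        have h2 : 2 * |α * β| ≤ α ^ 2 + β ^ 2 := by
          rw [abs_mul]; nlinarith [sq_nonneg (|α| - |β|), sq_abs α, sq_abs β]
        nlinarith [mul_nonneg (sub_nonneg.2 h2) hq]
    _ = _ := mul_one _

theorem schrodingerKernel_comp_norm_le {ν : ℝ} (hν : -1 / 2 ≤ ν) {ε : ℝ} (hε : 0 < ε) {t s : ℝ}
    (ht : t ≠ 0) (hs : s ≠ 0) (hts : t ≠ s) (x z : ℝ) :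
    ‖∫ y : ℝ, Complex.exp (-(ε : ℂ) * (y : ℂ) ^ 2) * (schrodingerKernel ν s z y *
      (starRingEnd ℂ) (schrodingerKernel ν t x y)) ∂powMeasure (2 * ν + 1)‖ ≤
    (2 ^ (-(ν + 1)) / Real.Gamma (ν + 1)) * 2 ^ (-ν) * |t - s| ^ (-(ν + 1)) := by
  have hG : 0 < Real.Gamma (ν + 1) := Real.Gamma_pos_of_pos (by linarith)
  have ht' : 0 < |t| := abs_pos.2 ht
  have hs' : 0 < |s| := abs_pos.2 hs
  have hts' : 0 < |t - s| := abs_pos.2 (sub_ne_zero.2 hts)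
  set c : ℝ → ℝ := fun t => (2 * |t|) ^ (-(ν + 1)) * 2 ^ (-ν) with hc
  set p : ℂ := ⟨ε, 1 / (4 * t) - 1 / (4 * s)⟩ with hp
  have hpre : 0 < p.re := hε
  have hp0 : p ≠ 0 := by intro h; rw [h] at hpre; simp at hpre
  have hpI : p = (ε : ℂ) + ((1 / (4 * t) - 1 / (4 * s) : ℝ) : ℂ) * Complex.I := by
    apply Complex.ext <;> simp [hp]
  set u : ℂ := schrodingerPhase ν s * (starRingEnd ℂ) (schrodingerPhase ν t) *
    Complex.exp (((z ^ 2 / (4 * s) : ℝ) : ℂ) * Complex.I) *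
    Complex.exp (((-(x ^ 2 / (4 * t)) : ℝ) : ℂ) * Complex.I) with hu
  have hun : ‖u‖ = 1 := by
    rw [hu, norm_mul, norm_mul, norm_mul, Complex.norm_conj, schrodingerPhase_norm,
      schrodingerPhase_norm, Complex.norm_exp_ofReal_mul_I, Complex.norm_exp_ofReal_mul_I]
    norm_num
  have e1 : ∀ y : ℝ, Complex.exp (-(ε : ℂ) * (y : ℂ) ^ 2) * (schrodingerKernel ν s z y *
      (starRingEnd ℂ) (schrodingerKernel ν t x y)) = (u * ((c s * c t : ℝ) : ℂ)) *
      (besselE ν (((-(z / (4 * s)) ^ 2 : ℝ) : ℂ) * (y : ℂ) ^ 2) *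
        besselE ν (((-(x / (4 * t)) ^ 2 : ℝ) : ℂ) * (y : ℂ) ^ 2) *
        Complex.exp (-p * (y : ℂ) ^ 2)) := by
    intro y
    have h1 : Complex.exp (-p * (y : ℂ) ^ 2) = Complex.exp (-(ε : ℂ) * (y : ℂ) ^ 2) *
        Complex.exp (((y ^ 2 / (4 * s) : ℝ) : ℂ) * Complex.I) *
        Complex.exp (((-(y ^ 2 / (4 * t)) : ℝ) : ℂ) * Complex.I) := by
      rw [← Complex.exp_add, ← Complex.exp_add, hpI]; congr 1; push_cast; ring
    have h2 : ∀ t x : ℝ, hankelKernel ν (1 / (4 * t)) x y =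
        besselE ν (((-(x / (4 * t)) ^ 2 : ℝ) : ℂ) * (y : ℂ) ^ 2) := by
      intro t x; rw [hankelKernel]; congr 1; push_cast; ring
    have h3 : ∀ v : ℝ, (starRingEnd ℂ) (Complex.exp ((v : ℂ) * Complex.I)) =
        Complex.exp (((-v : ℝ) : ℂ) * Complex.I) := by
      intro v; rw [← Complex.exp_conj, map_mul, Complex.conj_I, Complex.conj_ofReal]
      congr 1; push_cast; ring
    simp only [schrodingerKernel, map_mul, hankelKernel_conj]
    simp only [Complex.conj_ofReal, h3, h2, h1, hu, hc]
    push_cast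
    ring
  simp only [e1]
  rw [integral_const_mul, weber_integral hν _ _ hpre, norm_mul, norm_mul u, hun, one_mul, norm_mul,
    norm_mul, Complex.norm_real, Real.norm_of_nonneg (by positivity)]
  have hpn : ‖p ^ (-(ν + 1 : ℝ) : ℂ)‖ ≤ (|t - s| / (4 * (|t| * |s|))) ^ (-(ν + 1)) := by
    have e2 : ‖p ^ (-(ν + 1 : ℝ) : ℂ)‖ = ‖p‖ ^ (-(ν + 1)) := by
      have := Complex.norm_cpow_real p (-(ν + 1))
      rw [← this]; push_cast; rfl
    rw [e2]
    refine Real.rpow_le_rpow_of_nonpos (by positivity) ?_ (by linarith)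
    calc |t - s| / (4 * (|t| * |s|)) = |p.im| := by
          have : p.im = (s - t) / (4 * (t * s)) := by
            simp only [hp]; field_simp
          rw [this, abs_div, abs_mul, abs_mul, abs_sub_comm]; norm_num
      _ ≤ ‖p‖ := Complex.abs_im_le_norm p
  calc _ ≤ c s * c t * (‖(1 / 2 : ℂ)‖ * (|t - s| / (4 * (|t| * |s|))) ^ (-(ν + 1)) *
        (1 / Real.Gamma (ν + 1))) := by
        gcongr
        exact besselE_gaussian_norm_le hν _ _ hpre
    _ = _ := by
        simp only [hc]
        have e4 : ‖(1 / 2 : ℂ)‖ = 1 / 2 := by norm_num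
        rw [e4, Real.div_rpow (by positivity) (by positivity), Real.mul_rpow (by norm_num)
          (by positivity), Real.mul_rpow (by positivity) (by positivity),
          Real.mul_rpow (by norm_num) (by positivity), Real.mul_rpow (by norm_num) (by positivity),
          show (4 : ℝ) = 2 * 2 by norm_num, Real.mul_rpow (by norm_num) (by norm_num)]
        have e5 : (2 : ℝ) ^ (-(ν + 1)) = 2 ^ (-ν) * (1 / 2) := by
          rw [neg_add, Real.rpow_add (by norm_num), Real.rpow_neg_one]; norm_num
        rw [e5]
        field_simp

theorem lintegral_rpow_kernel_rpow_inv_le {X Y : Type*} [MeasurableSpace X] [MeasurableSpace Y]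
    {μ : Measure X} {ρ : Measure Y} [SFinite μ] [SFinite ρ] {k : X → Y → ℂ}
    (hk : Measurable fun z : X × Y => k z.1 z.2) {c τ d : ℝ} (hc : 0 < c) (hτ : 0 < τ)
    (hb : ∀ x y, ‖k x y‖ ≤ c * τ ^ (-d))
    (h2 : ∀ f : Y → ℂ, Integrable f ρ →
      ∫⁻ x, ‖∫ y, k x y * f y ∂ρ‖ₑ ^ (2 : ℝ) ∂μ ≤ ∫⁻ y, ‖f y‖ₑ ^ (2 : ℝ) ∂ρ)
    {r : ℝ} (hr : 2 < r) {f : Y → ℂ} (hfm : Measurable f) (hf : Integrable f ρ) :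
    (∫⁻ x, ‖∫ y, k x y * f y ∂ρ‖ₑ ^ r ∂μ) ^ (1 / r) ≤
      ENNReal.ofReal ((4 * r * 2 ^ (r - 2) / (r - 2) * c ^ (r - 2)) ^ (1 / r) *
        τ ^ (-(d * (1 - 2 / r)))) *
        (∫⁻ y, ‖f y‖ₑ ^ (r / (r - 1)) ∂ρ) ^ ((r - 1) / r) := by
  have hr0 : 0 < r := by linarith
  have hr2 : 0 < r - 2 := by linarith
  have h := ENNReal.rpow_le_rpow (lintegral_rpow_kernel_le hk (by positivity) hb h2 hr hfm hf)
    (show 0 ≤ 1 / r by positivity)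
  refine h.trans (le_of_eq ?_)
  rw [ENNReal.mul_rpow_of_nonneg _ _ (by positivity), ← ENNReal.rpow_mul,
    ENNReal.ofReal_rpow_of_pos (by positivity), mul_one_div]
  congr 2
  rw [Real.mul_rpow hc.le (by positivity), ← mul_assoc, Real.mul_rpow (by positivity)
    (by positivity), ← Real.rpow_mul hτ.le, ← Real.rpow_mul hτ.le]
  congr 2
  field_simp

theorem enorm_integral_conj_mul {Y : Type*} [MeasurableSpace Y] {ρ : Measure Y} (k f : Y → ℂ) :
    ‖∫ y, (starRingEnd ℂ) (k y) * f y ∂ρ‖ₑ = ‖∫ y, k y * (starRingEnd ℂ) (f y) ∂ρ‖ₑ := by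
  have : ∫ y, k y * (starRingEnd ℂ) (f y) ∂ρ =
      (starRingEnd ℂ) (∫ y, (starRingEnd ℂ) (k y) * f y ∂ρ) := by
    rw [← integral_conj]
    exact integral_congr_ae (ae_of_all _ fun z => by simp)
  rw [this, ← ofReal_norm, ← ofReal_norm, Complex.norm_conj]

theorem Complex.enorm_conj (z : ℂ) : ‖(starRingEnd ℂ) z‖ₑ = ‖z‖ₑ := by
  rw [← ofReal_norm, ← ofReal_norm, Complex.norm_conj]

/-- The regularised composition of the propagator at time `s` with the adjoint at time `t`. -/
noncomputable def schrodingerComp (ν ε t s z x : ℝ) : ℂ :=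
  ∫ y : ℝ, Complex.exp (-(ε : ℂ) * (y : ℂ) ^ 2) * (schrodingerKernel ν s z y *
      (starRingEnd ℂ) (schrodingerKernel ν t x y)) ∂powMeasure (2 * ν + 1)

theorem schrodingerComp_measurable {ν : ℝ} (hν : -1 / 2 ≤ ν) (ε t s : ℝ) :
    Measurable fun z : ℝ × ℝ => schrodingerComp ν ε t s z.1 z.2 := by
  have : StronglyMeasurable (fun z : (ℝ × ℝ) × ℝ => Complex.exp (-(ε : ℂ) * (z.2 : ℂ) ^ 2) *
    (schrodingerKernel ν s z.1.1 z.2 * (starRingEnd ℂ) (schrodingerKernel ν t z.1.2 z.2))) := by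
    refine Measurable.stronglyMeasurable (Measurable.mul (by fun_prop) (Measurable.mul ?_ ?_))
    · exact schrodingerKernel_measurable hν measurable_const measurable_fst.fst measurable_snd
    · exact Complex.continuous_conj.measurable.comp
        (schrodingerKernel_measurable hν measurable_const measurable_fst.snd measurable_snd)
  exact this.integral_prod_right'.measurable

theorem schrodingerKernel_conj_measurable {ν : ℝ} (hν : -1 / 2 ≤ ν) (t : ℝ) :
    Measurable fun z : ℝ × ℝ => (starRingEnd ℂ) (schrodingerKernel ν t z.2 z.1) :=
  Complex.continuous_conj.measurable.comp
    (schrodingerKernel_measurable hν measurable_const measurable_snd measurable_fst)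

theorem schrodingerKernel_conj_norm_le {ν : ℝ} (hν : -1 / 2 ≤ ν) (t x y : ℝ) :
    ‖(starRingEnd ℂ) (schrodingerKernel ν t x y)‖ ≤
      (2 * |t|) ^ (-(ν + 1)) * 2 ^ (-ν) / Real.Gamma (ν + 1) := by
  rw [Complex.norm_conj]; exact schrodingerKernel_norm_le hν t x y

theorem integral_schrodingerComp_mul {ν : ℝ} (hν : -1 / 2 ≤ ν) {ε : ℝ} (hε : 0 < ε) (t s z : ℝ)
    {f : ℝ → ℂ} (hf : Integrable f (powMeasure (2 * ν + 1))) :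
    ∫ x, schrodingerComp ν ε t s z x * f x ∂powMeasure (2 * ν + 1) =
      ∫ y, schrodingerKernel ν s z y * (Complex.exp (-(ε : ℂ) * (y : ℂ) ^ 2) *
        ∫ x, (starRingEnd ℂ) (schrodingerKernel ν t x y) * f x ∂powMeasure (2 * ν + 1))
        ∂powMeasure (2 * ν + 1) := by
  have h1 : ∀ x, schrodingerComp ν ε t s z x * f x = ∫ y : ℝ, (schrodingerKernel ν s z y *
      (starRingEnd ℂ) (schrodingerKernel ν t x y)) * (f x * Complex.exp (-(ε : ℂ) * (y : ℂ) ^ 2))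
      ∂powMeasure (2 * ν + 1) := fun x => by
    rw [schrodingerComp, ← integral_mul_const]
    exact integral_congr_ae (ae_of_all _ fun y => by ring)
  simp only [h1]
  have hm : Measurable fun p : ℝ × ℝ => schrodingerKernel ν s z p.2 *
      (starRingEnd ℂ) (schrodingerKernel ν t p.1 p.2) :=
    (schrodingerKernel_measurable hν measurable_const measurable_const measurable_snd).mul
      (Complex.continuous_conj.measurable.comp
        (schrodingerKernel_measurable hν measurable_const measurable_fst measurable_snd))
  rw [integral_integral_swap]
  · refine integral_congr_ae (ae_of_all _ fun y => ?_)
    simp only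
    rw [← integral_const_mul, ← integral_const_mul]
    exact integral_congr_ae (ae_of_all _ fun x => by ring)
  · refine (hf.mul_prod (integrable_gaussian_powMeasure hν hε)).bdd_mul (c :=
      (2 * |s|) ^ (-(ν + 1)) * 2 ^ (-ν) / Real.Gamma (ν + 1) *
      ((2 * |t|) ^ (-(ν + 1)) * 2 ^ (-ν) / Real.Gamma (ν + 1))) hm.aestronglyMeasurable
      (ae_of_all _ fun p => ?_)
    rw [norm_mul]
    exact mul_le_mul (schrodingerKernel_norm_le hν _ _ _) (schrodingerKernel_conj_norm_le hν _ _ _)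
      (norm_nonneg _) ((norm_nonneg _).trans (schrodingerKernel_norm_le hν s 0 0))

theorem lintegral_schrodingerComp_sq_le {ν : ℝ} (hν : -1 / 2 ≤ ν) {ε : ℝ} (hε : 0 < ε) (t s : ℝ)
    {f : ℝ → ℂ} (hf : Integrable f (powMeasure (2 * ν + 1))) :
    ∫⁻ z, ‖∫ x, schrodingerComp ν ε t s z x * f x ∂powMeasure (2 * ν + 1)‖ₑ ^ (2 : ℝ)
      ∂powMeasure (2 * ν + 1) ≤ ∫⁻ x, ‖f x‖ₑ ^ (2 : ℝ) ∂powMeasure (2 * ν + 1) := by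
  simp only [integral_schrodingerComp_mul hν hε t s _ hf]
  set V : ℝ → ℂ := fun y =>
    ∫ x, (starRingEnd ℂ) (schrodingerKernel ν t x y) * f x ∂powMeasure (2 * ν + 1) with hV
  have hVm : AEStronglyMeasurable V (powMeasure (2 * ν + 1)) := by
    have : AEStronglyMeasurable (fun z : ℝ × ℝ => (starRingEnd ℂ) (schrodingerKernel ν t z.2 z.1) *
      f z.2) ((powMeasure (2 * ν + 1)).prod (powMeasure (2 * ν + 1))) :=
      (schrodingerKernel_conj_measurable hν t).aestronglyMeasurable.mul hf.1.comp_snd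
    exact this.integral_prod_right'
  have hVi : Integrable (fun y : ℝ => Complex.exp (-(ε : ℂ) * (y : ℂ) ^ 2) * V y)
      (powMeasure (2 * ν + 1)) :=
    (integrable_gaussian_powMeasure hν hε).mul_bdd hVm (ae_of_all _ fun y =>
      norm_integral_kernel_le (fun y x => schrodingerKernel_conj_norm_le hν t x y) hf y)
  refine (lintegral_schrodingerKernel_sq_le hν s hVi).trans ?_
  have hfc : Integrable (fun y => (starRingEnd ℂ) (f y)) (powMeasure (2 * ν + 1)) :=
    Complex.conjCLE.toContinuousLinearMap.integrable_comp hf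
  have := lintegral_schrodingerKernel_sq_le hν t hfc
  simp only [Complex.enorm_conj] at this
  refine le_trans (lintegral_mono fun y => ?_) this
  refine ENNReal.rpow_le_rpow ?_ (by norm_num)
  rw [hV, enorm_mul, enorm_integral_conj_mul]
  simp only [schrodingerKernel_symm ν t _ y]
  refine mul_le_of_le_one_left' ?_
  rw [← ofReal_norm, ENNReal.ofReal_le_one, ← Complex.ofReal_pow, ← Complex.ofReal_neg,
    ← Complex.ofReal_mul, Complex.norm_exp, Complex.ofReal_re, Real.exp_le_one_iff]
  nlinarith [sq_nonneg y]

/-- The constant in the dispersive estimates. -/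
noncomputable def dispersiveConst (ν r : ℝ) : ℝ :=
  (4 * r * 2 ^ (r - 2) / (r - 2) *
    (2 ^ (-(ν + 1)) / Real.Gamma (ν + 1) * 2 ^ (-ν)) ^ (r - 2)) ^ (1 / r)

theorem dispersiveConst_pos {ν r : ℝ} (hν : -1 / 2 ≤ ν) (hr : 2 < r) :
    0 < dispersiveConst ν r := by
  have hG : 0 < Real.Gamma (ν + 1) := Real.Gamma_pos_of_pos (by linarith)
  have : 0 < r - 2 := by linarith
  have : 0 < r := by linarith
  unfold dispersiveConst
  positivity

theorem schrodingerKernel_dispersive {ν r : ℝ} (hν : -1 / 2 ≤ ν) (hr : 2 < r) {t : ℝ} (ht : t ≠ 0)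
    {f : ℝ → ℂ} (hfm : Measurable f) (hf : Integrable f (powMeasure (2 * ν + 1))) :
    (∫⁻ x, ‖∫ y, schrodingerKernel ν t x y * f y ∂powMeasure (2 * ν + 1)‖ₑ ^ r
      ∂powMeasure (2 * ν + 1)) ^ (1 / r) ≤
      ENNReal.ofReal (dispersiveConst ν r * |t| ^ (-((ν + 1) * (1 - 2 / r)))) *
        (∫⁻ y, ‖f y‖ₑ ^ (r / (r - 1)) ∂powMeasure (2 * ν + 1)) ^ ((r - 1) / r) := by
  have hG : 0 < Real.Gamma (ν + 1) := Real.Gamma_pos_of_pos (by linarith)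
  refine lintegral_rpow_kernel_rpow_inv_le (schrodingerKernel_measurable hν measurable_const
    measurable_fst measurable_snd) (by positivity) (abs_pos.2 ht) (fun x y => ?_)
    (fun f hf => lintegral_schrodingerKernel_sq_le hν t hf) hr hfm hf
  refine (schrodingerKernel_norm_le hν t x y).trans (le_of_eq ?_)
  rw [Real.mul_rpow (by norm_num) (abs_nonneg t)]
  ring

theorem schrodingerComp_dispersive {ν r : ℝ} (hν : -1 / 2 ≤ ν) (hr : 2 < r) {ε : ℝ} (hε : 0 < ε)
    {t s : ℝ} (ht : t ≠ 0) (hs : s ≠ 0) (hts : t ≠ s)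
    {f : ℝ → ℂ} (hfm : Measurable f) (hf : Integrable f (powMeasure (2 * ν + 1))) :
    (∫⁻ z, ‖∫ x, schrodingerComp ν ε t s z x * f x ∂powMeasure (2 * ν + 1)‖ₑ ^ r
      ∂powMeasure (2 * ν + 1)) ^ (1 / r) ≤
      ENNReal.ofReal (dispersiveConst ν r * |t - s| ^ (-((ν + 1) * (1 - 2 / r)))) *
        (∫⁻ y, ‖f y‖ₑ ^ (r / (r - 1)) ∂powMeasure (2 * ν + 1)) ^ ((r - 1) / r) := by
  have hG : 0 < Real.Gamma (ν + 1) := Real.Gamma_pos_of_pos (by linarith)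
  exact lintegral_rpow_kernel_rpow_inv_le (schrodingerComp_measurable hν ε t s) (by positivity)
    (abs_pos.2 (sub_ne_zero.2 hts)) (fun z x => schrodingerKernel_comp_norm_le hν hε ht hs hts x z)
    (fun f hf => lintegral_schrodingerComp_sq_le hν hε t s hf) hr hfm hf

/-- The adjoint of the Schrödinger propagator. -/
noncomputable def schrodingerAdj (ν t : ℝ) (f : ℝ → ℂ) (y : ℝ) : ℂ :=
  ∫ x, (starRingEnd ℂ) (schrodingerKernel ν t x y) * f x ∂powMeasure (2 * ν + 1)

theorem schrodingerAdj_norm_le {ν : ℝ} (hν : -1 / 2 ≤ ν) (t : ℝ) {f : ℝ → ℂ}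
    (hf : Integrable f (powMeasure (2 * ν + 1))) (y : ℝ) :
    ‖schrodingerAdj ν t f y‖ ≤ (2 * |t|) ^ (-(ν + 1)) * 2 ^ (-ν) / Real.Gamma (ν + 1) *
      ∫ x, ‖f x‖ ∂powMeasure (2 * ν + 1) :=
  norm_integral_kernel_le (fun y x => schrodingerKernel_conj_norm_le hν t x y) hf y

theorem schrodingerAdj_measurable {ν : ℝ} (hν : -1 / 2 ≤ ν) {G : ℝ → ℝ → ℂ}
    (hG : Measurable fun z : ℝ × ℝ => G z.1 z.2) :
    Measurable fun z : ℝ × ℝ => schrodingerAdj ν z.2 (G z.2) z.1 := by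
  have : StronglyMeasurable fun w : (ℝ × ℝ) × ℝ =>
      (starRingEnd ℂ) (schrodingerKernel ν w.1.2 w.2 w.1.1) * G w.1.2 w.2 :=
    ((Complex.continuous_conj.measurable.comp (schrodingerKernel_measurable hν measurable_fst.snd
      measurable_snd measurable_fst.fst)).mul
      (hG.comp (measurable_fst.snd.prodMk measurable_snd))).stronglyMeasurable
  exact this.integral_prod_right'.measurable

theorem schrodingerAdj_measurable_comp {ν : ℝ} (hν : -1 / 2 ≤ ν) {G : ℝ → ℝ → ℂ}
    (hG : Measurable fun z : ℝ × ℝ => G z.1 z.2) {X : Type*} [MeasurableSpace X] {t y : X → ℝ}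
    (ht : Measurable t) (hy : Measurable y) :
    Measurable fun z => schrodingerAdj ν (t z) (G (t z)) (y z) :=
  Measurable.comp (g := fun z : ℝ × ℝ => schrodingerAdj ν z.2 (G z.2) z.1)
    (f := fun z => (y z, t z)) (schrodingerAdj_measurable hν hG) (hy.prodMk ht)

theorem schrodingerAdj_bilinear_le {ν r : ℝ} (hν : -1 / 2 ≤ ν) (hr : 2 < r) {ε : ℝ} (hε : 0 < ε)
    {t s : ℝ} (ht : t ≠ 0) (hs : s ≠ 0) (hts : t ≠ s)
    {f g : ℝ → ℂ} (hfm : Measurable f) (hf : Integrable f (powMeasure (2 * ν + 1)))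
    (hgm : Measurable g) (hg : Integrable g (powMeasure (2 * ν + 1))) :
    ‖∫ y : ℝ, Complex.exp (-(ε : ℂ) * (y : ℂ) ^ 2) * (schrodingerAdj ν t f y *
      (starRingEnd ℂ) (schrodingerAdj ν s g y)) ∂powMeasure (2 * ν + 1)‖ₑ ≤
    (∫⁻ x, ‖g x‖ₑ ^ (r / (r - 1)) ∂powMeasure (2 * ν + 1)) ^ ((r - 1) / r) *
    (ENNReal.ofReal (dispersiveConst ν r * |t - s| ^ (-((ν + 1) * (1 - 2 / r)))) *
      (∫⁻ x, ‖f x‖ₑ ^ (r / (r - 1)) ∂powMeasure (2 * ν + 1)) ^ ((r - 1) / r)) := by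
  have hr1 : 0 < r - 1 := by linarith
  have hgc : Integrable (fun y => (starRingEnd ℂ) (g y)) (powMeasure (2 * ν + 1)) :=
    Complex.conjCLE.toContinuousLinearMap.integrable_comp hg
  have hVm : Measurable (schrodingerAdj ν t f) :=
    schrodingerAdj_measurable_comp hν (G := fun _ => f) (hfm.comp measurable_snd)
      (t := fun _ => t) measurable_const measurable_id
  have hVi : Integrable (fun y : ℝ => Complex.exp (-(ε : ℂ) * (y : ℂ) ^ 2) *
      schrodingerAdj ν t f y) (powMeasure (2 * ν + 1)) :=
    (integrable_gaussian_powMeasure hν hε).mul_bdd hVm.aestronglyMeasurable (ae_of_all _ fun y =>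
      schrodingerAdj_norm_le hν t hf y)
  have e1 : ∀ y, (starRingEnd ℂ) (schrodingerAdj ν s g y) =
      ∫ z, schrodingerKernel ν s z y * (starRingEnd ℂ) (g z) ∂powMeasure (2 * ν + 1) := by
    intro y
    rw [schrodingerAdj, ← integral_conj]
    exact integral_congr_ae (ae_of_all _ fun z => by simp)
  have e2 : ∀ y : ℝ, Complex.exp (-(ε : ℂ) * (y : ℂ) ^ 2) * (schrodingerAdj ν t f y *
      (starRingEnd ℂ) (schrodingerAdj ν s g y)) = ∫ z, schrodingerKernel ν s z y *
      ((Complex.exp (-(ε : ℂ) * (y : ℂ) ^ 2) * schrodingerAdj ν t f y) *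
        (starRingEnd ℂ) (g z)) ∂powMeasure (2 * ν + 1) := by
    intro y
    rw [e1, ← mul_assoc, ← integral_const_mul]
    exact integral_congr_ae (ae_of_all _ fun z => by ring)
  simp only [e2]
  rw [integral_integral_swap]
  · have e3 : ∀ z, ∫ y, schrodingerKernel ν s z y *
      ((Complex.exp (-(ε : ℂ) * (y : ℂ) ^ 2) * schrodingerAdj ν t f y) *
        (starRingEnd ℂ) (g z)) ∂powMeasure (2 * ν + 1) = (starRingEnd ℂ) (g z) *
      ∫ x, schrodingerComp ν ε t s z x * f x ∂powMeasure (2 * ν + 1) := by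
      intro z
      rw [integral_schrodingerComp_mul hν hε t s z hf, ← integral_const_mul]
      exact integral_congr_ae (ae_of_all _ fun y => by simp only [schrodingerAdj]; ring)
    simp only [e3]
    refine (enorm_integral_le_lintegral_enorm _).trans ?_
    simp only [enorm_mul, Complex.enorm_conj]
    have hpq : (r / (r - 1)).HolderConjugate r := by
      rw [Real.holderConjugate_iff]
      refine ⟨by rw [lt_div_iff₀ hr1]; linarith, ?_⟩
      field_simp; ring
    have hTm : Measurable fun z => ∫ x, schrodingerComp ν ε t s z x * f x
        ∂powMeasure (2 * ν + 1) := by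
      have : StronglyMeasurable fun w : ℝ × ℝ => schrodingerComp ν ε t s w.1 w.2 * f w.2 :=
        ((schrodingerComp_measurable hν ε t s).mul (hfm.comp measurable_snd)).stronglyMeasurable
      exact this.integral_prod_right'.measurable
    refine (ENNReal.lintegral_mul_le_Lp_mul_Lq _ hpq hgm.enorm.aemeasurable
      hTm.enorm.aemeasurable).trans ?_
    rw [one_div_div]
    exact mul_le_mul_right (schrodingerComp_dispersive hν hr hε ht hs hts hfm hf) _
  · refine (hVi.mul_prod hgc).bdd_mul (c :=
      (2 * |s|) ^ (-(ν + 1)) * 2 ^ (-ν) / Real.Gamma (ν + 1))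
      (schrodingerKernel_measurable hν measurable_const measurable_snd
        measurable_fst).aestronglyMeasurable
      (ae_of_all _ fun p => schrodingerKernel_norm_le hν _ _ _)

/-- The dual Strichartz estimate. -/
theorem strichartz_dual {ν r q : ℝ} (hν : -1 / 2 ≤ ν) (hr : 2 < r) (hq : 2 < q)
    (hadm : (ν + 1) * (1 - 2 / r) = 2 / q) :
    ∃ C : ℝ, 0 < C ∧ ∀ G : ℝ → ℝ → ℂ, (Measurable fun z : ℝ × ℝ => G z.1 z.2) →
      ∀ A : Set ℝ, MeasurableSet A → volume A ≠ ⊤ → ∀ δ > 0, (∀ t ∈ A, δ ≤ |t|) →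
      ∀ M : ℝ, (∀ t ∈ A, Integrable (G t) (powMeasure (2 * ν + 1)) ∧
        ∫ x, ‖G t x‖ ∂powMeasure (2 * ν + 1) ≤ M) → (∀ t ∉ A, G t = 0) →
      ∫⁻ y, ‖∫ t in A, schrodingerAdj ν t (G t) y‖ₑ ^ (2 : ℝ) ∂powMeasure (2 * ν + 1) ≤
        ENNReal.ofReal C * ((∫⁻ t, ((∫⁻ x, ‖G t x‖ₑ ^ (r / (r - 1)) ∂powMeasure (2 * ν + 1)) ^
          ((r - 1) / r)) ^ (q / (q - 1))) ^ ((q - 1) / q)) ^ (2 : ℝ) := by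
  obtain ⟨C, hC, hHLS⟩ := hardy_littlewood_sobolev hq
  have hD := dispersiveConst_pos hν hr
  have hq0 : 0 < q := by linarith
  have hq1 : 0 < q - 1 := by linarith
  refine ⟨dispersiveConst ν r * C ^ (1 / q), by positivity, ?_⟩
  intro G hG A hA hAfin δ hδ hδA M hM hGA
  have hGm : ∀ t, Measurable (G t) := fun t => hG.comp measurable_prodMk_left
  have hΓ : 0 < Real.Gamma (ν + 1) := Real.Gamma_pos_of_pos (by linarith)
  have : IsFiniteMeasure (volume.restrict A) := ⟨by simpa using hAfin.lt_top⟩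
  set g : ℝ → ENNReal := fun t =>
    (∫⁻ x, ‖G t x‖ₑ ^ (r / (r - 1)) ∂powMeasure (2 * ν + 1)) ^ ((r - 1) / r) with hg
  have hgm : Measurable g := by
    have : Measurable fun z : ℝ × ℝ => ‖G z.1 z.2‖ₑ ^ (r / (r - 1)) := hG.enorm.pow_const _
    exact this.lintegral_prod_right'.pow_const _
  set Z := ∫⁻ t, g t ^ (q / (q - 1)) with hZ
  have hVm := schrodingerAdj_measurable hν hG
  have hVb : ∀ y t, ‖schrodingerAdj ν t (G t) y‖ ≤
      (2 * δ) ^ (-(ν + 1)) * 2 ^ (-ν) / Real.Gamma (ν + 1) * |M| := by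
    intro y t
    by_cases ht : t ∈ A
    · refine (schrodingerAdj_norm_le hν t (hM t ht).1 y).trans ?_
      have h1 : (2 * |t|) ^ (-(ν + 1)) ≤ (2 * δ) ^ (-(ν + 1)) :=
        Real.rpow_le_rpow_of_nonpos (by positivity) (by linarith [hδA t ht]) (by linarith)
      have h2 := (hM t ht).2.trans (le_abs_self M)
      have h3 : 0 ≤ ∫ x, ‖G t x‖ ∂powMeasure (2 * ν + 1) := integral_nonneg fun x => norm_nonneg _
      gcongr
    · simp only [schrodingerAdj, hGA t ht, Pi.zero_apply, mul_zero, integral_zero, norm_zero]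
      positivity
  have hsm : AEMeasurable (fun y => ‖∫ t in A, schrodingerAdj ν t (G t) y‖ₑ ^ (2 : ℝ))
      (powMeasure (2 * ν + 1)) :=
    (hVm.stronglyMeasurable.integral_prod_right' (ν := volume.restrict A)).measurable.enorm.pow_const
      _ |>.aemeasurable
  refine lintegral_le_of_forall_gaussian hsm fun ε hε => ?_
  have key := lintegral_gaussian_mul_sq_le hν hε (ρ := volume.restrict A) hVm hVb
    (f := fun _ => 1) (integrable_const 1)
  simp only [mul_one, enorm_one, one_mul] at key
  refine key.trans ?_
  have hmeas : Measurable fun yz : ℝ × ℝ => ‖∫ x : ℝ, Complex.exp (-(ε : ℂ) * (x : ℂ) ^ 2) *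
      (schrodingerAdj ν yz.1 (G yz.1) x * (starRingEnd ℂ) (schrodingerAdj ν yz.2 (G yz.2) x))
      ∂powMeasure (2 * ν + 1)‖ₑ := by
    have : StronglyMeasurable fun w : (ℝ × ℝ) × ℝ => Complex.exp (-(ε : ℂ) * (w.2 : ℂ) ^ 2) *
      (schrodingerAdj ν w.1.1 (G w.1.1) w.2 *
        (starRingEnd ℂ) (schrodingerAdj ν w.1.2 (G w.1.2) w.2)) := by
      refine Measurable.stronglyMeasurable (Measurable.mul (by fun_prop) (Measurable.mul ?_ ?_))
      · exact schrodingerAdj_measurable_comp hν hG measurable_fst.fst measurable_snd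
      · exact Complex.continuous_conj.measurable.comp
          (schrodingerAdj_measurable_comp hν hG measurable_fst.snd measurable_snd)
    exact this.integral_prod_right'.measurable.enorm
  rw [lintegral_prod _ hmeas.aemeasurable]
  have hA0 : ∀ t ∈ A, t ≠ 0 := fun t ht h => by
    have := hδA t ht
    rw [h, abs_zero] at this
    linarith
  have hstep : ∀ t ∈ A, ∫⁻ s in A, ‖∫ x : ℝ, Complex.exp (-(ε : ℂ) * (x : ℂ) ^ 2) *
      (schrodingerAdj ν t (G t) x * (starRingEnd ℂ) (schrodingerAdj ν s (G s) x))
      ∂powMeasure (2 * ν + 1)‖ₑ ≤ ENNReal.ofReal (dispersiveConst ν r) *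
        (g t * ∫⁻ s, ENNReal.ofReal (|t - s| ^ (-(2 / q))) * g s) := by
    intro t ht
    have hne : ∀ᵐ s : ℝ, s ≠ t := Measure.ae_ne volume t
    calc _ ≤ ∫⁻ s in A, ENNReal.ofReal (dispersiveConst ν r) * g t *
            (ENNReal.ofReal (|t - s| ^ (-(2 / q))) * g s) := by
          refine lintegral_mono_ae ?_
          filter_upwards [ae_restrict_mem hA, ae_restrict_of_ae hne] with s hs hst
          refine (schrodingerAdj_bilinear_le hν hr hε (hA0 t ht) (hA0 s hs) hst.symm (hGm t)
            (hM t ht).1 (hGm s) (hM s hs).1).trans (le_of_eq ?_)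
          rw [hadm, ENNReal.ofReal_mul hD.le]
          simp only [hg]
          ring
      _ ≤ ∫⁻ s, ENNReal.ofReal (dispersiveConst ν r) * g t *
            (ENNReal.ofReal (|t - s| ^ (-(2 / q))) * g s) := setLIntegral_le_lintegral _ _
      _ = _ := by rw [lintegral_const_mul _ (by fun_prop), mul_assoc]
  have hIm : Measurable fun t : ℝ => ∫⁻ s : ℝ, ENNReal.ofReal (|t - s| ^ (-(2 / q))) * g s :=
    Measurable.lintegral_prod_right' (f := fun z : ℝ × ℝ =>
      ENNReal.ofReal (|z.1 - z.2| ^ (-(2 / q))) * g z.2) (by fun_prop)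
  have hpq : (q / (q - 1)).HolderConjugate q := by
    rw [Real.holderConjugate_iff]
    refine ⟨by rw [lt_div_iff₀ hq1]; linarith, ?_⟩
    field_simp; ring
  calc _ ≤ ∫⁻ t in A, ENNReal.ofReal (dispersiveConst ν r) *
        (g t * ∫⁻ s, ENNReal.ofReal (|t - s| ^ (-(2 / q))) * g s) :=
        setLIntegral_mono' hA hstep
    _ ≤ ∫⁻ t, ENNReal.ofReal (dispersiveConst ν r) *
        (g t * ∫⁻ s, ENNReal.ofReal (|t - s| ^ (-(2 / q))) * g s) :=
        setLIntegral_le_lintegral _ _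
    _ = ENNReal.ofReal (dispersiveConst ν r) *
        ∫⁻ t, g t * ∫⁻ s, ENNReal.ofReal (|t - s| ^ (-(2 / q))) * g s :=
        lintegral_const_mul _ (hgm.mul hIm)
    _ ≤ ENNReal.ofReal (dispersiveConst ν r) * (Z ^ ((q - 1) / q) *
        (∫⁻ t, (∫⁻ s, ENNReal.ofReal (|t - s| ^ (-(2 / q))) * g s) ^ q) ^ (1 / q)) := by
        refine mul_le_mul_right ?_ _
        have := ENNReal.lintegral_mul_le_Lp_mul_Lq volume hpq hgm.aemeasurable hIm.aemeasurable
        rw [one_div_div] at this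
        exact this
    _ ≤ ENNReal.ofReal (dispersiveConst ν r) * (Z ^ ((q - 1) / q) *
        (ENNReal.ofReal C * Z ^ (q - 1)) ^ (1 / q)) := by
        refine mul_le_mul_right (mul_le_mul_right (ENNReal.rpow_le_rpow (hHLS g hgm)
          (by positivity)) _) _
    _ = _ := by
        rw [ENNReal.mul_rpow_of_nonneg _ _ (by positivity), ENNReal.ofReal_rpow_of_pos hC,
          ← ENNReal.rpow_mul, mul_one_div, ENNReal.ofReal_mul hD.le, ENNReal.rpow_two]
        ring

theorem lintegral_le_of_rpow_bound {μ : Measure ℝ} {B : Set ℝ} {U : ℝ → ℂ} {m r : ℝ} (hr : 0 ≤ r)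
    (hm : ∀ x, ‖U x‖ ≤ m) :
    ∫⁻ x in B, ‖U x‖ₑ ^ r ∂μ ≤ ENNReal.ofReal m ^ r * μ B := by
  rw [← setLIntegral_const]
  refine lintegral_mono fun x => ENNReal.rpow_le_rpow ?_ hr
  rw [← ofReal_norm]
  exact ENNReal.ofReal_le_ofReal (hm x)

/-- Extremal functions for the duality of mixed norms. -/
theorem exists_mixed_norm_dual {μ : Measure ℝ} [SFinite μ] {r q : ℝ} (hr : 2 < r) (hq : 2 < q)
    {A B : Set ℝ} (hA : MeasurableSet A) (hB : MeasurableSet B) (hAfin : volume A ≠ ⊤)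
    (hBfin : μ B ≠ ⊤) {U : ℝ → ℝ → ℂ} (hU : Measurable fun z : ℝ × ℝ => U z.1 z.2) {m : ℝ}
    (hm : ∀ t ∈ A, ∀ x, ‖U t x‖ ≤ m) :
    ∃ G : ℝ → ℝ → ℂ, (Measurable fun z : ℝ × ℝ => G z.1 z.2) ∧ (∀ t ∉ A, G t = 0) ∧
      (∃ M : ℝ, ∀ t ∈ A, Integrable (G t) μ ∧ ∫ x, ‖G t x‖ ∂μ ≤ M) ∧
      (∫⁻ t in A, (∫⁻ x in B, ‖U t x‖ₑ ^ r ∂μ) ^ (q / r) ≠ ⊤) ∧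
      (∫⁻ t, ((∫⁻ x, ‖G t x‖ₑ ^ (r / (r - 1)) ∂μ) ^ ((r - 1) / r)) ^ (q / (q - 1)) =
        ∫⁻ t in A, (∫⁻ x in B, ‖U t x‖ₑ ^ r ∂μ) ^ (q / r)) ∧
      ‖∫ t in A, ∫ x, (starRingEnd ℂ) (U t x) * G t x ∂μ‖ₑ =
        ∫⁻ t in A, (∫⁻ x in B, ‖U t x‖ₑ ^ r ∂μ) ^ (q / r) := by
  have hr0 : 0 < r := by linarith
  have hr1 : 0 < r - 1 := by linarith
  have hq0 : 0 < q := by linarith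
  have hq1 : 0 < q - 1 := by linarith
  set I : ℝ → ENNReal := fun t => ∫⁻ x in B, ‖U t x‖ₑ ^ r ∂μ with hI
  have hIm : Measurable I := by
    have : Measurable fun z : ℝ × ℝ => ‖U z.1 z.2‖ₑ ^ r := hU.enorm.pow_const _
    exact this.lintegral_prod_right'
  set b : ENNReal := ENNReal.ofReal m ^ r * μ B with hb
  have hbfin : b ≠ ⊤ :=
    ENNReal.mul_ne_top (ENNReal.rpow_ne_top_of_nonneg hr0.le ENNReal.ofReal_ne_top) hBfin
  have hIb : ∀ t ∈ A, I t ≤ b := fun t ht => lintegral_le_of_rpow_bound hr0.le (hm t ht)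
  have hIfin : ∀ t ∈ A, I t ≠ ⊤ := fun t ht => ((hIb t ht).trans_lt hbfin.lt_top).ne
  set J : ℝ → ℝ := fun t => (I t).toReal with hJ
  have hJm : Measurable J := hIm.ennreal_toReal
  have hJ0 : ∀ t, 0 ≤ J t := fun t => ENNReal.toReal_nonneg
  have hIJ : ∀ t ∈ A, I t = ENNReal.ofReal (J t) := fun t ht =>
    (ENNReal.ofReal_toReal (hIfin t ht)).symm
  have hJb : ∀ t ∈ A, J t ≤ b.toReal := fun t ht => ENNReal.toReal_mono hbfin (hIb t ht)
  set H : ℝ → ℝ → ℂ := fun t x =>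
    ((‖U t x‖ ^ (r - 2) * J t ^ ((q - r) / r) : ℝ) : ℂ) * U t x with hH
  set G : ℝ → ℝ → ℂ := fun t x => (A ×ˢ B).indicator (fun z => H z.1 z.2) (t, x) with hG
  have hGm : Measurable fun z : ℝ × ℝ => G z.1 z.2 := by
    refine Measurable.indicator ?_ (hA.prod hB)
    refine Measurable.mul (Complex.measurable_ofReal.comp ?_) hU
    exact (hU.norm.pow_const _).mul ((hJm.comp measurable_fst).pow_const _)
  have hG0 : ∀ t ∉ A, G t = 0 := fun t ht => funext fun x => by
    simp only [hG]
    rw [indicator_of_notMem (fun h => ht h.1)]; rfl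
  have hGA : ∀ t ∈ A, G t = B.indicator (H t) := fun t ht => funext fun x => by
    by_cases hx : x ∈ B
    · simp only [hG]
      rw [indicator_of_mem hx, indicator_of_mem (show (t, x) ∈ A ×ˢ B from ⟨ht, hx⟩)]
    · simp only [hG]
      rw [indicator_of_notMem hx, indicator_of_notMem (fun h => hx h.2)]
  have hHn : ∀ t x, ‖H t x‖ₑ = ‖U t x‖ₑ ^ (r - 1) * ENNReal.ofReal (J t ^ ((q - r) / r)) := by
    intro t x
    have h1 : ‖U t x‖ ^ (r - 1) = ‖U t x‖ ^ (r - 2) * ‖U t x‖ := by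
      rw [← Real.rpow_add_one' (norm_nonneg _) (by linarith)]; ring_nf
    rw [← ofReal_norm, ← ofReal_norm, ENNReal.ofReal_rpow_of_nonneg (norm_nonneg _) hr1.le,
      ← ENNReal.ofReal_mul (by positivity), h1, hH, norm_mul, Complex.norm_real,
      Real.norm_of_nonneg (mul_nonneg (by positivity) (Real.rpow_nonneg (hJ0 t) _))]
    congr 1; ring
  have hGr : ∀ t ∈ A, (∫⁻ x, ‖G t x‖ₑ ^ (r / (r - 1)) ∂μ) ^ ((r - 1) / r) =
      ENNReal.ofReal (J t ^ ((q - 1) / r)) := by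
    intro t ht
    have h1 : ∀ x, ‖G t x‖ₑ ^ (r / (r - 1)) = B.indicator (fun x => ‖U t x‖ₑ ^ r *
        ENNReal.ofReal (J t ^ ((q - r) / (r - 1)))) x := by
      intro x
      rw [hGA t ht]
      by_cases hx : x ∈ B
      · rw [indicator_of_mem hx, indicator_of_mem hx, hHn, ENNReal.mul_rpow_of_nonneg _ _
          (by positivity), ← ENNReal.rpow_mul, ENNReal.ofReal_rpow_of_nonneg
          (Real.rpow_nonneg (hJ0 t) _) (by positivity), ← Real.rpow_mul (hJ0 t)]
        congr 3 <;> field_simp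
      · rw [indicator_of_notMem hx, indicator_of_notMem hx, enorm_zero,
          ENNReal.zero_rpow_of_pos (by positivity)]
    simp only [h1]
    have h2 : J t * J t ^ ((q - r) / (r - 1)) = J t ^ ((q - 1) / (r - 1)) := by
      have e : 1 + (q - r) / (r - 1) = (q - 1) / (r - 1) := by field_simp; ring
      rw [← e, Real.rpow_one_add' (hJ0 t)]
      rw [e]; positivity
    rw [lintegral_indicator hB, lintegral_mul_const' _ _ ENNReal.ofReal_ne_top]
    change (I t * _) ^ _ = _
    rw [hIJ t ht, ← ENNReal.ofReal_mul (hJ0 t), h2, ENNReal.ofReal_rpow_of_nonneg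
      (Real.rpow_nonneg (hJ0 t) _) (by positivity), ← Real.rpow_mul (hJ0 t)]
    congr 2
    field_simp
  have hL1 : ∀ t ∈ A, ∫⁻ x, ‖G t x‖ₑ ∂μ ≤
      ENNReal.ofReal (b.toReal ^ ((q - 1) / r)) * μ B ^ (1 / r) := by
    intro t ht
    have hpq : (r / (r - 1)).HolderConjugate r := by
      rw [Real.holderConjugate_iff]
      refine ⟨by rw [lt_div_iff₀ hr1]; linarith, ?_⟩
      field_simp; ring
    have h1 : ∀ x, ‖G t x‖ₑ = ‖G t x‖ₑ * B.indicator (fun _ => 1) x := fun x => by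
      rw [hGA t ht]
      by_cases hx : x ∈ B <;> simp [hx]
    have h2 : ∀ x, (B.indicator (fun _ => (1 : ENNReal)) x) ^ r = B.indicator (fun _ => 1) x :=
      fun x => by by_cases hx : x ∈ B <;> simp [hx, hr0]
    have h3 := ENNReal.lintegral_mul_le_Lp_mul_Lq μ hpq (f := fun x => ‖G t x‖ₑ)
      (g := B.indicator fun _ => 1) (hGm.comp measurable_prodMk_left).enorm.aemeasurable
      (measurable_const.indicator hB).aemeasurable
    simp only [Pi.mul_apply, ← h1, h2, lintegral_indicator_const hB, one_mul, one_div_div,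
      hGr t ht] at h3
    refine h3.trans (mul_le_mul_left (ENNReal.ofReal_le_ofReal ?_) _)
    exact Real.rpow_le_rpow (hJ0 t) (hJb t ht) (by positivity)
  have hMfin : ENNReal.ofReal (b.toReal ^ ((q - 1) / r)) * μ B ^ (1 / r) ≠ ⊤ :=
    ENNReal.mul_ne_top ENNReal.ofReal_ne_top (ENNReal.rpow_ne_top_of_nonneg (by positivity) hBfin)
  have hXfin : ∫⁻ t in A, I t ^ (q / r) ≠ ⊤ := by
    refine ((setLIntegral_mono' (g := fun _ => b ^ (q / r)) hA fun t ht =>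
      ENNReal.rpow_le_rpow (hIb t ht) (by positivity)).trans_lt ?_).ne
    rw [setLIntegral_const]
    exact ENNReal.mul_lt_top (ENNReal.rpow_lt_top_of_nonneg (by positivity) hbfin) hAfin.lt_top
  refine ⟨G, hGm, hG0, ⟨(ENNReal.ofReal (b.toReal ^ ((q - 1) / r)) *
    μ B ^ (1 / r)).toReal, fun t ht => ?_⟩, hXfin, ?_, ?_⟩
  · have hGi : Integrable (G t) μ := ⟨(hGm.comp measurable_prodMk_left).aestronglyMeasurable,
      (hL1 t ht).trans_lt hMfin.lt_top⟩
    refine ⟨hGi, ?_⟩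
    rw [integral_norm_eq_lintegral_enorm hGi.1]
    exact ENNReal.toReal_mono hMfin (hL1 t ht)
  · rw [← lintegral_indicator hA]
    refine lintegral_congr fun t => ?_
    by_cases ht : t ∈ A
    · rw [indicator_of_mem ht, hGr t ht]
      change _ = I t ^ _
      rw [hIJ t ht, ENNReal.ofReal_rpow_of_nonneg
        (Real.rpow_nonneg (hJ0 t) _) (by positivity), ← Real.rpow_mul (hJ0 t),
        ENNReal.ofReal_rpow_of_nonneg (hJ0 t) (by positivity)]
      congr 2
      field_simp
    · rw [indicator_of_notMem ht, hG0 t ht]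
      simp [hr1, hr0, hq1, hq0]
  · have h1 : ∀ t ∈ A, ∫ x, (starRingEnd ℂ) (U t x) * G t x ∂μ = ((J t ^ (q / r) : ℝ) : ℂ) := by
      intro t ht
      have h2 : ∀ x, (starRingEnd ℂ) (U t x) * G t x = B.indicator (fun x =>
          (((‖U t x‖ ^ r * J t ^ ((q - r) / r) : ℝ)) : ℂ)) x := by
        intro x
        rw [hGA t ht]
        by_cases hx : x ∈ B
        · rw [indicator_of_mem hx, indicator_of_mem hx, hH]
          have h3 : ‖U t x‖ ^ r = ‖U t x‖ ^ (r - 2) * ‖U t x‖ ^ 2 := by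
            rw [← Real.rpow_two, ← Real.rpow_add' (norm_nonneg _) (by linarith)]; ring_nf
          have h4 := Complex.mul_conj (U t x)
          rw [Complex.normSq_eq_norm_sq] at h4
          rw [h3]
          push_cast at h4 ⊢
          linear_combination ((‖U t x‖ ^ (r - 2) : ℝ) : ℂ) *
            ((J t ^ ((q - r) / r) : ℝ) : ℂ) * h4
        · rw [indicator_of_notMem hx, indicator_of_notMem hx, mul_zero]
      simp only [h2]
      rw [integral_indicator hB, integral_complex_ofReal, integral_mul_const]
      have h5 : ∫ x in B, ‖U t x‖ ^ r ∂μ = J t := by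
        have hUt : Measurable (U t) := hU.comp measurable_prodMk_left
        rw [integral_eq_lintegral_of_nonneg_ae (ae_of_all _ fun x => by
          simp only [Pi.zero_apply]; positivity) (hUt.norm.pow_const _).aestronglyMeasurable, hJ, hI]
        congr 1
        refine lintegral_congr fun x => ?_
        rw [← ENNReal.ofReal_rpow_of_nonneg (norm_nonneg _) hr0.le, ofReal_norm]
      have e : 1 + (q - r) / r = q / r := by field_simp; ring
      rw [h5, ← e, Real.rpow_one_add' (hJ0 t)]
      rw [e]; positivity
    rw [setIntegral_congr_fun hA h1, integral_complex_ofReal, ← ofReal_norm, Complex.norm_real,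
      Real.norm_of_nonneg (integral_nonneg fun t => Real.rpow_nonneg (hJ0 t) _)]
    have h6 : ∀ t ∈ A, I t ^ (q / r) = ENNReal.ofReal (J t ^ (q / r)) := fun t ht => by
      rw [hIJ t ht, ENNReal.ofReal_rpow_of_nonneg (hJ0 t) (by positivity)]
    rw [integral_eq_lintegral_of_nonneg_ae (ae_of_all _ fun t => Real.rpow_nonneg (hJ0 t) _)
      (hJm.pow_const _).aestronglyMeasurable, ← setLIntegral_congr_fun hA h6,
      ENNReal.ofReal_toReal hXfin]

/-- The Schrödinger propagator. -/
noncomputable def schrodingerOp (ν t : ℝ) (f : ℝ → ℂ) (x : ℝ) : ℂ :=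
  ∫ y, schrodingerKernel ν t x y * f y ∂powMeasure (2 * ν + 1)

theorem schrodingerOp_norm_le {ν : ℝ} (hν : -1 / 2 ≤ ν) (t : ℝ) {f : ℝ → ℂ}
    (hf : Integrable f (powMeasure (2 * ν + 1))) (x : ℝ) :
    ‖schrodingerOp ν t f x‖ ≤ (2 * |t|) ^ (-(ν + 1)) * 2 ^ (-ν) / Real.Gamma (ν + 1) *
      ∫ y, ‖f y‖ ∂powMeasure (2 * ν + 1) :=
  norm_integral_kernel_le (fun x y => schrodingerKernel_norm_le hν t x y) hf x

theorem schrodingerOp_measurable {ν : ℝ} (hν : -1 / 2 ≤ ν) {X : Type*} [MeasurableSpace X]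
    {t x : X → ℝ} (ht : Measurable t) (hx : Measurable x) {F : X → ℝ → ℂ}
    (hF : Measurable fun z : X × ℝ => F z.1 z.2) :
    Measurable fun z => schrodingerOp ν (t z) (F z) (x z) := by
  have : StronglyMeasurable fun w : X × ℝ =>
      schrodingerKernel ν (t w.1) (x w.1) w.2 * F w.1 w.2 :=
    ((schrodingerKernel_measurable hν (ht.comp measurable_fst) (hx.comp measurable_fst)
      measurable_snd).mul hF).stronglyMeasurable
  exact this.integral_prod_right'.measurable

theorem integral_conj_schrodingerOp_mul {ν : ℝ} (hν : -1 / 2 ≤ ν) (t : ℝ) {f g : ℝ → ℂ}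
    (hf : Integrable f (powMeasure (2 * ν + 1))) (hg : Integrable g (powMeasure (2 * ν + 1))) :
    ∫ x, (starRingEnd ℂ) (schrodingerOp ν t f x) * g x ∂powMeasure (2 * ν + 1) =
      ∫ y, (starRingEnd ℂ) (f y) * schrodingerAdj ν t g y ∂powMeasure (2 * ν + 1) := by
  have hfc : Integrable (fun y => (starRingEnd ℂ) (f y)) (powMeasure (2 * ν + 1)) :=
    Complex.conjCLE.toContinuousLinearMap.integrable_comp hf
  have e1 : ∀ x, (starRingEnd ℂ) (schrodingerOp ν t f x) * g x =
      ∫ y, (starRingEnd ℂ) (schrodingerKernel ν t x y) * (g x * (starRingEnd ℂ) (f y))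
        ∂powMeasure (2 * ν + 1) := by
    intro x
    rw [schrodingerOp, ← integral_conj, ← integral_mul_const]
    exact integral_congr_ae (ae_of_all _ fun y => by simp only [map_mul]; ring)
  have e2 : ∀ y, (starRingEnd ℂ) (f y) * schrodingerAdj ν t g y =
      ∫ x, (starRingEnd ℂ) (schrodingerKernel ν t x y) * (g x * (starRingEnd ℂ) (f y))
        ∂powMeasure (2 * ν + 1) := by
    intro y
    rw [schrodingerAdj, ← integral_const_mul]
    exact integral_congr_ae (ae_of_all _ fun x => by ring)
  simp only [e1, e2]
  refine integral_integral_swap ?_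
  exact (hg.mul_prod hfc).bdd_mul (c := (2 * |t|) ^ (-(ν + 1)) * 2 ^ (-ν) / Real.Gamma (ν + 1))
    (Complex.continuous_conj.measurable.comp (schrodingerKernel_measurable hν measurable_const
      measurable_fst measurable_snd)).aestronglyMeasurable
    (ae_of_all _ fun p => schrodingerKernel_conj_norm_le hν _ _ _)

theorem powMeasure_Icc_lt_top {a : ℝ} (ha : -1 < a) (R : ℝ) : powMeasure a (Icc (-R) R) < ⊤ := by
  refine lt_of_le_of_lt (measure_mono fun x hx => ?_)
    ((integrable_exp_neg_sq_powMeasure ha one_pos).measure_norm_ge_lt_top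
      (Real.exp_pos (-R ^ 2)))
  have : x ^ 2 ≤ R ^ 2 := sq_le_sq' hx.1 hx.2
  rw [mem_ofPred_eq, Real.norm_of_nonneg (Real.exp_pos _).le]
  exact Real.exp_le_exp.2 (by linarith)

theorem ENNReal.le_rpow_of_le_mul_rpow {X Y : ENNReal} {q : ℝ} (hq : 1 < q) (hX : X ≠ ⊤)
    (h : X ≤ Y * X ^ ((q - 1) / q)) : X ≤ Y ^ q := by
  have hq0 : 0 < q := by linarith
  rcases eq_or_ne X 0 with h0 | h0
  · rw [h0]; exact zero_le
  have h1 : X ^ ((q - 1) / q) ≠ 0 := (ENNReal.rpow_pos (pos_iff_ne_zero.2 h0) hX).ne'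
  have h2 : X ^ ((q - 1) / q) ≠ ⊤ :=
    ENNReal.rpow_ne_top_of_nonneg (div_nonneg (by linarith) hq0.le) hX
  have h3 : X = X ^ (1 / q) * X ^ ((q - 1) / q) := by
    rw [← ENNReal.rpow_add _ _ h0 hX]
    have : 1 / q + (q - 1) / q = 1 := by field_simp; ring
    rw [this, ENNReal.rpow_one]
  have h4 : X ^ (1 / q) ≤ Y := (ENNReal.mul_le_mul_iff_left h1 h2).1 (h3.symm.trans_le h)
  calc X = (X ^ (1 / q)) ^ q := by
        rw [← ENNReal.rpow_mul, one_div_mul_cancel hq0.ne', ENNReal.rpow_one]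
    _ ≤ Y ^ q := ENNReal.rpow_le_rpow h4 hq0.le

theorem integral_conj_schrodingerOp_mul_time {ν : ℝ} (hν : -1 / 2 ≤ ν) {f : ℝ → ℂ}
    (hf : Integrable f (powMeasure (2 * ν + 1))) {G : ℝ → ℝ → ℂ}
    (hG : Measurable fun z : ℝ × ℝ => G z.1 z.2) {A : Set ℝ} (hA : MeasurableSet A)
    (hAfin : volume A ≠ ⊤) {δ : ℝ} (hδ : 0 < δ) (hδA : ∀ t ∈ A, δ ≤ |t|) {M : ℝ}
    (hM : ∀ t ∈ A, Integrable (G t) (powMeasure (2 * ν + 1)) ∧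
      ∫ x, ‖G t x‖ ∂powMeasure (2 * ν + 1) ≤ M) :
    ∫ t in A, ∫ x, (starRingEnd ℂ) (schrodingerOp ν t f x) * G t x ∂powMeasure (2 * ν + 1) =
      ∫ y, (starRingEnd ℂ) (f y) * (∫ t in A, schrodingerAdj ν t (G t) y)
        ∂powMeasure (2 * ν + 1) := by
  have hfc : Integrable (fun y => (starRingEnd ℂ) (f y)) (powMeasure (2 * ν + 1)) :=
    Complex.conjCLE.toContinuousLinearMap.integrable_comp hf
  have hΓ : 0 < Real.Gamma (ν + 1) := Real.Gamma_pos_of_pos (by linarith)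
  have : IsFiniteMeasure (volume.restrict A) := ⟨by simpa using hAfin.lt_top⟩
  rw [setIntegral_congr_fun hA fun t ht => integral_conj_schrodingerOp_mul hν t hf (hM t ht).1,
    integral_integral_swap]
  · exact integral_congr_ae (ae_of_all _ fun y => integral_const_mul (L := ℂ) _ _)
  · have h1 : Integrable (fun z : ℝ × ℝ => (1 : ℂ) * (starRingEnd ℂ) (f z.2))
        ((volume.restrict A).prod (powMeasure (2 * ν + 1))) := (integrable_const 1).mul_prod hfc
    simp only [one_mul] at h1
    refine h1.mul_bdd (c := (2 * δ) ^ (-(ν + 1)) * 2 ^ (-ν) / Real.Gamma (ν + 1) * |M|)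
      (schrodingerAdj_measurable_comp hν hG measurable_fst measurable_snd).aestronglyMeasurable ?_
    have h2 : ∀ᵐ z : ℝ × ℝ ∂(volume.restrict A).prod (powMeasure (2 * ν + 1)), z.1 ∈ A :=
      Measure.quasiMeasurePreserving_fst.ae (ae_restrict_mem hA)
    filter_upwards [h2] with z ht
    refine (schrodingerAdj_norm_le hν z.1 (hM z.1 ht).1 z.2).trans ?_
    have h1 : (2 * |z.1|) ^ (-(ν + 1)) ≤ (2 * δ) ^ (-(ν + 1)) :=
      Real.rpow_le_rpow_of_nonpos (by positivity) (by linarith [hδA z.1 ht]) (by linarith)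
    have h2 := (hM z.1 ht).2.trans (le_abs_self M)
    have h3 : 0 ≤ ∫ x, ‖G z.1 x‖ ∂powMeasure (2 * ν + 1) := integral_nonneg fun x => norm_nonneg _
    gcongr

theorem strichartz_homogeneous_truncated {ν r q : ℝ} (hν : -1 / 2 ≤ ν) (hr : 2 < r) (hq : 2 < q)
    (hadm : (ν + 1) * (1 - 2 / r) = 2 / q) :
    ∃ C : ℝ, 0 < C ∧ ∀ f : ℝ → ℂ, Measurable f → Integrable f (powMeasure (2 * ν + 1)) →
      ∀ δ L R : ℝ, 0 < δ →
      ∫⁻ t in {t : ℝ | δ ≤ |t| ∧ |t| ≤ L}, (∫⁻ x in Icc (-R) R, ‖schrodingerOp ν t f x‖ₑ ^ r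
        ∂powMeasure (2 * ν + 1)) ^ (q / r) ≤
      ENNReal.ofReal C * (∫⁻ y, ‖f y‖ₑ ^ (2 : ℝ) ∂powMeasure (2 * ν + 1)) ^ (q / 2) := by
  obtain ⟨C, hC, hdual⟩ := strichartz_dual hν hr hq hadm
  have hq0 : 0 < q := by linarith
  have hΓ : 0 < Real.Gamma (ν + 1) := Real.Gamma_pos_of_pos (by linarith)
  refine ⟨C ^ (q / 2), by positivity, fun f hfm hf δ L R hδ => ?_⟩
  set A : Set ℝ := {t : ℝ | δ ≤ |t| ∧ |t| ≤ L} with hAdef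
  have hA : MeasurableSet A :=
    (measurableSet_le measurable_const continuous_abs.measurable).inter
      (measurableSet_le continuous_abs.measurable measurable_const)
  have hAfin : volume A ≠ ⊤ := by
    refine ((measure_mono fun t ht => ?_).trans_lt (measure_Icc_lt_top (a := -L) (b := L))).ne
    exact abs_le.1 ht.2
  have hδA : ∀ t ∈ A, δ ≤ |t| := fun t ht => ht.1
  have hUm : Measurable fun z : ℝ × ℝ => schrodingerOp ν z.1 f z.2 :=
    schrodingerOp_measurable hν measurable_fst measurable_snd (hfm.comp measurable_snd)
  have hUb : ∀ t ∈ A, ∀ x, ‖schrodingerOp ν t f x‖ ≤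
      (2 * δ) ^ (-(ν + 1)) * 2 ^ (-ν) / Real.Gamma (ν + 1) *
        ∫ y, ‖f y‖ ∂powMeasure (2 * ν + 1) := by
    intro t ht x
    refine (schrodingerOp_norm_le hν t hf x).trans ?_
    have h1 : (2 * |t|) ^ (-(ν + 1)) ≤ (2 * δ) ^ (-(ν + 1)) :=
      Real.rpow_le_rpow_of_nonpos (by positivity) (by linarith [hδA t ht]) (by linarith)
    have h3 : 0 ≤ ∫ x, ‖f x‖ ∂powMeasure (2 * ν + 1) := integral_nonneg fun x => norm_nonneg _
    gcongr
  obtain ⟨G, hGm, hG0, ⟨M, hM⟩, hXfin, hGX, hpair⟩ := exists_mixed_norm_dual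
    (μ := powMeasure (2 * ν + 1)) hr hq hA measurableSet_Icc hAfin
    (powMeasure_Icc_lt_top (by linarith) R).ne hUm hUb
  have hd := hdual G hGm A hA hAfin δ hδ hδA M hM hG0
  rw [hGX] at hd
  rw [integral_conj_schrodingerOp_mul_time hν hf hGm hA hAfin hδ hδA hM] at hpair
  set X := ∫⁻ t in A, (∫⁻ x in Icc (-R) R, ‖schrodingerOp ν t f x‖ₑ ^ r
        ∂powMeasure (2 * ν + 1)) ^ (q / r) with hX
  set Φ := ∫⁻ y, ‖f y‖ₑ ^ (2 : ℝ) ∂powMeasure (2 * ν + 1) with hΦ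
  have hWm : Measurable fun y => ∫ t in A, schrodingerAdj ν t (G t) y :=
    ((schrodingerAdj_measurable hν hGm).stronglyMeasurable.integral_prod_right'
      (ν := volume.restrict A)).measurable
  have hmain : X ≤ (Φ ^ (1 / 2 : ℝ) * ENNReal.ofReal C ^ (1 / 2 : ℝ)) * X ^ ((q - 1) / q) := by
    calc X = _ := hpair.symm
      _ ≤ ∫⁻ y, ‖f y‖ₑ * ‖∫ t in A, schrodingerAdj ν t (G t) y‖ₑ ∂powMeasure (2 * ν + 1) := by
          refine (enorm_integral_le_lintegral_enorm _).trans (le_of_eq ?_)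
          simp only [enorm_mul, Complex.enorm_conj]
      _ ≤ Φ ^ (1 / 2 : ℝ) * (∫⁻ y, ‖∫ t in A, schrodingerAdj ν t (G t) y‖ₑ ^ (2 : ℝ)
            ∂powMeasure (2 * ν + 1)) ^ (1 / 2 : ℝ) :=
          ENNReal.lintegral_mul_le_Lp_mul_Lq _ Real.HolderConjugate.two_two hfm.enorm.aemeasurable
            hWm.enorm.aemeasurable
      _ ≤ Φ ^ (1 / 2 : ℝ) * (ENNReal.ofReal C * (X ^ ((q - 1) / q)) ^ (2 : ℝ)) ^ (1 / 2 : ℝ) :=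
          mul_le_mul_right (ENNReal.rpow_le_rpow hd (by norm_num)) _
      _ = _ := by
          rw [ENNReal.mul_rpow_of_nonneg _ _ (by norm_num), ← ENNReal.rpow_mul _ 2,
            show (2 : ℝ) * (1 / 2) = 1 by norm_num, ENNReal.rpow_one, mul_assoc]
  refine (ENNReal.le_rpow_of_le_mul_rpow (by linarith) hXfin hmain).trans (le_of_eq ?_)
  rw [ENNReal.mul_rpow_of_nonneg _ _ hq0.le, ← ENNReal.rpow_mul, ← ENNReal.rpow_mul,
    ENNReal.ofReal_rpow_of_pos hC, mul_comm, one_div_mul_eq_div]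

/-- The homogeneous Strichartz estimate. -/
theorem strichartz_homogeneous {ν r q : ℝ} (hν : -1 / 2 ≤ ν) (hr : 2 < r) (hq : 2 < q)
    (hadm : (ν + 1) * (1 - 2 / r) = 2 / q) :
    ∃ C : ℝ, 0 < C ∧ ∀ f : ℝ → ℂ, Measurable f → Integrable f (powMeasure (2 * ν + 1)) →
      ∫⁻ t : ℝ, (∫⁻ x, ‖schrodingerOp ν t f x‖ₑ ^ r ∂powMeasure (2 * ν + 1)) ^ (q / r) ≤
      ENNReal.ofReal C * (∫⁻ y, ‖f y‖ₑ ^ (2 : ℝ) ∂powMeasure (2 * ν + 1)) ^ (q / 2) := by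
  obtain ⟨C, hC, hmain⟩ := strichartz_homogeneous_truncated hν hr hq hadm
  have hqr : 0 < q / r := by apply div_pos <;> linarith
  refine ⟨C, hC, fun f hfm hf => ?_⟩
  have hUm : Measurable fun z : ℝ × ℝ => ‖schrodingerOp ν z.1 f z.2‖ₑ ^ r :=
    (schrodingerOp_measurable hν measurable_fst measurable_snd
      (hfm.comp measurable_snd)).enorm.pow_const _
  set B : ℕ → Set ℝ := fun n => Icc (-(n : ℝ)) n with hB
  have hBmono : Monotone B := fun m n hmn =>
    Icc_subset_Icc (neg_le_neg (Nat.cast_le.2 hmn)) (Nat.cast_le.2 hmn)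
  have hBU : ⋃ n, B n = univ := eq_univ_of_forall fun x => by
    obtain ⟨n, hn⟩ := exists_nat_ge |x|
    exact mem_iUnion.2 ⟨n, abs_le.1 hn⟩
  set A : ℕ → Set ℝ := fun n => {t : ℝ | 1 / ((n : ℝ) + 1) ≤ |t| ∧ |t| ≤ n} with hA
  have hAmeas : ∀ n, MeasurableSet (A n) := fun n =>
    (measurableSet_le measurable_const continuous_abs.measurable).inter
      (measurableSet_le continuous_abs.measurable measurable_const)
  have hAmono : Monotone A := fun m n hmn t ht =>
    ⟨(Nat.one_div_le_one_div hmn).trans ht.1, ht.2.trans (Nat.cast_le.2 hmn)⟩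
  have hAmem : ∀ t : ℝ, t ≠ 0 → ∃ n, t ∈ A n := by
    intro t ht
    obtain ⟨n, hn⟩ := exists_nat_one_div_lt (abs_pos.2 ht)
    obtain ⟨m, hm⟩ := exists_nat_ge |t|
    exact ⟨max n m, (Nat.one_div_le_one_div (le_max_left n m)).trans hn.le,
      hm.trans (Nat.cast_le.2 (le_max_right n m))⟩
  set I : ℝ → ENNReal := fun t => ∫⁻ x, ‖schrodingerOp ν t f x‖ₑ ^ r ∂powMeasure (2 * ν + 1)
  set J : ℕ → ℝ → ENNReal := fun n t =>
    ∫⁻ x in B n, ‖schrodingerOp ν t f x‖ₑ ^ r ∂powMeasure (2 * ν + 1)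
  have hJm : ∀ n, Measurable (J n) := fun n => hUm.lintegral_prod_right'
  have hJmono : ∀ t, Monotone fun n => J n t := fun t m n hmn =>
    lintegral_mono_set (hBmono hmn)
  have hJI : ∀ t, Tendsto (fun n => J n t) atTop (nhds (I t)) := by
    intro t
    have hs : ⨆ n, J n t = I t := by
      change _ = ∫⁻ x, ‖schrodingerOp ν t f x‖ₑ ^ r ∂powMeasure (2 * ν + 1)
      rw [← setLIntegral_univ, ← hBU,
        setLIntegral_iUnion_of_directed _ (hBmono.directed_le)]
    rw [← hs]
    exact tendsto_atTop_iSup (hJmono t)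
  have hlim : ∀ t : ℝ, t ≠ 0 → Tendsto (fun n => (A n).indicator (fun t => J n t ^ (q / r)) t)
      atTop (nhds (I t ^ (q / r))) := by
    intro t ht
    refine (((ENNReal.continuous_rpow_const (y := q / r)).tendsto _).comp (hJI t)).congr' ?_
    obtain ⟨n, hn⟩ := hAmem t ht
    filter_upwards [eventually_ge_atTop n] with m hm
    rw [indicator_of_mem (hAmono hm hn)]
    rfl
  refine le_of_tendsto' (lintegral_tendsto_of_tendsto_of_monotone
    (f := fun n => (A n).indicator (fun t => J n t ^ (q / r))) (fun n => (((hJm n).pow_const _).indicator (hAmeas n)).aemeasurable) ?_ ?_) fun n => ?_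
  · refine ae_of_all _ fun t m n hmn => ?_
    refine indicator_le_indicator_of_subset (hAmono hmn) (fun _ => zero_le) t |>.trans ?_
    exact indicator_le_indicator (ENNReal.rpow_le_rpow (hJmono t hmn) hqr.le)
  · filter_upwards [Measure.ae_ne volume (0 : ℝ)] with t ht using hlim t ht
  · rw [lintegral_indicator (hAmeas n)]
    exact hmain f hfm hf _ _ _ (by positivity)

/-- Minkowski's integral inequality. -/
theorem lintegral_lintegral_rpow_le {X Y : Type*} [MeasurableSpace X] [MeasurableSpace Y]
    {μ : Measure X} [SigmaFinite μ] {ρ : Measure Y} [SFinite ρ] {r : ℝ} (hr : 1 < r)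
    {f : X → Y → ENNReal} (hf : Measurable fun z : X × Y => f z.1 z.2) :
    ∫⁻ x, (∫⁻ s, f x s ∂ρ) ^ r ∂μ ≤ (∫⁻ s, (∫⁻ x, f x s ^ r ∂μ) ^ (1 / r) ∂ρ) ^ r := by
  have hr0 : 0 < r := by linarith
  have hr1 : 0 < r - 1 := by linarith
  set g : X → ENNReal := fun x => ∫⁻ s, f x s ∂ρ with hg
  have hgm : Measurable g := hf.lintegral_prod_right'
  set h : ℕ → X → ENNReal := fun n =>
    (spanningSets μ n).indicator fun x => min (g x) n with hh
  have hhm : ∀ n, Measurable (h n) := fun n =>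
    (hgm.min measurable_const).indicator (measurableSet_spanningSets μ n)
  have hhg : ∀ n x, h n x ≤ g x := fun n x => indicator_le_self' (fun _ _ => zero_le) x |>.trans
    (min_le_left _ _)
  have hhmono : ∀ x, Monotone fun n => h n x := fun x m n hmn => by
    refine (indicator_le_indicator_of_subset (monotone_spanningSets μ hmn) (fun _ => zero_le)
      x).trans (indicator_le_indicator (min_le_min_left _ (Nat.cast_le.2 hmn)))
  have hhlim : ∀ x, Tendsto (fun n => h n x) atTop (nhds (g x)) := by
    intro x
    have h1 : Tendsto (fun n : ℕ => min (g x) n) atTop (nhds (g x)) := by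
      have := (tendsto_const_nhds (x := g x)).min ENNReal.tendsto_nat_nhds_top
      rwa [min_top_right] at this
    refine h1.congr' ?_
    filter_upwards [eventually_mem_spanningSets μ x] with n hn
    simp only [hh]
    rw [indicator_of_mem hn]
  have hfin : ∀ n, ∫⁻ x, h n x ^ r ∂μ ≠ ⊤ := by
    intro n
    have h1 : ∀ x, h n x ^ r ≤ (spanningSets μ n).indicator (fun _ => (n : ENNReal) ^ r) x := by
      intro x
      simp only [hh]
      by_cases hx : x ∈ spanningSets μ n
      · rw [indicator_of_mem hx, indicator_of_mem hx]
        exact ENNReal.rpow_le_rpow (min_le_right _ _) hr0.le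
      · rw [indicator_of_notMem hx, indicator_of_notMem hx, ENNReal.zero_rpow_of_pos hr0]
    refine ((lintegral_mono h1).trans_lt ?_).ne
    rw [lintegral_indicator_const (measurableSet_spanningSets μ n)]
    exact ENNReal.mul_lt_top (ENNReal.rpow_lt_top_of_nonneg hr0.le (ENNReal.natCast_ne_top n))
      (measure_spanningSets_lt_top μ n)
  have hpq : (r / (r - 1)).HolderConjugate r := by
    rw [Real.holderConjugate_iff]
    refine ⟨by rw [lt_div_iff₀ hr1]; linarith, ?_⟩
    field_simp; ring
  have hmain : ∀ n, ∫⁻ x, h n x ^ r ∂μ ≤ (∫⁻ s, (∫⁻ x, f x s ^ r ∂μ) ^ (1 / r) ∂ρ) ^ r := by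
    intro n
    refine ENNReal.le_rpow_of_le_mul_rpow hr (hfin n) ?_
    have hmul : Measurable fun z : X × Y => h n z.1 ^ (r - 1) * f z.1 z.2 :=
      (((hhm n).comp measurable_fst).pow_const _).mul hf
    calc ∫⁻ x, h n x ^ r ∂μ ≤ ∫⁻ x, ∫⁻ s, h n x ^ (r - 1) * f x s ∂ρ ∂μ := by
          refine lintegral_mono fun x => ?_
          have hfx : Measurable (f x) := hf.comp measurable_prodMk_left
          have h1 : h n x ^ r = h n x ^ (r - 1) * h n x := by
            have := ENNReal.rpow_add_of_nonneg (x := h n x) (r - 1) 1 hr1.le zero_le_one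
            rwa [ENNReal.rpow_one, sub_add_cancel] at this
          rw [lintegral_const_mul _ hfx, h1]
          exact mul_le_mul_right (hhg n x) _
        _ = ∫⁻ s, ∫⁻ x, h n x ^ (r - 1) * f x s ∂μ ∂ρ :=
          lintegral_lintegral_swap hmul.aemeasurable
        _ ≤ ∫⁻ s, (∫⁻ x, h n x ^ r ∂μ) ^ ((r - 1) / r) * (∫⁻ x, f x s ^ r ∂μ) ^ (1 / r) ∂ρ := by
          refine lintegral_mono fun s => ?_
          have h1 := ENNReal.lintegral_mul_le_Lp_mul_Lq μ hpq (f := fun x => h n x ^ (r - 1))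
            (g := fun x => f x s) ((hhm n).pow_const _).aemeasurable
            (hf.comp measurable_prodMk_right).aemeasurable
          have h2 : (r - 1) * (r / (r - 1)) = r := by field_simp
          simp only [← ENNReal.rpow_mul, h2, one_div_div] at h1
          exact h1
        _ = _ := by
          rw [lintegral_const_mul, mul_comm]
          exact (hf.pow_const r).lintegral_prod_left'.pow_const _
  refine le_of_tendsto' (lintegral_tendsto_of_tendsto_of_monotone (f := fun n x => h n x ^ r)
    (fun n => ((hhm n).pow_const _).aemeasurable) ?_ ?_) hmain
  · exact ae_of_all _ fun x m n hmn => ENNReal.rpow_le_rpow (hhmono x hmn) hr0.le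
  · exact ae_of_all _ fun x => ((ENNReal.continuous_rpow_const (y := r)).tendsto _).comp (hhlim x)

instance (a : ℝ) : SigmaFinite (powMeasure a) := by unfold powMeasure; infer_instance

/-- The inhomogeneous Strichartz estimate. -/
theorem strichartz_inhomogeneous {ν r q : ℝ} (hν : -1 / 2 ≤ ν) (hr : 2 < r) (hq : 2 < q)
    (hadm : (ν + 1) * (1 - 2 / r) = 2 / q) :
    ∃ C : ℝ, 0 < C ∧ ∀ F : ℝ → ℝ → ℂ, (Measurable fun z : ℝ × ℝ => F z.1 z.2) →
      (∀ s, Integrable (F s) (powMeasure (2 * ν + 1))) →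
      ∫⁻ t : ℝ, (∫⁻ x, (∫⁻ s : ℝ, ‖schrodingerOp ν (t - s) (F s) x‖ₑ) ^ r
        ∂powMeasure (2 * ν + 1)) ^ (q / r) ≤
      ENNReal.ofReal C * (∫⁻ s, ((∫⁻ y, ‖F s y‖ₑ ^ (r / (r - 1)) ∂powMeasure (2 * ν + 1)) ^
          ((r - 1) / r)) ^ (q / (q - 1))) ^ (q - 1) := by
  obtain ⟨C, hC, hHLS⟩ := hardy_littlewood_sobolev hq
  have hD := dispersiveConst_pos hν hr
  have hq0 : 0 < q := by linarith
  have hr0 : 0 < r := by linarith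
  have hr1 : 1 < r := by linarith
  refine ⟨dispersiveConst ν r ^ q * C, by positivity, fun F hF hFi => ?_⟩
  have hFm : ∀ s, Measurable (F s) := fun s => hF.comp measurable_prodMk_left
  set g : ℝ → ENNReal := fun s =>
    (∫⁻ y, ‖F s y‖ₑ ^ (r / (r - 1)) ∂powMeasure (2 * ν + 1)) ^ ((r - 1) / r) with hg
  have hgm : Measurable g := by
    have : Measurable fun z : ℝ × ℝ => ‖F z.1 z.2‖ₑ ^ (r / (r - 1)) := hF.enorm.pow_const _
    exact this.lintegral_prod_right'.pow_const _
  have hstep : ∀ t : ℝ, (∫⁻ x, (∫⁻ s : ℝ, ‖schrodingerOp ν (t - s) (F s) x‖ₑ) ^ r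
      ∂powMeasure (2 * ν + 1)) ^ (q / r) ≤ (ENNReal.ofReal (dispersiveConst ν r) *
        ∫⁻ s, ENNReal.ofReal (|t - s| ^ (-(2 / q))) * g s) ^ q := by
    intro t
    have hm : Measurable fun z : ℝ × ℝ => ‖schrodingerOp ν (t - z.2) (F z.2) z.1‖ₑ :=
      (schrodingerOp_measurable hν (measurable_const.sub measurable_snd) measurable_fst
        (F := fun z : ℝ × ℝ => F z.2)
        (hF.comp (measurable_fst.snd.prodMk measurable_snd))).enorm
    have h1 := lintegral_lintegral_rpow_le (μ := powMeasure (2 * ν + 1)) (ρ := volume)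
      (f := fun x s => ‖schrodingerOp ν (t - s) (F s) x‖ₑ) hr1 hm
    calc _ ≤ ((∫⁻ s : ℝ, (∫⁻ x, ‖schrodingerOp ν (t - s) (F s) x‖ₑ ^ r
          ∂powMeasure (2 * ν + 1)) ^ (1 / r)) ^ r) ^ (q / r) :=
          ENNReal.rpow_le_rpow h1 (by positivity)
      _ = (∫⁻ s : ℝ, (∫⁻ x, ‖schrodingerOp ν (t - s) (F s) x‖ₑ ^ r
          ∂powMeasure (2 * ν + 1)) ^ (1 / r)) ^ q := by
          rw [← ENNReal.rpow_mul, mul_div_cancel₀ _ hr0.ne']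
      _ ≤ (∫⁻ s : ℝ, ENNReal.ofReal (dispersiveConst ν r) *
            (ENNReal.ofReal (|t - s| ^ (-(2 / q))) * g s)) ^ q := by
          refine ENNReal.rpow_le_rpow (lintegral_mono_ae ?_) hq0.le
          filter_upwards [Measure.ae_ne volume t] with s hs
          refine (schrodingerKernel_dispersive hν hr (sub_ne_zero.2 hs.symm) (hFm s)
            (hFi s)).trans (le_of_eq ?_)
          rw [hadm, ENNReal.ofReal_mul hD.le, mul_assoc]
      _ = _ := by rw [lintegral_const_mul _ (by fun_prop)]
  refine (lintegral_mono hstep).trans ?_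
  have hIm : Measurable fun t : ℝ => ∫⁻ s : ℝ, ENNReal.ofReal (|t - s| ^ (-(2 / q))) * g s :=
    Measurable.lintegral_prod_right' (f := fun z : ℝ × ℝ =>
      ENNReal.ofReal (|z.1 - z.2| ^ (-(2 / q))) * g z.2) (by fun_prop)
  simp only [ENNReal.mul_rpow_of_nonneg _ _ hq0.le]
  rw [lintegral_const_mul _ (hIm.pow_const _), ENNReal.ofReal_rpow_of_pos hD,
    ENNReal.ofReal_mul (by positivity), mul_assoc]
  exact mul_le_mul_right (hHLS g hgm) _

theorem besselJ_eq_besselE (ν : ℝ) {z : ℝ} (hz : 0 < z) :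
    besselJ (ν : ℂ) z = (((z / 2) ^ ν : ℝ) : ℂ) * besselE ν ((-(z / 2) ^ 2 : ℝ) : ℂ) := by
  have h2 : 0 < z / 2 := by positivity
  have hne : ((z / 2 : ℝ) : ℂ) ≠ 0 := by exact_mod_cast h2.ne'
  rw [besselJ, besselE, ← tsum_mul_left]
  refine tsum_congr fun k => ?_
  have h1 : ((z : ℂ) / 2) ^ (2 * (k : ℂ) + (ν : ℂ)) =
      (((z / 2) ^ ν : ℝ) : ℂ) * (((z / 2) ^ 2 : ℝ) : ℂ) ^ k := by
    have e : (z : ℂ) / 2 = ((z / 2 : ℝ) : ℂ) := by push_cast; ring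
    rw [e, Complex.cpow_add _ _ hne, ← Complex.ofReal_cpow h2.le, mul_comm]
    congr 1
    rw [Complex.ofReal_pow, ← pow_mul, ← Complex.cpow_natCast, Nat.cast_mul, Nat.cast_ofNat]
  have h3 : Complex.Gamma ((ν : ℂ) + k + 1) = (Real.Gamma (ν + k + 1) : ℂ) := by
    rw [← Complex.Gamma_ofReal]; push_cast; rfl
  rw [h1, h3, Complex.Gamma_nat_eq_factorial, Complex.ofReal_neg, neg_pow]
  ring

theorem Skernel_eq_schrodingerKernel {a ν : ℝ} (hν : a = 2 * ν + 1) {x y t : ℝ} (hx : 0 < x)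
    (hy : 0 < y) (ht : t ≠ 0) : Skernel a x y t = schrodingerKernel ν t x y := by
  have hz : 0 < x * y / (2 * |t|) := by positivity
  set z := x * y / (2 * |t|) with hzdef
  have e1 : (a - 1) / 2 = ν := by rw [hν]; ring
  have e2 : (a + 1) * Real.pi / 4 = (ν + 1) * Real.pi / 2 := by rw [hν]; ring
  have e3 : -(a + 1) / 2 = -(ν + 1) := by rw [hν]; ring
  have e4 : (1 - a) / 2 = -ν := by rw [hν]; ring
  have e5 : (1 / (4 * t) * x * y) ^ 2 = (z / 2) ^ 2 := by
    rw [hzdef, ← sq_abs (1 / (4 * t) * x * y), abs_mul, abs_mul, abs_of_pos hx, abs_of_pos hy,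
      abs_div, abs_mul, abs_one, abs_of_pos (by norm_num : (0 : ℝ) < 4)]
    congr 1
    field_simp
    ring
  have e6 : (((z ^ (-ν) : ℝ)) : ℂ) * besselJ (ν : ℂ) z =
      ((2 ^ (-ν) : ℝ) : ℂ) * hankelKernel ν (1 / (4 * t)) x y := by
    rw [besselJ_eq_besselE ν hz, hankelKernel, e5, ← mul_assoc, ← Complex.ofReal_mul]
    congr 2
    rw [Real.div_rpow hz.le (by norm_num), Real.rpow_neg hz.le, Real.rpow_neg (by norm_num)]
    have := Real.rpow_pos_of_pos hz ν
    field_simp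
  rw [Skernel, schrodingerKernel, schrodingerPhase, e1, e2, e3, e4]
  rcases lt_or_gt_of_ne ht with h | h
  · have e7 : -Complex.I * (((x ^ 2 + y ^ 2) / (4 * |t|) : ℝ) : ℂ) =
        ((x ^ 2 / (4 * t) : ℝ) : ℂ) * Complex.I + ((y ^ 2 / (4 * t) : ℝ) : ℂ) * Complex.I := by
      rw [abs_of_neg h]
      have : (t : ℂ) ≠ 0 := by exact_mod_cast ht
      push_cast
      field_simp
    rw [if_neg h.not_gt, if_neg h.not_gt, e7, Complex.exp_add, Complex.ofReal_mul]
    linear_combination Complex.exp (Complex.I * (((ν + 1) * Real.pi / 2 : ℝ) : ℂ)) *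
      (((2 * |t|) ^ (-(ν + 1)) : ℝ) : ℂ) * Complex.exp (((x ^ 2 / (4 * t) : ℝ) : ℂ) * Complex.I) *
      Complex.exp (((y ^ 2 / (4 * t) : ℝ) : ℂ) * Complex.I) * e6
  · have e7 : Complex.I * (((x ^ 2 + y ^ 2) / (4 * |t|) : ℝ) : ℂ) =
        ((x ^ 2 / (4 * t) : ℝ) : ℂ) * Complex.I + ((y ^ 2 / (4 * t) : ℝ) : ℂ) * Complex.I := by
      rw [abs_of_pos h]
      have : (t : ℂ) ≠ 0 := by exact_mod_cast ht
      push_cast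
      field_simp
    rw [if_pos h, if_pos h, e7, Complex.exp_add, Complex.ofReal_mul]
    linear_combination Complex.exp (-Complex.I * (((ν + 1) * Real.pi / 2 : ℝ) : ℂ)) *
      (((2 * |t|) ^ (-(ν + 1)) : ℝ) : ℂ) * Complex.exp (((x ^ 2 / (4 * t) : ℝ) : ℂ) * Complex.I) *
      Complex.exp (((y ^ 2 / (4 * t) : ℝ) : ℂ) * Complex.I) * e6

theorem integral_Skernel_eq_schrodingerOp {a ν : ℝ} (hν : a = 2 * ν + 1) {x t : ℝ} (hx : 0 < x)
    (ht : t ≠ 0) {f g : ℝ → ℂ} (hfg : EqOn f g (Ioi 0)) :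
    ∫ y in Ioi (0 : ℝ), Skernel a x y t * f y * ((y ^ a : ℝ) : ℂ) = schrodingerOp ν t g x := by
  rw [schrodingerOp, integral_powMeasure, ← hν]
  refine setIntegral_congr_fun measurableSet_Ioi fun y hy => ?_
  have hy : 0 < y := hy
  simp only [Complex.real_smul, Skernel_eq_schrodingerKernel hν hx hy ht, hfg hy]
  ring

theorem lintegral_powMeasure (a : ℝ) (h : ℝ → ENNReal) :
    ∫⁻ x, h x ∂powMeasure a = ∫⁻ x in Ioi (0 : ℝ), ENNReal.ofReal (x ^ a) * h x := by
  rw [powMeasure, lintegral_withDensity_eq_lintegral_mul_non_measurable _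
    (powMeasure_density_measurable a) (ae_of_all _ fun x => ENNReal.ofReal_lt_top)]
  rfl

theorem ofReal_integral_le_lintegral {X : Type*} [MeasurableSpace X] {μ : Measure X} {h : X → ℝ}
    (h0 : 0 ≤ᵐ[μ] h) : ENNReal.ofReal (∫ x, h x ∂μ) ≤ ∫⁻ x, ENNReal.ofReal (h x) ∂μ := by
  by_cases hi : Integrable h μ
  · rw [ofReal_integral_eq_lintegral_ofReal hi h0]
  · rw [integral_undef hi, ENNReal.ofReal_zero]
    exact zero_le

theorem lintegral_ofReal_LrA_integrand (a : ℝ) {r : ℝ} (hr : 0 ≤ r) (f : ℝ → ℂ) :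
    ∫⁻ x in Ioi (0 : ℝ), ENNReal.ofReal (‖f x‖ ^ r * x ^ a) =
      ∫⁻ x, ‖f x‖ₑ ^ r ∂powMeasure a := by
  rw [lintegral_powMeasure]
  refine setLIntegral_congr_fun measurableSet_Ioi fun x _ => ?_
  rw [ENNReal.ofReal_mul (Real.rpow_nonneg (norm_nonneg _) _), mul_comm,
    ← ENNReal.ofReal_rpow_of_nonneg (norm_nonneg _) hr, ofReal_norm]

theorem LrA_integrand_nonneg (a r : ℝ) (f : ℝ → ℂ) :
    0 ≤ᵐ[volume.restrict (Ioi (0 : ℝ))] fun x => ‖f x‖ ^ r * x ^ a := by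
  filter_upwards [ae_restrict_mem measurableSet_Ioi] with x hx
  have hx : 0 < x := hx
  simp only [Pi.zero_apply]
  positivity

theorem LrA_integral_nonneg (a r : ℝ) (f : ℝ → ℂ) :
    0 ≤ ∫ x in Ioi (0 : ℝ), ‖f x‖ ^ r * x ^ a :=
  integral_nonneg_of_ae (LrA_integrand_nonneg a r f)

theorem LrA_nonneg (a r : ℝ) (f : ℝ → ℂ) : 0 ≤ LrA a r f :=
  Real.rpow_nonneg (LrA_integral_nonneg a r f) _

theorem ofReal_LrA_le (a : ℝ) {r : ℝ} (hr : 0 < r) (f : ℝ → ℂ) :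
    ENNReal.ofReal (LrA a r f) ≤ (∫⁻ x, ‖f x‖ₑ ^ r ∂powMeasure a) ^ (1 / r) := by
  rw [LrA, ← ENNReal.ofReal_rpow_of_nonneg (LrA_integral_nonneg a r f) (by positivity)]
  refine ENNReal.rpow_le_rpow ?_ (by positivity)
  rw [← lintegral_ofReal_LrA_integrand a hr.le]
  exact ofReal_integral_le_lintegral (LrA_integrand_nonneg a r f)

theorem ofReal_mixedNorm_le (a : ℝ) {q r : ℝ} (hq : 0 < q) (hr : 0 < r) (u : ℝ → ℝ → ℂ) :
    ENNReal.ofReal (mixedNorm a q r u) ≤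
      (∫⁻ t, ((∫⁻ x, ‖u x t‖ₑ ^ r ∂powMeasure a) ^ (1 / r)) ^ q) ^ (1 / q) := by
  have h0 : ∀ t, 0 ≤ LrA a r (fun x => u x t) ^ q := fun t => Real.rpow_nonneg (LrA_nonneg _ _ _) _
  rw [mixedNorm, ← ENNReal.ofReal_rpow_of_nonneg (integral_nonneg h0) (by positivity)]
  refine ENNReal.rpow_le_rpow ((ofReal_integral_le_lintegral (ae_of_all _ h0)).trans
    (lintegral_mono fun t => ?_)) (by positivity)
  rw [← ENNReal.ofReal_rpow_of_nonneg (LrA_nonneg _ _ _) hq.le]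
  exact ENNReal.rpow_le_rpow (ofReal_LrA_le a hr _) hq.le

theorem ofReal_LrA_eq (a : ℝ) {r : ℝ} (hr : 0 < r) {f g : ℝ → ℂ} (hfg : EqOn f g (Ioi 0))
    (hg : Measurable g) (hfin : ∫⁻ x, ‖g x‖ₑ ^ r ∂powMeasure a ≠ ⊤) :
    ENNReal.ofReal (LrA a r f) = (∫⁻ x, ‖g x‖ₑ ^ r ∂powMeasure a) ^ (1 / r) := by
  have h1 : LrA a r f = LrA a r g := by
    rw [LrA, LrA]
    congr 1
    exact setIntegral_congr_fun measurableSet_Ioi fun x hx => by simp only [hfg hx]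
  rw [h1, LrA, ← ENNReal.ofReal_rpow_of_nonneg (LrA_integral_nonneg a r g) (by positivity),
    integral_eq_lintegral_of_nonneg_ae (LrA_integrand_nonneg a r g)
      (Measurable.aestronglyMeasurable (by fun_prop)), lintegral_ofReal_LrA_integrand a hr.le,
    ENNReal.ofReal_toReal hfin]

theorem ofReal_mixedNorm_eq (a : ℝ) {q r : ℝ} (hq : 0 < q) (hr : 0 < r) {F G : ℝ → ℝ → ℂ}
    (hFG : ∀ s, EqOn (fun x => F x s) (G s) (Ioi 0))
    (hG : Measurable fun z : ℝ × ℝ => G z.1 z.2)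
    (hfin : ∀ s, ∫⁻ x, ‖G s x‖ₑ ^ r ∂powMeasure a ≠ ⊤)
    (hfin' : ∫⁻ s, ((∫⁻ x, ‖G s x‖ₑ ^ r ∂powMeasure a) ^ (1 / r)) ^ q ≠ ⊤) :
    ENNReal.ofReal (mixedNorm a q r F) =
      (∫⁻ s, ((∫⁻ x, ‖G s x‖ₑ ^ r ∂powMeasure a) ^ (1 / r)) ^ q) ^ (1 / q) := by
  have h0 : ∀ t, 0 ≤ LrA a r (fun x => F x t) ^ q := fun t => Real.rpow_nonneg (LrA_nonneg _ _ _) _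
  have h1 : ∀ s, ENNReal.ofReal (LrA a r (fun x => F x s)) =
      (∫⁻ x, ‖G s x‖ₑ ^ r ∂powMeasure a) ^ (1 / r) := fun s =>
    ofReal_LrA_eq a hr (hFG s) (hG.comp measurable_prodMk_left) (hfin s)
  have h2 : Measurable fun s => LrA a r (fun x => F x s) := by
    have h3 : (fun s => LrA a r (fun x => F x s)) =
        fun s => ((∫⁻ x, ‖G s x‖ₑ ^ r ∂powMeasure a) ^ (1 / r)).toReal := by
      funext s
      rw [← h1 s, ENNReal.toReal_ofReal (LrA_nonneg _ _ _)]
    rw [h3]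
    have h4 : Measurable fun z : ℝ × ℝ => ‖G z.1 z.2‖ₑ ^ r := hG.enorm.pow_const _
    exact (h4.lintegral_prod_right'.pow_const _).ennreal_toReal
  rw [mixedNorm, ← ENNReal.ofReal_rpow_of_nonneg (integral_nonneg h0) (by positivity),
    integral_eq_lintegral_of_nonneg_ae (ae_of_all _ h0) (h2.pow_const q).aestronglyMeasurable]
  simp only [← ENNReal.ofReal_rpow_of_nonneg (LrA_nonneg _ _ _) hq.le, h1]
  rw [ENNReal.ofReal_toReal hfin']

theorem mixedNorm_nonneg (a q r : ℝ) (u : ℝ → ℝ → ℂ) : 0 ≤ mixedNorm a q r u :=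
  Real.rpow_nonneg (integral_nonneg fun _ => Real.rpow_nonneg (LrA_nonneg _ _ _) _) _

/-- A decaying weight that is integrable against `x ^ a` on the half-line. -/
noncomputable def decayWeight (a x : ℝ) : ℝ := ((1 + x ^ 2) ^ (⌈a⌉₊ + 1))⁻¹

theorem decayWeight_nonneg (a x : ℝ) : 0 ≤ decayWeight a x := by
  rw [decayWeight]; positivity

theorem decayWeight_le_one (a x : ℝ) : decayWeight a x ≤ 1 :=
  inv_le_one_of_one_le₀ (one_le_pow₀ (by nlinarith [sq_nonneg x]))

theorem decayWeight_measurable (a : ℝ) : Measurable (decayWeight a) := by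
  unfold decayWeight; fun_prop

theorem integrable_decayWeight {a : ℝ} (ha : 0 ≤ a) :
    Integrable (decayWeight a) (powMeasure a) := by
  rw [integrable_powMeasure_iff]
  refine (integrable_inv_one_add_sq.integrableOn (s := Ioi 0)).mono'
    (Measurable.aestronglyMeasurable (by have := decayWeight_measurable a; fun_prop)) ?_
  filter_upwards [ae_restrict_mem measurableSet_Ioi] with x hx
  have hx : 0 < x := hx
  have h1 : x ^ a ≤ (1 + x ^ 2) ^ ⌈a⌉₊ := by
    calc x ^ a ≤ (1 + x ^ 2) ^ a := Real.rpow_le_rpow hx.le (by nlinarith [sq_nonneg (x - 1)]) ha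
      _ ≤ (1 + x ^ 2) ^ (⌈a⌉₊ : ℝ) :=
        Real.rpow_le_rpow_of_exponent_le (by nlinarith [sq_nonneg x]) (Nat.le_ceil a)
      _ = _ := Real.rpow_natCast _ _
  rw [smul_eq_mul, Real.norm_of_nonneg (mul_nonneg (by positivity) (decayWeight_nonneg a x)),
    decayWeight, pow_succ, mul_inv, ← mul_assoc]
  refine mul_le_of_le_one_left (by positivity) ?_
  rw [← div_eq_mul_inv, div_le_one (by positivity)]
  exact h1

theorem lintegral_ofReal_rpow_ne_top {X : Type*} [MeasurableSpace X] {μ : Measure X} {h : X → ℝ}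
    (hi : Integrable h μ) (h0 : ∀ x, 0 ≤ h x) (h1 : ∀ x, h x ≤ 1) {p : ℝ} (hp : 1 ≤ p) :
    ∫⁻ x, ENNReal.ofReal (h x) ^ p ∂μ ≠ ⊤ := by
  refine ((lintegral_mono fun x => ?_).trans_lt hi.lintegral_lt_top).ne
  rw [ENNReal.ofReal_rpow_of_nonneg (h0 x) (by linarith)]
  refine ENNReal.ofReal_le_ofReal ?_
  rcases (h0 x).eq_or_lt with hx | hx
  · rw [← hx, Real.zero_rpow (by linarith)]
  · calc h x ^ p ≤ h x ^ (1 : ℝ) := Real.rpow_le_rpow_of_exponent_ge hx (h1 x) hp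
      _ = h x := Real.rpow_one _

theorem lintegral_enorm_rpow_le_of_decay {a : ℝ} {p : ℝ} (hp : 1 ≤ p) {f : ℝ → ℂ}
    {c : ℝ} (hc : 0 ≤ c) (hf : ∀ x, ‖f x‖ ≤ c * decayWeight a x) :
    ∫⁻ x, ‖f x‖ₑ ^ p ∂powMeasure a ≤
      ENNReal.ofReal c ^ p * ∫⁻ x, ENNReal.ofReal (decayWeight a x) ^ p ∂powMeasure a := by
  have hp0 : 0 ≤ p := by linarith
  rw [← lintegral_const_mul' _ _ (ENNReal.rpow_ne_top_of_nonneg hp0 ENNReal.ofReal_ne_top)]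
  refine lintegral_mono fun x => ?_
  rw [← ENNReal.mul_rpow_of_nonneg _ _ hp0, ← ENNReal.ofReal_mul hc, ← ofReal_norm]
  exact ENNReal.rpow_le_rpow (ENNReal.ofReal_le_ofReal (hf x)) hp0

theorem integrable_of_decay {a : ℝ} (ha : 0 ≤ a) {f : ℝ → ℂ} (hfm : Measurable f) {c : ℝ}
    (hf : ∀ x, ‖f x‖ ≤ c * decayWeight a x) : Integrable f (powMeasure a) :=
  ((integrable_decayWeight ha).const_mul c).mono' hfm.aestronglyMeasurable (ae_of_all _ hf)

theorem SPlus.exists_measurable_decay (a : ℝ) {φ : ℝ → ℂ} (hφ : SPlus φ) :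
    ∃ g : ℝ → ℂ, Measurable g ∧ EqOn φ g (Ioi 0) ∧
      ∃ c : ℝ, 0 ≤ c ∧ ∀ x, ‖g x‖ ≤ c * decayWeight a x := by
  set n := ⌈a⌉₊ + 1 with hn
  obtain ⟨C₀, h₀⟩ := hφ.2 0 0
  obtain ⟨C₁, h₁⟩ := hφ.2 (2 * n) 0
  simp only [DIter, pow_zero, one_mul] at h₀ h₁
  have hC : 0 ≤ C₀ + C₁ := add_nonneg ((norm_nonneg _).trans (h₀ 1 one_pos))
    ((norm_nonneg _).trans (h₁ 1 one_pos))
  refine ⟨(Ioi 0).indicator φ, ?_, fun x hx => (indicator_of_mem hx φ).symm,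
    2 ^ (n - 1) * (C₀ + C₁), by positivity, fun x => ?_⟩
  · rw [← piecewise_eq_indicator]
    exact hφ.1.continuousOn.measurable_piecewise continuousOn_const measurableSet_Ioi
  · by_cases hx : x ∈ Ioi (0 : ℝ)
    · rw [indicator_of_mem hx, decayWeight, ← div_eq_mul_inv, le_div_iff₀ (by positivity)]
      have h2 : (1 + x ^ 2) ^ n ≤ 2 ^ (n - 1) * (1 + x ^ (2 * n)) := by
        have := add_pow_le zero_le_one (sq_nonneg x) n
        rwa [one_pow, ← pow_mul] at this
      have h3 := h₁ x hx
      rw [norm_mul, norm_pow, Complex.norm_real, Real.norm_of_nonneg (le_of_lt hx)] at h3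
      calc ‖φ x‖ * (1 + x ^ 2) ^ n ≤ ‖φ x‖ * (2 ^ (n - 1) * (1 + x ^ (2 * n))) := by gcongr
        _ = 2 ^ (n - 1) * (‖φ x‖ + x ^ (2 * n) * ‖φ x‖) := by ring
        _ ≤ _ := by
          have := h₀ x hx
          gcongr
    · rw [indicator_of_notMem hx, norm_zero]
      exact mul_nonneg (by positivity) (decayWeight_nonneg a x)

theorem SPlusT.exists_measurable_decay (a : ℝ) {F : ℝ → ℝ → ℂ} (hF : SPlusT F) :
    ∃ G : ℝ → ℝ → ℂ, (Measurable fun z : ℝ × ℝ => G z.1 z.2) ∧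
      (∀ s, EqOn (fun x => F x s) (G s) (Ioi 0)) ∧
      ∃ c : ℝ, 0 ≤ c ∧ ∀ s x, ‖G s x‖ ≤ c * (1 + s ^ 2)⁻¹ * decayWeight a x := by
  set n := ⌈a⌉₊ + 1 with hn
  obtain ⟨C, h⟩ := hF.2 (4 * n)
  have h := fun x hx t => h 0 0 (Nat.zero_le _) x hx t
  have e : (((4 * n : ℕ) : ℝ)) / 2 = ((2 * n : ℕ) : ℝ) := by push_cast; ring
  simp only [DxIter, DtIter, iteratedDeriv_zero, e, Real.rpow_natCast] at h
  have hC : 0 ≤ C := le_trans (by positivity) (h 1 one_pos 0)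
  refine ⟨fun s => (Ioi 0).indicator fun x => F x s, ?_,
    fun s x hx => (indicator_of_mem hx (fun x => F x s)).symm, C, hC, fun s x => ?_⟩
  · have h1 : (fun z : ℝ × ℝ => (Ioi 0).indicator (fun x => F x z.1) z.2) =
        (fun w : ℝ × ℝ => (Ioi 0 ×ˢ univ).indicator (fun p : ℝ × ℝ => F p.1 p.2) w) ∘ Prod.swap := by
      funext z
      by_cases hz : z.2 ∈ Ioi (0 : ℝ)
      · simp only [Function.comp_apply]
        rw [indicator_of_mem hz,
          indicator_of_mem (show z.swap ∈ Ioi (0 : ℝ) ×ˢ univ from ⟨hz, mem_univ _⟩)]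
        rfl
      · simp only [Function.comp_apply]
        rw [indicator_of_notMem hz, indicator_of_notMem (fun hw => hz hw.1)]
    rw [h1]
    refine Measurable.comp ?_ measurable_swap
    rw [← piecewise_eq_indicator]
    exact hF.1.continuousOn.measurable_piecewise continuousOn_const
      (measurableSet_Ioi.prod MeasurableSet.univ)
  · beta_reduce
    by_cases hx : x ∈ Ioi (0 : ℝ)
    · rw [indicator_of_mem hx, decayWeight, ← div_eq_mul_inv, ← div_eq_mul_inv,
        le_div_iff₀ (by positivity), le_div_iff₀ (by positivity)]
      refine le_trans ?_ (h x hx s)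
      have h2 : (1 + x ^ 2) ^ n ≤ (1 + x ^ 2 + s ^ 2) ^ n :=
        pow_le_pow_left₀ (by positivity) (by nlinarith [sq_nonneg s]) _
      have h3 : 1 + s ^ 2 ≤ (1 + x ^ 2 + s ^ 2) ^ n :=
        le_trans (by nlinarith [sq_nonneg x])
          (le_self_pow₀ (by nlinarith [sq_nonneg x, sq_nonneg s]) (Nat.succ_ne_zero _))
      calc ‖F x s‖ * (1 + x ^ 2) ^ n * (1 + s ^ 2) ≤
          ‖F x s‖ * (1 + x ^ 2 + s ^ 2) ^ n * (1 + x ^ 2 + s ^ 2) ^ n := by gcongr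
        _ = _ := by ring
    · rw [indicator_of_notMem hx, norm_zero]
      exact mul_nonneg (by positivity) (decayWeight_nonneg a x)

theorem Admissible.two_lt {a q r : ℝ} (ha : 0 ≤ a) (h : Admissible a q r) : 2 < q := by
  obtain ⟨hr, hr', he⟩ := h
  have hr0 : 0 < r := by linarith
  have h1 : 0 < 1 / 2 - 1 / r := by
    rw [sub_pos]; exact one_div_lt_one_div_of_lt (by norm_num) hr
  have h2 : 0 < 1 / r := by positivity
  have hq : 0 < q := by
    have : 0 < 2 / q := by rw [he]; positivity
    exact (div_pos_iff_of_pos_left (by norm_num)).1 this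
  have h3 : (a + 1) * (1 / 2 - 1 / r) < 1 := by
    rcases le_or_gt a 1 with h | h
    · nlinarith
    · have h4 := hr' h
      rw [lt_div_iff₀ (by linarith)] at h4
      have h5 : a - 1 < 2 * (a + 1) * (1 / r) := by
        rw [mul_one_div, lt_div_iff₀ hr0]; linarith
      nlinarith
  rw [← he, div_lt_one hq] at h3
  exact h3

theorem enorm_intervalIntegral_le_lintegral (w : ℝ → ℂ) (b c : ℝ) :
    ‖∫ s in b..c, w s‖ₑ ≤ ∫⁻ s, ‖w s‖ₑ := by
  have h1 : ‖∫ s in b..c, w s‖ₑ = ‖∫ s in uIoc b c, w s‖ₑ := by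
    rw [← ofReal_norm, ← ofReal_norm, intervalIntegral.norm_intervalIntegral_eq]
  rw [h1]
  exact (enorm_integral_le_lintegral_enorm _).trans (setLIntegral_le_lintegral _ _)

/-- The triangle inequality for mixed norms. -/
theorem lintegral_mixed_add_le {μ : Measure ℝ} [SFinite μ] {q r : ℝ} (hq : 1 ≤ q) (hr : 1 ≤ r)
    {f g : ℝ → ℝ → ENNReal} (hf : Measurable fun z : ℝ × ℝ => f z.1 z.2)
    (hg : Measurable fun z : ℝ × ℝ => g z.1 z.2) :
    (∫⁻ t, ((∫⁻ x, (f t x + g t x) ^ r ∂μ) ^ (1 / r)) ^ q) ^ (1 / q) ≤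
      (∫⁻ t, ((∫⁻ x, f t x ^ r ∂μ) ^ (1 / r)) ^ q) ^ (1 / q) +
      (∫⁻ t, ((∫⁻ x, g t x ^ r ∂μ) ^ (1 / r)) ^ q) ^ (1 / q) := by
  have hm : ∀ {h : ℝ → ℝ → ENNReal}, (Measurable fun z : ℝ × ℝ => h z.1 z.2) →
      Measurable fun t => (∫⁻ x, h t x ^ r ∂μ) ^ (1 / r) := fun hh =>
    (Measurable.lintegral_prod_right' (hh.pow_const r)).pow_const _
  refine le_trans (ENNReal.rpow_le_rpow (lintegral_mono fun t => ENNReal.rpow_le_rpow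
    (ENNReal.lintegral_Lp_add_le (f := f t) (g := g t) ?_ ?_ hr) ?_) ?_)
    (ENNReal.lintegral_Lp_add_le (hm hf).aemeasurable (hm hg).aemeasurable hq)
  · exact (hf.comp measurable_prodMk_left).aemeasurable
  · exact (hg.comp measurable_prodMk_left).aemeasurable
  · linarith
  · positivity

theorem enorm_solution_le {a ν : ℝ} (hν : a = 2 * ν + 1) {x t : ℝ} (hx : 0 < x) (ht : t ≠ 0)
    {φ g : ℝ → ℂ} (hφg : EqOn φ g (Ioi 0)) {F G : ℝ → ℝ → ℂ}
    (hFG : ∀ s, EqOn (fun y => F y s) (G s) (Ioi 0)) :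
    ‖Sop a t φ x + ∫ s in (0 : ℝ)..t, ∫ y in Ioi (0 : ℝ),
      Skernel a x y (t - s) * F y s * ((y ^ a : ℝ) : ℂ)‖ₑ ≤
      ‖schrodingerOp ν t g x‖ₑ + ∫⁻ s, ‖schrodingerOp ν (t - s) (G s) x‖ₑ := by
  refine (enorm_add_le _ _).trans (add_le_add (le_of_eq ?_) ?_)
  · rw [Sop, integral_Skernel_eq_schrodingerOp hν hx ht hφg]
  · refine (enorm_intervalIntegral_le_lintegral _ _ _).trans (le_of_eq (lintegral_congr_ae ?_))
    filter_upwards [Measure.ae_ne volume t] with s hs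
    rw [integral_Skernel_eq_schrodingerOp hν hx (sub_ne_zero.2 hs.symm) (hFG s)]

/-- Strichartz estimate for the Cauchy problem: for `a ≥ 0` and an `a`-admissible pair `(q,r)`,
`‖u‖_{L^q_t L^r_a} ≤ C(a,r)(‖φ‖_{L²_a} + ‖F‖_{L^{q'}_t L^{r'}_a})`. -/
theorem strichartz_estimate (a q r : ℝ) (ha : 0 ≤ a) (hadm : Admissible a q r) :
    ∃ C > (0:ℝ), ∀ φ : ℝ → ℂ, SPlus φ → ∀ F : ℝ → ℝ → ℂ, SPlusT F →
      mixedNorm a q r (fun x t =>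
          Sop a t φ x +
            ∫ s in (0:ℝ)..t, ∫ y in Ioi (0:ℝ),
              Skernel a x y (t - s) * F y s * ((y ^ a : ℝ) : ℂ)) ≤
        C * (LrA a 2 φ + mixedNorm a (q / (q - 1)) (r / (r - 1)) F) := by
  have hq : 2 < q := hadm.two_lt ha
  obtain ⟨hr, -, he⟩ := hadm
  have hq0 : 0 < q := by linarith
  have hr0 : 0 < r := by linarith
  have hq1 : 0 < q - 1 := by linarith
  have hr1 : 0 < r - 1 := by linarith
  obtain ⟨ν, hν⟩ : ∃ ν : ℝ, a = 2 * ν + 1 := ⟨(a - 1) / 2, by ring⟩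
  have hν' : -1 / 2 ≤ ν := by linarith
  have hadm : (ν + 1) * (1 - 2 / r) = 2 / q := by rw [he, hν]; ring
  obtain ⟨C₁, hC₁, hhom⟩ := strichartz_homogeneous hν' hr hq hadm
  obtain ⟨C₂, hC₂, hinh⟩ := strichartz_inhomogeneous hν' hr hq hadm
  rw [← hν] at hhom hinh
  refine ⟨C₁ ^ (1 / q) + C₂ ^ (1 / q), by positivity, fun φ hφ F hF => ?_⟩
  obtain ⟨g, hgm, hφg, c, hc, hgc⟩ := hφ.exists_measurable_decay a
  obtain ⟨G, hGm, hFG, d, hd, hGd⟩ := hF.exists_measurable_decay a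
  have hr' : 1 ≤ r / (r - 1) := by rw [le_div_iff₀ hr1]; linarith
  have hq' : 1 ≤ q / (q - 1) := by rw [le_div_iff₀ hq1]; linarith
  have hds : ∀ s : ℝ, 0 ≤ d * (1 + s ^ 2)⁻¹ := fun s => by positivity
  have hK : ∀ {p : ℝ}, 1 ≤ p → ∫⁻ x, ENNReal.ofReal (decayWeight a x) ^ p ∂powMeasure a ≠ ⊤ :=
    fun hp => lintegral_ofReal_rpow_ne_top (integrable_decayWeight ha) (decayWeight_nonneg a)
      (decayWeight_le_one a) hp
  have hgfin : ∫⁻ x, ‖g x‖ₑ ^ (2 : ℝ) ∂powMeasure a ≠ ⊤ :=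
    ((lintegral_enorm_rpow_le_of_decay one_le_two hc hgc).trans_lt (ENNReal.mul_lt_top
      (ENNReal.rpow_lt_top_of_nonneg zero_le_two ENNReal.ofReal_ne_top)
      (hK one_le_two).lt_top)).ne
  have hGle := fun s => lintegral_enorm_rpow_le_of_decay hr' (hds s) (hGd s)
  have hGfin : ∀ s, ∫⁻ x, ‖G s x‖ₑ ^ (r / (r - 1)) ∂powMeasure a ≠ ⊤ := fun s =>
    ((hGle s).trans_lt (ENNReal.mul_lt_top
      (ENNReal.rpow_lt_top_of_nonneg (by positivity) ENNReal.ofReal_ne_top) (hK hr').lt_top)).ne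
  set k : ENNReal := ENNReal.ofReal d *
    (∫⁻ x, ENNReal.ofReal (decayWeight a x) ^ (r / (r - 1)) ∂powMeasure a) ^ (1 / (r / (r - 1)))
    with hk
  have hkfin : k ≠ ⊤ := ENNReal.mul_ne_top ENNReal.ofReal_ne_top
    (ENNReal.rpow_ne_top_of_nonneg (by positivity) (hK hr'))
  have hGk : ∀ s : ℝ, (∫⁻ x, ‖G s x‖ₑ ^ (r / (r - 1)) ∂powMeasure a) ^ (1 / (r / (r - 1))) ≤
      k * ENNReal.ofReal ((1 + s ^ 2)⁻¹) := by
    intro s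
    refine (ENNReal.rpow_le_rpow (hGle s) (by positivity)).trans (le_of_eq ?_)
    rw [ENNReal.mul_rpow_of_nonneg _ _ (by positivity), ← ENNReal.rpow_mul,
      mul_one_div_cancel (by positivity), ENNReal.rpow_one, ENNReal.ofReal_mul hd, hk]
    ring
  have hGfin' : ∫⁻ s, ((∫⁻ x, ‖G s x‖ₑ ^ (r / (r - 1)) ∂powMeasure a) ^
      (1 / (r / (r - 1)))) ^ (q / (q - 1)) ≠ ⊤ := by
    refine ((lintegral_mono fun s => ENNReal.rpow_le_rpow (hGk s) (by positivity)).trans_lt ?_).ne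
    simp only [ENNReal.mul_rpow_of_nonneg _ _ (show 0 ≤ q / (q - 1) by positivity)]
    have hkq : k ^ (q / (q - 1)) ≠ ⊤ := ENNReal.rpow_ne_top_of_nonneg (by positivity) hkfin
    rw [lintegral_const_mul' _ _ hkq]
    refine ENNReal.mul_lt_top hkq.lt_top (lintegral_ofReal_rpow_ne_top integrable_inv_one_add_sq
      (fun s => by positivity) (fun s => ?_) hq').lt_top
    exact inv_le_one_of_one_le₀ (by nlinarith [sq_nonneg s])
  have hφeq := ofReal_LrA_eq a two_pos hφg hgm hgfin
  have hFeq := ofReal_mixedNorm_eq a (show 0 < q / (q - 1) by positivity)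
    (show 0 < r / (r - 1) by positivity) hFG hGm hGfin hGfin'
  have hgi := integrable_of_decay ha hgm hgc
  have hGi : ∀ s, Integrable (G s) (powMeasure a) := fun s =>
    integrable_of_decay ha (hGm.comp measurable_prodMk_left) (hGd s)
  have hm₁ : Measurable fun z : ℝ × ℝ => ‖schrodingerOp ν z.1 g z.2‖ₑ :=
    (schrodingerOp_measurable hν' measurable_fst measurable_snd (hgm.comp measurable_snd)).enorm
  have hm₂ : Measurable fun z : ℝ × ℝ => ∫⁻ s, ‖schrodingerOp ν (z.1 - s) (G s) z.2‖ₑ := by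
    have : Measurable fun w : (ℝ × ℝ) × ℝ => ‖schrodingerOp ν (w.1.1 - w.2) (G w.2) w.1.2‖ₑ :=
      (schrodingerOp_measurable hν' (measurable_fst.fst.sub measurable_snd) measurable_fst.snd
        (F := fun w : (ℝ × ℝ) × ℝ => G w.2)
        (hGm.comp (measurable_fst.snd.prodMk measurable_snd))).enorm
    exact this.lintegral_prod_right'
  have hL0 := LrA_nonneg a 2 φ
  have hN0 := mixedNorm_nonneg a (q / (q - 1)) (r / (r - 1)) F
  have hcomb : ∀ X : ENNReal, (X ^ (1 / r)) ^ q = X ^ (q / r) := fun X => by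
    rw [← ENNReal.rpow_mul, one_div_mul_eq_div]
  have h₁ : (∫⁻ t, ((∫⁻ x, ‖schrodingerOp ν t g x‖ₑ ^ r ∂powMeasure a) ^ (1 / r)) ^ q) ^ (1 / q) ≤
      ENNReal.ofReal (C₁ ^ (1 / q) * LrA a 2 φ) := by
    simp only [hcomb]
    refine (ENNReal.rpow_le_rpow (hhom g hgm hgi) (by positivity)).trans (le_of_eq ?_)
    rw [ENNReal.mul_rpow_of_nonneg _ _ (by positivity), ENNReal.ofReal_rpow_of_pos hC₁,
      ← ENNReal.rpow_mul, ENNReal.ofReal_mul (by positivity), hφeq]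
    congr 2
    field_simp
  have h₂ : (∫⁻ t, ((∫⁻ x, (∫⁻ s, ‖schrodingerOp ν (t - s) (G s) x‖ₑ) ^ r
      ∂powMeasure a) ^ (1 / r)) ^ q) ^ (1 / q) ≤
      ENNReal.ofReal (C₂ ^ (1 / q) * mixedNorm a (q / (q - 1)) (r / (r - 1)) F) := by
    simp only [hcomb]
    refine (ENNReal.rpow_le_rpow (hinh G hGm hGi) (by positivity)).trans (le_of_eq ?_)
    rw [ENNReal.mul_rpow_of_nonneg _ _ (by positivity), ENNReal.ofReal_rpow_of_pos hC₂,
      ← ENNReal.rpow_mul, ENNReal.ofReal_mul (by positivity), hFeq, one_div_div, one_div_div,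
      mul_one_div]
  have hmain := (ofReal_mixedNorm_le a hq0 hr0 (fun x t =>
      Sop a t φ x + ∫ s in (0:ℝ)..t, ∫ y in Ioi (0:ℝ),
        Skernel a x y (t - s) * F y s * ((y ^ a : ℝ) : ℂ))).trans <|
    (ENNReal.rpow_le_rpow (lintegral_mono_ae (g := fun t =>
      ((∫⁻ x, (‖schrodingerOp ν t g x‖ₑ + ∫⁻ s, ‖schrodingerOp ν (t - s) (G s) x‖ₑ) ^ r
        ∂powMeasure a) ^ (1 / r)) ^ q) ?_) (by positivity)).trans <|
    (lintegral_mixed_add_le (by linarith) (by linarith) (f := fun t x => ‖schrodingerOp ν t g x‖ₑ)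
      (g := fun t x => ∫⁻ s, ‖schrodingerOp ν (t - s) (G s) x‖ₑ) hm₁ hm₂).trans (add_le_add h₁ h₂)
  · rw [← ENNReal.ofReal_add (by positivity) (by positivity),
      ENNReal.ofReal_le_ofReal_iff (by positivity)] at hmain
    refine hmain.trans ?_
    have h3 : 0 ≤ C₁ ^ (1 / q) := by positivity
    have h4 : 0 ≤ C₂ ^ (1 / q) := by positivity
    nlinarith [mul_nonneg h3 hN0, mul_nonneg h4 hL0]
  · filter_upwards [Measure.ae_ne volume (0 : ℝ)] with t ht
    refine ENNReal.rpow_le_rpow (ENNReal.rpow_le_rpow (lintegral_mono_ae ?_) (by positivity)) hq0.le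
    filter_upwards [ae_powMeasure_pos a] with x hx
    exact ENNReal.rpow_le_rpow (enorm_solution_le hν hx ht hφg hFG) hr0.le
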